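/- (Theorem 1) Let (S,T) be a discrete memoryless correlated source with finite alphabets and joint pmf p(s,t), and let K = f(S) = g(T) be a common part of (S,T), i.e. f and g are deterministic functions with f(S) = g(T) almost surely. Suppose there exist finite-valued auxiliary random variables W0, W1, W2 and channel inputs X1, X2 whose joint distribution with (S,T) factors as p(s,t,w0,w1,w2,x1,x2) = p(s,t)·p(w0)·p(w1|w0)·p(w2|w0)·p(x1|s,w1,w0)·p(x2|t,w2,w0), and let Y1, Y2 be obtained from (X1,X2) through the channel transition law p(y1,y2|x1,x2). If the following thirteen strict inequalities hold: (1) H(S|K) < I(S,X1; Y1 | W0,W2,K); (2) H(T|K) < I(T,X2; Y2 | W0,W1,K); (3) H(S) < I(W0,W2,S,X1; Y1); (4) H(T) < I(W0,W1,T,X2; Y2); (5) H(S|K)+H(T|K) < I(S,X1; Y1 | W0,W1,W2,K) + I(W1,T,X2; Y2 | W0,K); (6) H(S|K)+H(T|K) < I(T,X2; Y2 | W0,W1,W2,K) + I(W2,S,X1; Y1 | W0,K); (7) H(S|K)+H(T|K) < I(S,W2,X1; Y1 | W0,W1,K) + I(T,W1,X2; Y2 | W0,W2,K); (8) H(S|K)+H(T)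 < I(W0,W1,T,X2; Y2) + I(S,X1; Y1 | W0,W1,W2,K); (9) H(S)+H(T|K) < I(W0,W2,S,X1; Y1) + I(T,X2; Y2 | W0,W1,W2,K); (10) 2H(S|K)+H(T|K) < I(S,X1; Y1 | W0,W1,W2,K) + I(S,W2,X1; Y1 | W0,K) + I(T,W1,X2; Y2 | W0,W2,K); (11) H(S|K)+2H(T|K) < I(T,X2; Y2 | W0,W1,W2,K) + I(T,W1,X2; Y2 | W0,K) + I(S,W2,X1; Y1 | W0,W1,K); (12) H(S)+H(S|K)+H(T|K) < I(S,X1; Y1 | W0,W1,W2,K) + I(W0,W2,S,X1; Y1) + I(T,W1,X2; Y2 | W0,W2,K); (13) H(T)+H(S|K)+H(T|K) < I(T,X2; Y2 | W0,W1,W2,K) + I(W0,W1,T,X2; Y2) + I(S,W2,X1; Y1 | W0,W1,K); then the source (S,T) is admissible for the discrete memoryless interference channel p(y1,y2|x1,x2). -/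

import Mathlib

/-!
The source words are mapped to channel words by random superposition coding. To every value `k` of
the common part `K^n` belongs an independent cloud: a centre drawn from `p(w0)`, satellites drawn
from `p(w1|w0)` indexed by about `2^{n R1}` cells `i`, and satellites drawn from `p(w2|w0)` indexed
by about `2^{n R2}` cells `j`. Encoder 1 assigns to a source word `s` a uniform cell `i` and a
channel word drawn from `p(x1|s,w1,w0)` with the centre and the satellite of its cell; encoder 2
does the same with `t` and `j`. As `f(S) = g(T)`, both encoders use the same cloud.

Decoder 1 recovers `s` by also searching over the unknown cell `j` of the interferer (and decoder 2
symmetrically), which is what the structure `View` records. A wrong word `s'` has either a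
different common part, or the same common part and an own and an interfering cell each of which may
be right or wrong; this gives five kinds of competitors, each with a weight `Q c`. The decoder
accepts a word that passes a likelihood-ratio test against the five weights, and `Valid.one_shot`
bounds the averaged error by the probability that the true word fails a test plus the expected
number of accepted competitors. On blocks of length `n` the Chernoff bound `chernoff` takes the
place of typicality: by `Valid.block` the error vanishes as soon as the exponential rate of the
number of competitors of each kind is below a divergence, and `Valid.ell_0`, ..., `Valid.ell_4`
express these rate conditions through the mutual informations of the theorem. One random code
serves both decoders, so some code is good for both (`Valid.admissible`).

The conditions obtained in this way are linear in `(R1, R2)`; `exists_rates` eliminates the two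
rates and leaves exactly the thirteen inequalities.
-/

/-- Shannon entropy (in bits) of the push-forward of the pmf `p` under the map `f`. -/
noncomputable def margEnt {Ω α : Type*} [Fintype Ω] [Fintype α] [DecidableEq α]
    (p : Ω → ℝ) (f : Ω → α) : ℝ :=
  ∑ a : α, -((∑ ω : Ω, if f ω = a then p ω else 0) *
      Real.logb 2 (∑ ω : Ω, if f ω = a then p ω else 0))

/-- Conditional entropy H(f | g). -/
noncomputable def condEnt {Ω α β : Type*} [Fintype Ω] [Fintype α] [Fintype β]
    [DecidableEq α] [DecidableEq β] (p : Ω → ℝ) (f : Ω → α) (g : Ω → β) : ℝ :=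
  margEnt p (fun ω => (f ω, g ω)) - margEnt p g

/-- Mutual information I(f ; g). -/
noncomputable def mi {Ω α β : Type*} [Fintype Ω] [Fintype α] [Fintype β]
    [DecidableEq α] [DecidableEq β] (p : Ω → ℝ) (f : Ω → α) (g : Ω → β) : ℝ :=
  margEnt p f + margEnt p g - margEnt p (fun ω => (f ω, g ω))

/-- Conditional mutual information I(f ; g | h). -/
noncomputable def cmi {Ω α β γ : Type*} [Fintype Ω] [Fintype α] [Fintype β] [Fintype γ]
    [DecidableEq α] [DecidableEq β] [DecidableEq γ]
    (p : Ω → ℝ) (f : Ω → α) (g : Ω → β) (h : Ω → γ) : ℝ :=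
  margEnt p (fun ω => (f ω, h ω)) + margEnt p (fun ω => (g ω, h ω))
    - margEnt p (fun ω => (f ω, g ω, h ω)) - margEnt p h

/-- Shannon entropy (in bits) of a pmf. -/
noncomputable def pmfEnt {α : Type*} [Fintype α] (q : α → ℝ) : ℝ :=
  ∑ a : α, -(q a * Real.logb 2 (q a))

/-- Probability of error at decoder 1 of a length-`n` source-channel code for the
interference channel `chan` with source `pST`. -/
noncomputable def icPe1 {S T X1 X2 Y1 Y2 : Type*} [Fintype S] [Fintype T] [Fintype X1]
    [Fintype X2] [Fintype Y1] [Fintype Y2] [DecidableEq S]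
    (pST : S → T → ℝ) (chan : X1 → X2 → Y1 → Y2 → ℝ) (n : ℕ)
    (f1 : (Fin n → S) → Fin n → X1) (f2 : (Fin n → T) → Fin n → X2)
    (φ1 : (Fin n → Y1) → Fin n → S) : ℝ :=
  ∑ sn : Fin n → S, ∑ tn : Fin n → T, ∑ y1n : Fin n → Y1, ∑ y2n : Fin n → Y2,
    if φ1 y1n ≠ sn then
      (∏ i, pST (sn i) (tn i)) * ∏ i, chan (f1 sn i) (f2 tn i) (y1n i) (y2n i)
    else 0

/-- Probability of error at decoder 2. -/
noncomputable def icPe2 {S T X1 X2 Y1 Y2 : Type*} [Fintype S] [Fintype T] [Fintype X1]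
    [Fintype X2] [Fintype Y1] [Fintype Y2] [DecidableEq T]
    (pST : S → T → ℝ) (chan : X1 → X2 → Y1 → Y2 → ℝ) (n : ℕ)
    (f1 : (Fin n → S) → Fin n → X1) (f2 : (Fin n → T) → Fin n → X2)
    (φ2 : (Fin n → Y2) → Fin n → T) : ℝ :=
  ∑ sn : Fin n → S, ∑ tn : Fin n → T, ∑ y1n : Fin n → Y1, ∑ y2n : Fin n → Y2,
    if φ2 y2n ≠ tn then
      (∏ i, pST (sn i) (tn i)) * ∏ i, chan (f1 sn i) (f2 tn i) (y1n i) (y2n i)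
    else 0

/-- The source `pST` is admissible for the discrete memoryless interference channel `chan`. -/
def ICAdmissible {S T X1 X2 Y1 Y2 : Type*} [Fintype S] [Fintype T] [Fintype X1]
    [Fintype X2] [Fintype Y1] [Fintype Y2] [DecidableEq S] [DecidableEq T]
    (pST : S → T → ℝ) (chan : X1 → X2 → Y1 → Y2 → ℝ) : Prop :=
  ∀ ε : ℝ, 0 < ε → ε < 1 → ∃ N : ℕ, ∀ n : ℕ, N ≤ n →
    ∃ (f1 : (Fin n → S) → Fin n → X1) (f2 : (Fin n → T) → Fin n → X2)
      (φ1 : (Fin n → Y1) → Fin n → S) (φ2 : (Fin n → Y2) → Fin n → T),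
      max (icPe1 pST chan n f1 f2 φ1) (icPe2 pST chan n f1 f2 φ2) ≤ ε

/-- The sample space for Theorem 1: source pair, auxiliary variables, channel
inputs and channel outputs. -/
abbrev Omega9 (S T W0 W1 W2 X1 X2 Y1 Y2 : Type*) :=
  S × T × W0 × W1 × W2 × X1 × X2 × Y1 × Y2

section Proj
variable {S T W0 W1 W2 X1 X2 Y1 Y2 : Type*}
def zS  (ω : Omega9 S T W0 W1 W2 X1 X2 Y1 Y2) : S := ω.1
def zT  (ω : Omega9 S T W0 W1 W2 X1 X2 Y1 Y2) : T := ω.2.1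
def zW0 (ω : Omega9 S T W0 W1 W2 X1 X2 Y1 Y2) : W0 := ω.2.2.1
def zW1 (ω : Omega9 S T W0 W1 W2 X1 X2 Y1 Y2) : W1 := ω.2.2.2.1
def zW2 (ω : Omega9 S T W0 W1 W2 X1 X2 Y1 Y2) : W2 := ω.2.2.2.2.1
def zX1 (ω : Omega9 S T W0 W1 W2 X1 X2 Y1 Y2) : X1 := ω.2.2.2.2.2.1
def zX2 (ω : Omega9 S T W0 W1 W2 X1 X2 Y1 Y2) : X2 := ω.2.2.2.2.2.2.1
def zY1 (ω : Omega9 S T W0 W1 W2 X1 X2 Y1 Y2) : Y1 := ω.2.2.2.2.2.2.2.1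
def zY2 (ω : Omega9 S T W0 W1 W2 X1 X2 Y1 Y2) : Y2 := ω.2.2.2.2.2.2.2.2
end Proj

set_option linter.unusedSectionVars false
set_option linter.unusedSimpArgs false

/-! ### Sums over function spaces -/

theorem prod_sum_fun {ι A : Type*} [Fintype ι] [DecidableEq ι] [Fintype A] (F : ι → A → ℝ) :
    ∏ i, ∑ a, F i a = ∑ x : ι → A, ∏ i, F i (x i) := by
  rw [Finset.prod_univ_sum, Fintype.piFinset_univ]

/-- One-coordinate marginal of a product weight. -/
theorem pi_one {ι A : Type*} [Fintype ι] [DecidableEq ι] [Fintype A]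
    (q : ι → A → ℝ) (hq : ∀ i, ∑ a, q i a = 1) (i0 : ι) (F : A → ℝ) :
    ∑ x : ι → A, (∏ i, q i (x i)) * F (x i0) = ∑ a, q i0 a * F a := by
  have h : ∀ x : ι → A, (∏ i, q i (x i)) * F (x i0)
      = ∏ i, (q i (x i) * if i = i0 then F (x i) else 1) := by
    intro x
    rw [Finset.prod_mul_distrib]
    simp
  simp_rw [h]
  rw [← prod_sum_fun (fun i a => q i a * if i = i0 then F a else 1),
    ← Finset.mul_prod_erase _ _ (Finset.mem_univ i0)]
  rw [Finset.prod_eq_one]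
  · simp
  · intro i hi
    simp [Finset.ne_of_mem_erase hi, hq]

/-- Two-coordinate marginal of a product weight: distinct coordinates are independent. -/
theorem pi_two {ι A : Type*} [Fintype ι] [DecidableEq ι] [Fintype A]
    (q : ι → A → ℝ) (hq : ∀ i, ∑ a, q i a = 1) {i0 i1 : ι} (hne : i0 ≠ i1) (F : A → A → ℝ) :
    ∑ x : ι → A, (∏ i, q i (x i)) * F (x i0) (x i1)
      = ∑ a, ∑ b, q i0 a * q i1 b * F a b := by
  classical
  have h : ∀ x : ι → A, (∏ i, q i (x i)) * F (x i0) (x i1)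
      = ∑ b, (∏ i, (q i (x i) * if i = i1 then (if x i = b then 1 else 0) else 1)) *
          F (x i0) b := by
    intro x
    simp_rw [Finset.prod_mul_distrib]
    simp
  simp_rw [h]
  rw [Finset.sum_comm]
  have h2 : ∀ b, ∑ x : ι → A, (∏ i, (q i (x i) * if i = i1 then (if x i = b then 1 else 0) else 1)) *
      F (x i0) b = ∑ a, q i0 a * q i1 b * F a b := by
    intro b
    have h3 : ∀ x : ι → A,
      (∏ i, (q i (x i) * if i = i1 then (if x i = b then 1 else 0) else 1)) * F (x i0) b
      = ∏ i, (q i (x i) * (if i = i1 then (if x i = b then 1 else 0) else 1) *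
          if i = i0 then F (x i) b else 1) := by
      intro x
      rw [Finset.prod_mul_distrib (g := fun i => if i = i0 then F (x i) b else 1)]
      simp
    simp_rw [h3]
    rw [← prod_sum_fun (fun i a => q i a * (if i = i1 then (if a = b then 1 else 0) else 1) *
          if i = i0 then F a b else 1),
      ← Finset.mul_prod_erase _ _ (Finset.mem_univ i0),
      ← Finset.mul_prod_erase _ _ (Finset.mem_erase.2 ⟨hne.symm, Finset.mem_univ i1⟩),
      Finset.prod_eq_one]
    · simp [hne, hne.symm, Finset.sum_mul]
      exact Finset.sum_congr rfl fun a _ => by ring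
    · intro i hi
      have e1 := Finset.ne_of_mem_erase hi
      have e2 := Finset.ne_of_mem_erase (Finset.mem_of_mem_erase hi)
      simp [e1, e2, hq]
  simp_rw [h2]
  rw [Finset.sum_comm]

theorem pi_total {ι A : Type*} [Fintype ι] [DecidableEq ι] [Fintype A]
    (q : ι → A → ℝ) (hq : ∀ i, ∑ a, q i a = 1) :
    ∑ x : ι → A, (∏ i, q i (x i)) = 1 := by
  rw [← prod_sum_fun]; simp [hq]

/-! ### Exponentially small deviations -/

/-- The moment generating function equals `1` at `0`, where its derivative is the mean; a negative
mean therefore puts it below `1` at some small positive point. -/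
theorem exists_exp_moment_lt_one {U : Type*} [Fintype U] (P h : U → ℝ) (hP : ∑ u, P u = 1)
    (hneg : ∑ u, P u * h u < 0) : ∃ ρ : ℝ, 0 < ρ ∧ ∑ u, P u * Real.exp (ρ * h u) < 1 := by
  set φ : ℝ → ℝ := fun ρ => ∑ u, P u * Real.exp (ρ * h u) with hφ
  have hd : HasDerivAt φ (∑ u, P u * h u) 0 := by
    have : ∀ u ∈ Finset.univ, HasDerivAt (fun ρ : ℝ => P u * Real.exp (ρ * h u)) (P u * h u) 0 := by
      intro u _
      have := (((hasDerivAt_id (0:ℝ)).mul_const (h u)).exp).const_mul (P u)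
      simpa using this
    simpa [hφ] using HasDerivAt.fun_sum this
  have hs := hd.tendsto_slope_zero_right
  have h0 : φ 0 = 1 := by simp [hφ, hP]
  have hev := hs.eventually (gt_mem_nhds hneg)
  obtain ⟨ρ, hρ1, hρ2⟩ := (hev.and self_mem_nhdsWithin).exists
  refine ⟨ρ, hρ2, ?_⟩
  have hρ2' : (0:ℝ) < ρ := hρ2
  simp only [zero_add, smul_eq_mul, h0] at hρ1
  have : φ ρ - 1 < 0 := by
    by_contra hc
    have := mul_nonneg (inv_nonneg.2 hρ2'.le) (not_lt.1 hc)
    linarith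
  linarith

/-- If the per-letter mean of `log (2^c Q / P)` is negative, the event `2^{nc} Q^n > P^n` has
vanishing `P^n`-probability. The logarithm is junk where `P` or `Q` vanishes: the former letters
have no weight, and the latter make the event impossible. -/
theorem chernoff {U : Type*} [Fintype U] (P Q : U → ℝ) (hP0 : ∀ u, 0 ≤ P u) (hQ0 : ∀ u, 0 ≤ Q u)
    (hP : ∑ u, P u = 1) (c : ℝ) (hc : c + ∑ u, P u * Real.logb 2 (Q u / P u) < 0) :
    ∃ r : ℝ, 0 ≤ r ∧ r < 1 ∧ ∀ n : ℕ,
      ∑ u : Fin n → U, (∏ i, P (u i)) *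
        (if (2:ℝ) ^ (n * c) * ∏ i, Q (u i) ≤ ∏ i, P (u i) then 0 else 1) ≤ r ^ n := by
  classical
  set h : U → ℝ := fun u => c * Real.log 2 + Real.log (Q u / P u) with hh
  have hl2 : 0 < Real.log 2 := Real.log_pos (by norm_num)
  have hneg : ∑ u, P u * h u < 0 := by
    have : ∑ u, P u * h u = Real.log 2 * (c + ∑ u, P u * Real.logb 2 (Q u / P u)) := by
      simp only [hh, Real.logb, mul_add, Finset.sum_add_distrib, ← Finset.sum_mul, hP,
        Finset.mul_sum]
      congr 1
      · ring
      · refine Finset.sum_congr rfl fun u _ => ?_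
        field_simp
    rw [this]
    exact mul_neg_of_pos_of_neg hl2 hc
  obtain ⟨ρ, hρ, hlt⟩ := exists_exp_moment_lt_one P h hP hneg
  refine ⟨_, Finset.sum_nonneg fun u _ => mul_nonneg (hP0 u) (Real.exp_pos _).le, hlt, ?_⟩
  intro n
  have e : (∑ u, P u * Real.exp (ρ * h u)) ^ n
      = ∑ u : Fin n → U, ∏ i, (P (u i) * Real.exp (ρ * h (u i))) := by
    rw [← prod_sum_fun (fun _ u => P u * Real.exp (ρ * h u))]
    simp
  rw [e]
  refine Finset.sum_le_sum fun u _ => ?_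
  rw [Finset.prod_mul_distrib]
  have hPn : 0 ≤ ∏ i, P (u i) := Finset.prod_nonneg fun i _ => hP0 _
  split_ifs with hcase
  · rw [mul_zero]
    exact mul_nonneg hPn (Finset.prod_nonneg fun i _ => (Real.exp_pos _).le)
  · rw [mul_one]
    rcases hPn.eq_or_lt with hz | hpos
    · rw [← hz]; simp
    refine le_mul_of_one_le_right hPn ?_
    rw [not_le] at hcase
    have hQn : 0 < ∏ i, Q (u i) := by
      by_contra hcon
      have h0 : ∏ i, Q (u i) = 0 :=
        le_antisymm (not_lt.1 hcon) (Finset.prod_nonneg fun i _ => hQ0 _)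
      rw [h0, mul_zero] at hcase
      exact absurd hcase (not_lt.2 hPn)
    have hPi : ∀ i, P (u i) ≠ 0 := fun i => (Finset.prod_ne_zero_iff.1 hpos.ne') i (Finset.mem_univ i)
    have hQi : ∀ i, Q (u i) ≠ 0 := fun i => (Finset.prod_ne_zero_iff.1 hQn.ne') i (Finset.mem_univ i)
    rw [← Real.exp_sum, Real.one_le_exp_iff, ← Finset.mul_sum]
    refine mul_nonneg hρ.le ?_
    have h3 := Real.log_le_log hpos hcase.le
    rw [Real.log_mul (by positivity) hQn.ne', Real.log_rpow (by norm_num),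
      Real.log_prod (fun i _ => hPi i), Real.log_prod (fun i _ => hQi i)] at h3
    have h4 : ∑ i, h (u i) = n * c * Real.log 2 + (∑ i, Real.log (Q (u i))
        - ∑ i, Real.log (P (u i))) := by
      simp only [hh, Finset.sum_add_distrib, ← Finset.sum_sub_distrib]
      congr 1
      · simp; ring
      · exact Finset.sum_congr rfl fun i _ => Real.log_div (hQi i) (hPi i)
    rw [h4]; linarith

/-! ### Entropies of push-forwards -/

theorem margEnt_eq_sum {Ω α : Type*} [Fintype Ω] [Fintype α] [DecidableEq α]
    (p : Ω → ℝ) (f : Ω → α) :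
    margEnt p f = -∑ ω, p ω * Real.logb 2 (∑ ω', if f ω' = f ω then p ω' else 0) := by
  unfold margEnt
  rw [Finset.sum_neg_distrib, neg_inj]
  simp_rw [Finset.sum_mul]
  rw [Finset.sum_comm]
  refine Finset.sum_congr rfl fun ω _ => ?_
  simp [ite_mul]

/-- Functions inducing the same partition of the support have the same entropy. -/
theorem margEnt_congr {Ω α β : Type*} [Fintype Ω] [Fintype α] [DecidableEq α]
    [Fintype β] [DecidableEq β] (p : Ω → ℝ) (f : Ω → α) (g : Ω → β)
    (h : ∀ ω ω', p ω ≠ 0 → p ω' ≠ 0 → (f ω' = f ω ↔ g ω' = g ω)) :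
    margEnt p f = margEnt p g := by
  rw [margEnt_eq_sum, margEnt_eq_sum, neg_inj]
  refine Finset.sum_congr rfl fun ω _ => ?_
  by_cases h0 : p ω = 0
  · simp [h0]
  congr 2
  refine Finset.sum_congr rfl fun ω' _ => ?_
  by_cases h1 : p ω' = 0
  · simp [h1]
  simp [h ω ω' h0 h1]

theorem margEnt_push {Ω U α : Type*} [Fintype Ω] [Fintype U] [DecidableEq U] [Fintype α]
    [DecidableEq α] (p : Ω → ℝ) (π : Ω → U) (P : U → ℝ)
    (hP : ∀ u, P u = ∑ ω, if π ω = u then p ω else 0) (f : U → α) :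
    margEnt p (fun ω => f (π ω)) = margEnt P f := by
  unfold margEnt
  have : ∀ a, (∑ u, if f u = a then P u else 0) = ∑ ω, if f (π ω) = a then p ω else 0 := by
    intro a
    have h2 : ∀ u, (if f u = a then P u else 0)
        = ∑ ω, if π ω = u then (if f u = a then p ω else 0) else 0 := by
      intro u
      rw [hP]
      split_ifs with h <;> simp
    simp_rw [h2]
    rw [Finset.sum_comm]
    refine Finset.sum_congr rfl fun ω _ => ?_
    simp
  simp_rw [this]

theorem margEnt_of_marg {Ω α : Type*} [Fintype Ω] [Fintype α] [DecidableEq α]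
    (p : Ω → ℝ) (f : Ω → α) (G : Ω → ℝ)
    (h : ∀ ω, (∑ ω', if f ω' = f ω then p ω' else 0) = G ω) :
    margEnt p f = -∑ ω, p ω * Real.logb 2 (G ω) := by
  rw [margEnt_eq_sum]; simp_rw [h]

theorem cmi_congr {Ω α β γ α' β' γ' : Type*} [Fintype Ω] [Fintype α] [Fintype β] [Fintype γ]
    [DecidableEq α] [DecidableEq β] [DecidableEq γ]
    [Fintype α'] [Fintype β'] [Fintype γ']
    [DecidableEq α'] [DecidableEq β'] [DecidableEq γ']
    (p : Ω → ℝ) (f : Ω → α) (g : Ω → β) (h : Ω → γ)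
    (f' : Ω → α') (g' : Ω → β') (h' : Ω → γ')
    (hf : ∀ ω ω', p ω ≠ 0 → p ω' ≠ 0 → (f ω' = f ω ↔ f' ω' = f' ω))
    (hg : ∀ ω ω', p ω ≠ 0 → p ω' ≠ 0 → (g ω' = g ω ↔ g' ω' = g' ω))
    (hh : ∀ ω ω', p ω ≠ 0 → p ω' ≠ 0 → (h ω' = h ω ↔ h' ω' = h' ω)) :
    cmi p f g h = cmi p f' g' h' := by
  unfold cmi
  congr 1
  · congr 1
    · congr 1
      · exact margEnt_congr _ _ _ fun ω ω' a b => by simp [hf ω ω' a b, hh ω ω' a b]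
      · exact margEnt_congr _ _ _ fun ω ω' a b => by simp [hg ω ω' a b, hh ω ω' a b]
    · exact margEnt_congr _ _ _ fun ω ω' a b => by
        simp [hf ω ω' a b, hg ω ω' a b, hh ω ω' a b]
  · exact margEnt_congr _ _ _ fun ω ω' a b => by simp [hh ω ω' a b]

theorem cmi_push {Ω U α β γ : Type*} [Fintype Ω] [Fintype U] [DecidableEq U]
    [Fintype α] [Fintype β] [Fintype γ]
    [DecidableEq α] [DecidableEq β] [DecidableEq γ]
    (p : Ω → ℝ) (π : Ω → U) (P : U → ℝ)
    (hP : ∀ u, P u = ∑ ω, if π ω = u then p ω else 0)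
    (f : U → α) (g : U → β) (h : U → γ) :
    cmi p (fun ω => f (π ω)) (fun ω => g (π ω)) (fun ω => h (π ω)) = cmi P f g h := by
  unfold cmi
  rw [← margEnt_push p π P hP, ← margEnt_push p π P hP, ← margEnt_push p π P hP,
    ← margEnt_push p π P hP]

theorem mi_congr {Ω α β α' β' : Type*} [Fintype Ω] [Fintype α] [Fintype β]
    [DecidableEq α] [DecidableEq β]
    [Fintype α'] [Fintype β'] [DecidableEq α'] [DecidableEq β']
    (p : Ω → ℝ) (f : Ω → α) (g : Ω → β) (f' : Ω → α') (g' : Ω → β')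
    (hf : ∀ ω ω', p ω ≠ 0 → p ω' ≠ 0 → (f ω' = f ω ↔ f' ω' = f' ω))
    (hg : ∀ ω ω', p ω ≠ 0 → p ω' ≠ 0 → (g ω' = g ω ↔ g' ω' = g' ω)) :
    mi p f g = mi p f' g' := by
  unfold mi
  congr 1
  · congr 1
    · exact margEnt_congr _ _ _ fun ω ω' a b => by simp [hf ω ω' a b]
    · exact margEnt_congr _ _ _ fun ω ω' a b => by simp [hg ω ω' a b]
  · exact margEnt_congr _ _ _ fun ω ω' a b => by simp [hf ω ω' a b, hg ω ω' a b]

theorem mi_push {Ω U α β : Type*} [Fintype Ω] [Fintype U] [DecidableEq U]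
    [Fintype α] [Fintype β] [DecidableEq α] [DecidableEq β]
    (p : Ω → ℝ) (π : Ω → U) (P : U → ℝ)
    (hP : ∀ u, P u = ∑ ω, if π ω = u then p ω else 0) (f : U → α) (g : U → β) :
    mi p (fun ω => f (π ω)) (fun ω => g (π ω)) = mi P f g := by
  unfold mi
  rw [← margEnt_push p π P hP, ← margEnt_push p π P hP, ← margEnt_push p π P hP]

theorem condEnt_congr {Ω α β α' β' : Type*} [Fintype Ω] [Fintype α] [Fintype β]
    [DecidableEq α] [DecidableEq β]
    [Fintype α'] [Fintype β'] [DecidableEq α'] [DecidableEq β']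
    (p : Ω → ℝ) (f : Ω → α) (g : Ω → β) (f' : Ω → α') (g' : Ω → β')
    (hf : ∀ ω ω', p ω ≠ 0 → p ω' ≠ 0 → (f ω' = f ω ↔ f' ω' = f' ω))
    (hg : ∀ ω ω', p ω ≠ 0 → p ω' ≠ 0 → (g ω' = g ω ↔ g' ω' = g' ω)) :
    condEnt p f g = condEnt p f' g' := by
  unfold condEnt
  congr 1
  · exact margEnt_congr _ _ _ fun ω ω' a b => by simp [hf ω ω' a b, hg ω ω' a b]
  · exact margEnt_congr _ _ _ fun ω ω' a b => by simp [hg ω ω' a b]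

theorem condEnt_push {Ω U α β : Type*} [Fintype Ω] [Fintype U] [DecidableEq U]
    [Fintype α] [Fintype β] [DecidableEq α] [DecidableEq β]
    (p : Ω → ℝ) (π : Ω → U) (P : U → ℝ)
    (hP : ∀ u, P u = ∑ ω, if π ω = u then p ω else 0) (f : U → α) (g : U → β) :
    condEnt p (fun ω => f (π ω)) (fun ω => g (π ω)) = condEnt P f g := by
  unfold condEnt
  rw [← margEnt_push p π P hP, ← margEnt_push p π P hP]

/-- Conditional mutual information is nonnegative, by `log x ≤ x - 1`. -/
theorem cmi_nonneg {Ω α β γ : Type*} [Fintype Ω] [Fintype α] [Fintype β] [Fintype γ]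
    [DecidableEq α] [DecidableEq β] [DecidableEq γ]
    (p : Ω → ℝ) (hp : ∀ ω, 0 ≤ p ω) (hp1 : ∑ ω, p ω = 1) (f : Ω → α) (g : Ω → β) (h : Ω → γ) :
    0 ≤ cmi p f g h := by
  unfold cmi
  simp only [margEnt_eq_sum]
  set A : Ω → ℝ := fun ω => ∑ ω', if (f ω', h ω') = (f ω, h ω) then p ω' else 0 with hA
  set B : Ω → ℝ := fun ω => ∑ ω', if (g ω', h ω') = (g ω, h ω) then p ω' else 0 with hB
  set C : Ω → ℝ := fun ω => ∑ ω', if (f ω', g ω', h ω') = (f ω, g ω, h ω) then p ω' else 0 with hC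
  set D : Ω → ℝ := fun ω => ∑ ω', if h ω' = h ω then p ω' else 0 with hD
  have hl2 : 0 < Real.log 2 := Real.log_pos (by norm_num)
  -- each marginal is positive on the support
  have pos : ∀ (φ : Ω → Prop) [DecidablePred φ] (ω), φ ω → 0 < p ω →
      0 < ∑ ω', if φ ω' then p ω' else 0 := by
    intro φ _ ω h1 h2
    refine Finset.sum_pos' (fun i _ => by split_ifs <;> simp [hp]) ⟨ω, Finset.mem_univ _, ?_⟩
    simp [h1, h2]
  have key : ∑ ω, p ω * (A ω * B ω / (C ω * D ω)) ≤ 1 := by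
    -- regroup by the value of `(f, g, h)`
    set mA : α → γ → ℝ := fun a c => ∑ ω', if (f ω', h ω') = (a, c) then p ω' else 0
    set mB : β → γ → ℝ := fun b c => ∑ ω', if (g ω', h ω') = (b, c) then p ω' else 0
    set mC : α → β → γ → ℝ := fun a b c => ∑ ω', if (f ω', g ω', h ω') = (a, b, c) then p ω' else 0
    set mD : γ → ℝ := fun c => ∑ ω', if h ω' = c then p ω' else 0
    have mA0 : ∀ a c, 0 ≤ mA a c := fun a c =>
      Finset.sum_nonneg fun i _ => by split_ifs <;> simp [hp]
    have mB0 : ∀ a c, 0 ≤ mB a c := fun a c =>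
      Finset.sum_nonneg fun i _ => by split_ifs <;> simp [hp]
    have mC0 : ∀ a b c, 0 ≤ mC a b c := fun a b c =>
      Finset.sum_nonneg fun i _ => by split_ifs <;> simp [hp]
    have mD0 : ∀ c, 0 ≤ mD c := fun c =>
      Finset.sum_nonneg fun i _ => by split_ifs <;> simp [hp]
    have e1 : ∑ ω, p ω * (A ω * B ω / (C ω * D ω))
        = ∑ a, ∑ b, ∑ c, mC a b c * (mA a c * mB b c / (mC a b c * mD c)) := by
      have : ∀ a b c, mC a b c * (mA a c * mB b c / (mC a b c * mD c))
          = ∑ ω, if f ω = a then (if g ω = b then (if h ω = c then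
            p ω * (mA a c * mB b c / (mC a b c * mD c)) else 0) else 0) else 0 := by
        intro a b c
        simp only [mC]
        rw [Finset.sum_mul]
        refine Finset.sum_congr rfl fun ω _ => ?_
        simp only [Prod.mk.injEq, ite_and, ite_mul, zero_mul]
      simp_rw [this]
      simp_rw [fun a b => Finset.sum_comm (s := (Finset.univ : Finset γ)) (t := (Finset.univ : Finset Ω))
        (f := fun c ω => if f ω = a then (if g ω = b then (if h ω = c then
            p ω * (mA a c * mB b c / (mC a b c * mD c)) else 0) else 0) else 0)]
      simp_rw [fun a => Finset.sum_comm (s := (Finset.univ : Finset β)) (t := (Finset.univ : Finset Ω))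
        (f := fun b ω => ∑ c, if f ω = a then (if g ω = b then (if h ω = c then
            p ω * (mA a c * mB b c / (mC a b c * mD c)) else 0) else 0) else 0)]
      rw [Finset.sum_comm]
      refine Finset.sum_congr rfl fun ω _ => ?_
      simp [Finset.sum_ite_irrel, hA, hB, hC, hD, mA, mB, mC, mD]
    rw [e1]
    have e2 : ∀ a b c, mC a b c * (mA a c * mB b c / (mC a b c * mD c)) ≤ mA a c * mB b c / mD c := by
      intro a b c
      rcases (mC0 a b c).eq_or_lt with h0 | h0
      · rw [← h0, zero_mul]
        exact div_nonneg (mul_nonneg (mA0 _ _) (mB0 _ _)) (mD0 _)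
      · rcases (mD0 c).eq_or_lt with h1 | h1
        · rw [← h1]; simp
        · apply le_of_eq; field_simp
    have sA : ∀ c, ∑ a, mA a c = mD c := by
      intro c
      simp only [mA, mD]
      rw [Finset.sum_comm]
      refine Finset.sum_congr rfl fun ω _ => ?_
      simp only [Prod.mk.injEq, ite_and]
      simp
    have sB : ∀ c, ∑ a, mB a c = mD c := by
      intro c
      simp only [mB, mD]
      rw [Finset.sum_comm]
      refine Finset.sum_congr rfl fun ω _ => ?_
      simp only [Prod.mk.injEq, ite_and]
      simp
    have sD : ∑ c, mD c = 1 := by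
      simp only [mD]
      rw [Finset.sum_comm, ← hp1]
      simp
    calc ∑ a, ∑ b, ∑ c, mC a b c * (mA a c * mB b c / (mC a b c * mD c))
        ≤ ∑ a, ∑ b, ∑ c, mA a c * mB b c / mD c := by
          gcongr with a _ b _ c _; exact e2 a b c
      _ = ∑ c, (∑ a, mA a c) * (∑ b, mB b c) / mD c := by
          simp_rw [Finset.sum_mul_sum, Finset.sum_div]
          simp_rw [fun a => Finset.sum_comm (s := (Finset.univ : Finset β))
            (t := (Finset.univ : Finset γ)) (f := fun b c => mA a c * mB b c / mD c)]
          rw [Finset.sum_comm]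
      _ = ∑ c, mD c := by
          refine Finset.sum_congr rfl fun c _ => ?_
          rw [sA, sB]
          rcases eq_or_ne (mD c) 0 with h0 | h0
          · simp [h0]
          · field_simp
      _ ≤ 1 := sD.le
  have step : ∀ ω, p ω * (Real.logb 2 (A ω) + Real.logb 2 (B ω) - Real.logb 2 (C ω)
      - Real.logb 2 (D ω)) ≤ p ω * (A ω * B ω / (C ω * D ω) - 1) / Real.log 2 := by
    intro ω
    rcases (hp ω).eq_or_lt with h0 | h0
    · simp [← h0]
    have a1 : 0 < A ω := pos (fun ω' => (f ω', h ω') = (f ω, h ω)) ω rfl h0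
    have a2 : 0 < B ω := pos (fun ω' => (g ω', h ω') = (g ω, h ω)) ω rfl h0
    have a3 : 0 < C ω := pos (fun ω' => (f ω', g ω', h ω') = (f ω, g ω, h ω)) ω rfl h0
    have a4 : 0 < D ω := pos (fun ω' => h ω' = h ω) ω rfl h0
    rw [mul_div_assoc]
    refine mul_le_mul_of_nonneg_left ?_ h0.le
    have := Real.log_le_sub_one_of_pos (x := A ω * B ω / (C ω * D ω)) (by positivity)
    rw [Real.log_div (by positivity) (by positivity), Real.log_mul a1.ne' a2.ne',
      Real.log_mul a3.ne' a4.ne'] at this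
    simp only [Real.logb]
    rw [← add_div, ← sub_div, ← sub_div]
    refine div_le_div_of_nonneg_right ?_ hl2.le
    linarith
  have tot := Finset.sum_le_sum fun ω (_ : ω ∈ Finset.univ) => step ω
  have t1 : ∑ ω, p ω * (A ω * B ω / (C ω * D ω) - 1) / Real.log 2 ≤ 0 := by
    rw [← Finset.sum_div]
    apply div_nonpos_of_nonpos_of_nonneg _ hl2.le
    simp_rw [mul_sub, mul_one, Finset.sum_sub_distrib, hp1]
    linarith
  have t2 : ∑ ω, p ω * (Real.logb 2 (A ω) + Real.logb 2 (B ω) - Real.logb 2 (C ω)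
      - Real.logb 2 (D ω)) = ∑ ω, p ω * Real.logb 2 (A ω) + ∑ ω, p ω * Real.logb 2 (B ω)
      - ∑ ω, p ω * Real.logb 2 (C ω) - ∑ ω, p ω * Real.logb 2 (D ω) := by
    simp_rw [mul_sub, mul_add, Finset.sum_sub_distrib, Finset.sum_add_distrib]
  simp only [hA, hB, hC, hD] at t1 t2 tot
  linarith

/-! ### The channel seen from one decoder -/

/-- Everything one decoder sees: `S` is the source to be recovered, `f` extracts the common part,
`q0, q1, q2` are the laws of the cloud centres and satellites, `qX` the law of the own input, and
`h s w0 w2 x y` is the joint weight of the source letter `s` and the output `y` when the own input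
is `x` and the interferer's auxiliary letter is `w2`. -/
structure View (S K W0 W1 W2 X Y : Type*) where
  f : S → K
  pS : S → ℝ
  q0 : W0 → ℝ
  q1 : W0 → W1 → ℝ
  q2 : W0 → W2 → ℝ
  qX : S → W1 → W0 → X → ℝ
  h : S → W0 → W2 → X → Y → ℝ

namespace View

variable {S K W0 W1 W2 X Y : Type*} [Fintype S] [Fintype K] [Fintype W0] [Fintype W1] [Fintype W2]
  [Fintype X] [Fintype Y] [DecidableEq S] [DecidableEq K] [DecidableEq W0] [DecidableEq W1]
  [DecidableEq W2] [DecidableEq X] [DecidableEq Y]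

/-- The weights of a view are conditional probability distributions. -/
structure Valid (V : View S K W0 W1 W2 X Y) : Prop where
  pS0 : ∀ s, 0 ≤ V.pS s
  pS1 : ∑ s, V.pS s = 1
  q00 : ∀ a, 0 ≤ V.q0 a
  q01 : ∑ a, V.q0 a = 1
  q10 : ∀ a b, 0 ≤ V.q1 a b
  q11 : ∀ a, ∑ b, V.q1 a b = 1
  q20 : ∀ a b, 0 ≤ V.q2 a b
  q21 : ∀ a, ∑ b, V.q2 a b = 1
  qX0 : ∀ s a b x, 0 ≤ V.qX s a b x
  qX1 : ∀ s a b, ∑ x, V.qX s a b x = 1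
  h0 : ∀ s a b x y, 0 ≤ V.h s a b x y
  h1 : ∀ s a b x, ∑ y, V.h s a b x y = V.pS s

/-- Joint law of `(S, W0, W1, W2, X, Y)`. -/
def joint (V : View S K W0 W1 W2 X Y) (s : S) (w0 : W0) (w1 : W1) (w2 : W2) (x : X) (y : Y) : ℝ :=
  V.q0 w0 * V.q1 w0 w1 * V.q2 w0 w2 * V.qX s w1 w0 x * V.h s w0 w2 x y

/-- Law of `(K, W0, W1, W2, Y)`. -/
def Mb (V : View S K W0 W1 W2 X Y) (k : K) (w0 : W0) (w1 : W1) (w2 : W2) (y : Y) : ℝ :=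
  ∑ s, ∑ x, if V.f s = k then V.joint s w0 w1 w2 x y else 0

/-- Law of `(K, W0, W2, Y)`. -/
def Mc (V : View S K W0 W1 W2 X Y) (k : K) (w0 : W0) (w2 : W2) (y : Y) : ℝ :=
  ∑ w1, V.Mb k w0 w1 w2 y

/-- Law of `(K, W0, W1, Y)`. -/
def Md (V : View S K W0 W1 W2 X Y) (k : K) (w0 : W0) (w1 : W1) (y : Y) : ℝ :=
  ∑ w2, V.Mb k w0 w1 w2 y

/-- Law of `(K, W0, Y)`. -/
def Me (V : View S K W0 W1 W2 X Y) (k : K) (w0 : W0) (y : Y) : ℝ :=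
  ∑ w1, ∑ w2, V.Mb k w0 w1 w2 y

/-- Law of `Y`. -/
def Ma (V : View S K W0 W1 W2 X Y) (y : Y) : ℝ :=
  ∑ s, ∑ w0, ∑ w1, ∑ w2, ∑ x, V.joint s w0 w1 w2 x y

/-- Weight of a competing tuple together with the received word, for the five ways in which a
competitor `s'` can differ from the transmitted `s`:
`0`: other common part; otherwise same common part and
`1`: same own cell, same interfering cell; `2`: other own cell, same interfering cell;
`3`: same own cell, other interfering cell; `4`: both cells different. -/
def Q (V : View S K W0 W1 W2 X Y) (c : Fin 5) (s : S) (w0 : W0) (w1 : W1) (w2 : W2) (x : X)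
    (y : Y) : ℝ :=
  ![V.q0 w0 * V.q1 w0 w1 * V.q2 w0 w2 * V.qX s w1 w0 x * V.Ma y,
    V.qX s w1 w0 x * V.Mb (V.f s) w0 w1 w2 y,
    V.q1 w0 w1 * V.qX s w1 w0 x * V.Mc (V.f s) w0 w2 y,
    V.q2 w0 w2 * V.qX s w1 w0 x * V.Md (V.f s) w0 w1 y,
    V.q1 w0 w1 * V.q2 w0 w2 * V.qX s w1 w0 x * V.Me (V.f s) w0 y] c

section nonneg
variable {V : View S K W0 W1 W2 X Y} (hV : V.Valid)
include hV

theorem Valid.joint0 (s : S) (w0 : W0) (w1 : W1) (w2 : W2) (x : X) (y : Y) :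
    0 ≤ V.joint s w0 w1 w2 x y := by
  have := hV.q00 w0
  have := hV.q10 w0 w1
  have := hV.q20 w0 w2
  have := hV.qX0 s w1 w0 x
  have := hV.h0 s w0 w2 x y
  unfold joint; positivity

theorem Valid.Mb0 (k : K) (w0 : W0) (w1 : W1) (w2 : W2) (y : Y) : 0 ≤ V.Mb k w0 w1 w2 y :=
  Finset.sum_nonneg fun _ _ => Finset.sum_nonneg fun _ _ => by
    split_ifs
    · exact hV.joint0 ..
    · exact le_rfl

theorem Valid.Mc0 (k : K) (w0 : W0) (w2 : W2) (y : Y) : 0 ≤ V.Mc k w0 w2 y :=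
  Finset.sum_nonneg fun _ _ => hV.Mb0 ..

theorem Valid.Md0 (k : K) (w0 : W0) (w1 : W1) (y : Y) : 0 ≤ V.Md k w0 w1 y :=
  Finset.sum_nonneg fun _ _ => hV.Mb0 ..

theorem Valid.Me0 (k : K) (w0 : W0) (y : Y) : 0 ≤ V.Me k w0 y :=
  Finset.sum_nonneg fun _ _ => Finset.sum_nonneg fun _ _ => hV.Mb0 ..

theorem Valid.Ma0 (y : Y) : 0 ≤ V.Ma y :=
  Finset.sum_nonneg fun _ _ => Finset.sum_nonneg fun _ _ => Finset.sum_nonneg fun _ _ =>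
    Finset.sum_nonneg fun _ _ => Finset.sum_nonneg fun _ _ => hV.joint0 ..

theorem Valid.Q0 (c : Fin 5) (s : S) (w0 : W0) (w1 : W1) (w2 : W2) (x : X) (y : Y) :
    0 ≤ V.Q c s w0 w1 w2 x y := by
  have := hV.q00 w0
  have := hV.q10 w0 w1
  have := hV.q20 w0 w2
  have := hV.qX0 s w1 w0 x
  have := hV.Ma0 y
  have := hV.Mb0 (V.f s) w0 w1 w2 y
  have := hV.Mc0 (V.f s) w0 w2 y
  have := hV.Md0 (V.f s) w0 w1 y
  have := hV.Me0 (V.f s) w0 y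
  fin_cases c <;> simp [Q] <;> positivity

end nonneg

/-! ### Block extension of a view -/

/-- The memoryless `n`-th extension. -/
def pow (V : View S K W0 W1 W2 X Y) (n : ℕ) :
    View (Fin n → S) (Fin n → K) (Fin n → W0) (Fin n → W1) (Fin n → W2) (Fin n → X)
      (Fin n → Y) where
  f s := fun i => V.f (s i)
  pS s := ∏ i, V.pS (s i)
  q0 a := ∏ i, V.q0 (a i)
  q1 a b := ∏ i, V.q1 (a i) (b i)
  q2 a b := ∏ i, V.q2 (a i) (b i)
  qX s a b x := ∏ i, V.qX (s i) (a i) (b i) (x i)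
  h s a b x y := ∏ i, V.h (s i) (a i) (b i) (x i) (y i)

theorem Valid.pow {V : View S K W0 W1 W2 X Y} (hV : V.Valid) (n : ℕ) : (V.pow n).Valid where
  pS0 s := by simp only [View.pow]; exact Finset.prod_nonneg fun i _ => hV.pS0 _
  pS1 := by simp only [View.pow, ← prod_sum_fun (fun _ => V.pS), hV.pS1, Finset.prod_const_one]
  q00 s := by simp only [View.pow]; exact Finset.prod_nonneg fun i _ => hV.q00 _
  q01 := by simp only [View.pow, ← prod_sum_fun (fun _ => V.q0), hV.q01, Finset.prod_const_one]
  q10 a b := by simp only [View.pow]; exact Finset.prod_nonneg fun i _ => hV.q10 _ _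
  q11 a := by
    simp only [View.pow, ← prod_sum_fun (fun i => V.q1 (a i)), hV.q11, Finset.prod_const_one]
  q20 a b := by simp only [View.pow]; exact Finset.prod_nonneg fun i _ => hV.q20 _ _
  q21 a := by
    simp only [View.pow, ← prod_sum_fun (fun i => V.q2 (a i)), hV.q21, Finset.prod_const_one]
  qX0 s a b x := by simp only [View.pow]; exact Finset.prod_nonneg fun i _ => hV.qX0 _ _ _ _
  qX1 s a b := by
    simp only [View.pow, ← prod_sum_fun (fun i => V.qX (s i) (a i) (b i)), hV.qX1,
      Finset.prod_const_one]
  h0 s a b x y := by simp only [View.pow]; exact Finset.prod_nonneg fun i _ => hV.h0 _ _ _ _ _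
  h1 s a b x := by
    simp only [View.pow, ← prod_sum_fun (fun i => V.h (s i) (a i) (b i) (x i)), hV.h1]

section pow
variable (V : View S K W0 W1 W2 X Y) {n : ℕ}

theorem joint_pow (s : Fin n → S) (w0 : Fin n → W0) (w1 : Fin n → W1) (w2 : Fin n → W2)
    (x : Fin n → X) (y : Fin n → Y) :
    (V.pow n).joint s w0 w1 w2 x y = ∏ i, V.joint (s i) (w0 i) (w1 i) (w2 i) (x i) (y i) := by
  simp only [joint, pow, Finset.prod_mul_distrib]

theorem Mb_pow (k : Fin n → K) (w0 : Fin n → W0) (w1 : Fin n → W1) (w2 : Fin n → W2)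
    (y : Fin n → Y) :
    (V.pow n).Mb k w0 w1 w2 y = ∏ i, V.Mb (k i) (w0 i) (w1 i) (w2 i) (y i) := by
  simp only [Mb, prod_sum_fun, joint_pow, Finset.prod_ite_zero]
  simp [pow, funext_iff]

theorem Mc_pow (k : Fin n → K) (w0 : Fin n → W0) (w2 : Fin n → W2)
    (y : Fin n → Y) :
    (V.pow n).Mc k w0 w2 y = ∏ i, V.Mc (k i) (w0 i) (w2 i) (y i) := by
  simp only [Mc, prod_sum_fun, Mb_pow]

theorem Md_pow (k : Fin n → K) (w0 : Fin n → W0) (w1 : Fin n → W1)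
    (y : Fin n → Y) :
    (V.pow n).Md k w0 w1 y = ∏ i, V.Md (k i) (w0 i) (w1 i) (y i) := by
  simp only [Md, prod_sum_fun, Mb_pow]

theorem Me_pow (k : Fin n → K) (w0 : Fin n → W0)
    (y : Fin n → Y) :
    (V.pow n).Me k w0 y = ∏ i, V.Me (k i) (w0 i) (y i) := by
  simp only [Me, prod_sum_fun, Mb_pow]

theorem Ma_pow (y : Fin n → Y) : (V.pow n).Ma y = ∏ i, V.Ma (y i) := by
  simp only [Ma, prod_sum_fun, joint_pow]

theorem Q_pow (c : Fin 5) (s : Fin n → S) (w0 : Fin n → W0) (w1 : Fin n → W1) (w2 : Fin n → W2)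
    (x : Fin n → X) (y : Fin n → Y) :
    (V.pow n).Q c s w0 w1 w2 x y = ∏ i, V.Q c (s i) (w0 i) (w1 i) (w2 i) (x i) (y i) := by
  have hf : (V.pow n).f s = fun i => V.f (s i) := rfl
  fin_cases c <;>
    simp [Q, Ma_pow, Mb_pow, Mc_pow, Md_pow, Me_pow, Finset.prod_mul_distrib, hf] <;> simp [pow]

end pow

end View

/-! ### Random coding for one decoder -/

/-- Averages over pairs of coordinates of an i.i.d. vector, split according to whether the two
coordinates agree. -/
theorem avg_pair {ι A : Type*} [Fintype ι] [DecidableEq ι] [Fintype A]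
    (q : A → ℝ) (hq0 : ∀ a, 0 ≤ q a) (hq : ∑ a, q a = 1) (F : A → A → ℝ) (hF : ∀ a b, 0 ≤ F a b) :
    ∑ i : ι, ∑ i' : ι, ∑ x : ι → A, (∏ k, q (x k)) * F (x i) (x i')
      ≤ Fintype.card ι * ∑ a, q a * F a a
        + Fintype.card ι ^ 2 * ∑ a, ∑ b, q a * q b * F a b := by
  have h1 : 0 ≤ ∑ a, q a * F a a := Finset.sum_nonneg fun a _ => mul_nonneg (hq0 a) (hF _ _)
  have h2 : 0 ≤ ∑ a, ∑ b, q a * q b * F a b := Finset.sum_nonneg fun a _ =>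
    Finset.sum_nonneg fun b _ => mul_nonneg (mul_nonneg (hq0 a) (hq0 b)) (hF _ _)
  have key : ∀ i i' : ι, ∑ x : ι → A, (∏ k, q (x k)) * F (x i) (x i')
      ≤ (if i = i' then ∑ a, q a * F a a else 0) + ∑ a, ∑ b, q a * q b * F a b := by
    intro i i'
    by_cases h : i = i'
    · subst h
      rw [pi_one (fun _ => q) (fun _ => hq) i (fun a => F a a)]
      simpa using h2
    · rw [pi_two (fun _ => q) (fun _ => hq) h F]
      simp [h]
  calc _ ≤ ∑ i : ι, ∑ i' : ι, ((if i = i' then ∑ a, q a * F a a else 0)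
            + ∑ a, ∑ b, q a * q b * F a b) :=
        Finset.sum_le_sum fun i _ => Finset.sum_le_sum fun i' _ => key i i'
    _ = _ := by
        simp only [Finset.sum_add_distrib, Finset.sum_ite_eq, Finset.mem_univ, if_true,
          Finset.sum_const, Finset.card_univ, nsmul_eq_mul]
        ring

theorem sum_swap_aux {Γ Y : Type*} [Fintype Γ] [Fintype Y] (r : ℝ) (q : Γ → ℝ)
    (A B : Γ → Y → ℝ) :
    ∑ γ, ∑ γ', q γ * q γ' * (r * ∑ y, A γ y * B γ' y)
      = r * ∑ y, (∑ γ, q γ * A γ y) * ∑ γ, q γ * B γ y := by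
  simp only [Finset.sum_mul_sum]
  simp only [Finset.mul_sum]
  rw [Finset.sum_congr rfl fun γ _ => Finset.sum_comm, Finset.sum_comm]
  refine Finset.sum_congr rfl fun y _ => Finset.sum_congr rfl fun γ _ =>
    Finset.sum_congr rfl fun γ' _ => ?_
  ring

namespace View

variable {S K W0 W1 W2 X Y : Type*} [Fintype S] [Fintype K] [Fintype W0] [Fintype W1] [Fintype W2]
  [Fintype X] [Fintype Y] [DecidableEq S] [DecidableEq K] [DecidableEq W0] [DecidableEq W1]
  [DecidableEq W2] [DecidableEq X] [DecidableEq Y]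
  {I J : Type*} [Fintype I] [Fintype J] [DecidableEq I] [DecidableEq J] [Nonempty I] [Nonempty J]

/-- Law of the cloud attached to one value of the common part: a centre, one satellite per own cell
and one satellite per interfering cell. -/
def qC (V : View S K W0 W1 W2 X Y) (γ : W0 × (I → W1) × (J → W2)) : ℝ :=
  V.q0 γ.1 * (∏ i, V.q1 γ.1 (γ.2.1 i)) * ∏ j, V.q2 γ.1 (γ.2.2 j)

/-- Law of the uniformly chosen cell and of the codeword assigned to `s`, given its cloud. -/
noncomputable def qA (V : View S K W0 W1 W2 X Y) (s : S) (γ : W0 × (I → W1) × (J → W2)) (a : I × X) : ℝ :=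
  (1 / (Fintype.card I : ℝ)) * V.qX s (γ.2.1 a.1) γ.1 a.2

/-- Error probability, averaged over the random code, of a family of decoders. -/
noncomputable def err (V : View S K W0 W1 W2 X Y)
    (φ : (K → W0 × (I → W1) × (J → W2)) → (S → I × X) → Y → S) : ℝ :=
  ∑ c : K → W0 × (I → W1) × (J → W2), (∏ k, V.qC (c k)) *
    ∑ a : S → I × X, (∏ s, V.qA s (c (V.f s)) (a s)) *
      ∑ s, ∑ j, ∑ y, (1 / (Fintype.card J : ℝ)) *
        V.h s (c (V.f s)).1 ((c (V.f s)).2.2 j) (a s).2 y * if φ c a y = s then 0 else 1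

variable {V : View S K W0 W1 W2 X Y} (hV : V.Valid)
include hV

theorem Valid.qC0 (γ : W0 × (I → W1) × (J → W2)) : 0 ≤ V.qC γ :=
  mul_nonneg (mul_nonneg (hV.q00 _) (Finset.prod_nonneg fun _ _ => hV.q10 _ _))
    (Finset.prod_nonneg fun _ _ => hV.q20 _ _)

theorem Valid.qA0 (s : S) (γ : W0 × (I → W1) × (J → W2)) (a : I × X) : 0 ≤ V.qA s γ a :=
  mul_nonneg (by positivity) (hV.qX0 _ _ _ _)

theorem Valid.qC1 : ∑ γ : W0 × (I → W1) × (J → W2), V.qC γ = 1 := by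
  simp only [Fintype.sum_prod_type, qC, mul_assoc, ← Finset.mul_sum,
    pi_total (fun _ : J => V.q2 _) (fun _ => hV.q21 _), mul_one,
    pi_total (fun _ : I => V.q1 _) (fun _ => hV.q11 _), hV.q01]

theorem Valid.qA1 (s : S) (γ : W0 × (I → W1) × (J → W2)) : ∑ a : I × X, V.qA s γ a = 1 := by
  simp only [Fintype.sum_prod_type, qA, ← Finset.mul_sum, hV.qX1]
  simp

/-- Averaging over one cloud and the codeword of one source word. -/
theorem Valid.gamma_one (s : S) (F : W0 → W1 → W2 → X → ℝ) :
    ∑ γ : W0 × (I → W1) × (J → W2), V.qC γ * ∑ a : I × X, V.qA s γ a *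
        ∑ j, F γ.1 (γ.2.1 a.1) (γ.2.2 j) a.2
      = Fintype.card J * ∑ w0, ∑ w1, ∑ w2, ∑ x,
          V.q0 w0 * V.q1 w0 w1 * V.q2 w0 w2 * V.qX s w1 w0 x * F w0 w1 w2 x := by
  have hI : (Fintype.card I : ℝ) ≠ 0 := by simp
  have e1 : ∀ w0 (i : I) (j : J), ∑ u : I → W1, (∏ i, V.q1 w0 (u i)) *
      ∑ w : J → W2, (∏ j, V.q2 w0 (w j)) * ∑ x, V.qX s (u i) w0 x * F w0 (u i) (w j) x
      = ∑ w1, V.q1 w0 w1 * ∑ w2, V.q2 w0 w2 * ∑ x, V.qX s w1 w0 x * F w0 w1 w2 x := by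
    intro w0 i j
    rw [pi_one (fun _ => V.q1 w0) (fun _ => hV.q11 w0) i (fun b => ∑ w : J → W2,
      (∏ j, V.q2 w0 (w j)) * ∑ x, V.qX s b w0 x * F w0 b (w j) x)]
    refine Finset.sum_congr rfl fun w1 _ => ?_
    rw [pi_one (fun _ => V.q2 w0) (fun _ => hV.q21 w0) j (fun b =>
      ∑ x, V.qX s w1 w0 x * F w0 w1 b x)]
  have e2 : ∑ γ : W0 × (I → W1) × (J → W2), V.qC γ * ∑ a : I × X, V.qA s γ a *
        ∑ j, F γ.1 (γ.2.1 a.1) (γ.2.2 j) a.2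
      = ∑ w0, V.q0 w0 * ((1 / (Fintype.card I : ℝ)) * ∑ i : I, ∑ j : J,
        ∑ u : I → W1, (∏ i, V.q1 w0 (u i)) *
          ∑ w : J → W2, (∏ j, V.q2 w0 (w j)) * ∑ x, V.qX s (u i) w0 x * F w0 (u i) (w j) x) := by
    simp only [Fintype.sum_prod_type, qC, qA, Finset.mul_sum]
    refine Finset.sum_congr rfl fun w0 _ => ?_
    simp only [← Fintype.sum_prod_type']
    refine Fintype.sum_equiv
      ⟨fun p => (p.2.2.1, p.2.2.2.2, p.1, p.2.1, p.2.2.2.1),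
        fun p => (p.2.2.1, p.2.2.2.1, p.1, p.2.2.2.2, p.2.1), fun _ => rfl, fun _ => rfl⟩
      _ _ fun p => ?_
    simp only [Equiv.coe_fn_mk]
    ring
  rw [e2]
  simp only [e1]
  simp only [Finset.sum_const, Finset.card_univ, nsmul_eq_mul, Finset.mul_sum]
  simp only [← Fintype.sum_prod_type']
  refine Finset.sum_congr rfl fun p _ => ?_
  field_simp

/-- A competitor with the same common part: the four ways in which cells may agree. -/
theorem Valid.gamma_two (s s' : S) (v : S → W0 → W1 → W2 → X → Y → ℝ)
    (hv : ∀ s w0 w1 w2 x y, 0 ≤ v s w0 w1 w2 x y)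
    (Φ : W0 → W1 → W1 → W2 → W2 → ℝ)
    (hΦ : ∀ w0 a a' b b', Φ w0 a a' b b' = ∑ x, ∑ x', ∑ y,
      V.qX s a w0 x * V.qX s' a' w0 x' * V.h s w0 b x y * v s' w0 a' b' x' y) :
    ∑ γ : W0 × (I → W1) × (J → W2), V.qC γ * ∑ a : I × X, ∑ a' : I × X,
      V.qA s γ a * V.qA s' γ a' * ∑ j, ∑ y, (1 / (Fintype.card J : ℝ)) *
        V.h s γ.1 (γ.2.2 j) a.2 y * ∑ j', v s' γ.1 (γ.2.1 a'.1) (γ.2.2 j') a'.2 y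
    ≤ (1 / (Fintype.card I : ℝ)) * (∑ w0, V.q0 w0 * ∑ a, V.q1 w0 a * ∑ b, V.q2 w0 b * Φ w0 a a b b)
      + (∑ w0, V.q0 w0 * ∑ a, ∑ a', V.q1 w0 a * V.q1 w0 a' * ∑ b, V.q2 w0 b * Φ w0 a a' b b)
      + (Fintype.card J / Fintype.card I : ℝ) *
        (∑ w0, V.q0 w0 * ∑ a, V.q1 w0 a * ∑ b, ∑ b', V.q2 w0 b * V.q2 w0 b' * Φ w0 a a b b')
      + (Fintype.card J : ℝ) * (∑ w0, V.q0 w0 * ∑ a, ∑ a', V.q1 w0 a * V.q1 w0 a' *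
          ∑ b, ∑ b', V.q2 w0 b * V.q2 w0 b' * Φ w0 a a' b b') := by
  have hI : (Fintype.card I : ℝ) ≠ 0 := by simp
  have hJ : (Fintype.card J : ℝ) ≠ 0 := by simp
  have hΦ0 : ∀ w0 a a' b b', 0 ≤ Φ w0 a a' b b' := by
    intro w0 a a' b b'
    rw [hΦ]
    exact Finset.sum_nonneg fun _ _ => Finset.sum_nonneg fun _ _ => Finset.sum_nonneg fun _ _ =>
      mul_nonneg (mul_nonneg (mul_nonneg (hV.qX0 ..) (hV.qX0 ..)) (hV.h0 ..)) (hv ..)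
  have e1 : ∑ γ : W0 × (I → W1) × (J → W2), V.qC γ * ∑ a : I × X, ∑ a' : I × X,
      V.qA s γ a * V.qA s' γ a' * ∑ j, ∑ y, (1 / (Fintype.card J : ℝ)) *
        V.h s γ.1 (γ.2.2 j) a.2 y * ∑ j', v s' γ.1 (γ.2.1 a'.1) (γ.2.2 j') a'.2 y
      = ∑ w0, V.q0 w0 * ((1 / (Fintype.card I : ℝ) ^ 2) * (1 / (Fintype.card J : ℝ)) *
        ∑ i : I, ∑ i' : I, ∑ u : I → W1, (∏ k, V.q1 w0 (u k)) *
          ∑ j : J, ∑ j' : J, ∑ w : J → W2, (∏ k, V.q2 w0 (w k)) *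
            Φ w0 (u i) (u i') (w j) (w j')) := by
    have e0 : ∀ w0 (u : I → W1) (w : J → W2), ∑ i : I, ∑ x : X, ∑ i' : I, ∑ x' : X,
        (1 / (Fintype.card I : ℝ)) * V.qX s (u i) w0 x * ((1 / (Fintype.card I : ℝ)) *
          V.qX s' (u i') w0 x') * ∑ j, ∑ y, (1 / (Fintype.card J : ℝ)) *
        V.h s w0 (w j) x y * ∑ j', v s' w0 (u i') (w j') x' y
        = (1 / (Fintype.card I : ℝ) ^ 2) * (1 / (Fintype.card J : ℝ)) *
          ∑ i : I, ∑ i' : I, ∑ j : J, ∑ j' : J, Φ w0 (u i) (u i') (w j) (w j') := by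
      intro w0 u w
      simp only [hΦ, Finset.mul_sum, ← Fintype.sum_prod_type']
      -- `(i, x, i', x', j, y, j')` against `(i, i', j, j', x, x', y)`
      refine Fintype.sum_equiv
        ⟨fun p => (p.1, p.2.2.1, p.2.2.2.2.1, p.2.2.2.2.2.2, p.2.1, p.2.2.2.1, p.2.2.2.2.2.1),
          fun p => (p.1, p.2.2.2.2.1, p.2.1, p.2.2.2.2.2.1, p.2.2.1, p.2.2.2.2.2.2, p.2.2.2.1),
          fun _ => rfl, fun _ => rfl⟩ _ _ fun p => ?_
      simp only [Equiv.coe_fn_mk]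
      ring
    simp only [Fintype.sum_prod_type, qC, qA, e0]
    clear e0
    refine Finset.sum_congr rfl fun w0 _ => ?_
    simp only [Finset.mul_sum, ← Fintype.sum_prod_type']
    -- `(u, w, i, i', j, j')` against `(i, i', u, j, j', w)`
    refine Fintype.sum_equiv
      ⟨fun p => (p.2.2.1, p.2.2.2.1, p.1, p.2.2.2.2.1, p.2.2.2.2.2, p.2.1),
        fun p => (p.2.2.1, p.2.2.2.2.2, p.1, p.2.1, p.2.2.2.1, p.2.2.2.2.1),
        fun _ => rfl, fun _ => rfl⟩ _ _ fun p => ?_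
    simp only [Equiv.coe_fn_mk]
    ring
  rw [e1]
  have e2 : ∀ w0, (∑ i : I, ∑ i' : I, ∑ u : I → W1, (∏ k, V.q1 w0 (u k)) *
          ∑ j : J, ∑ j' : J, ∑ w : J → W2, (∏ k, V.q2 w0 (w k)) *
            Φ w0 (u i) (u i') (w j) (w j'))
      ≤ Fintype.card I * (∑ a, V.q1 w0 a * (Fintype.card J * ∑ b, V.q2 w0 b * Φ w0 a a b b
          + Fintype.card J ^ 2 * ∑ b, ∑ b', V.q2 w0 b * V.q2 w0 b' * Φ w0 a a b b'))
        + Fintype.card I ^ 2 * (∑ a, ∑ a', V.q1 w0 a * V.q1 w0 a' *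
          (Fintype.card J * ∑ b, V.q2 w0 b * Φ w0 a a' b b
          + Fintype.card J ^ 2 * ∑ b, ∑ b', V.q2 w0 b * V.q2 w0 b' * Φ w0 a a' b b')) := by
    intro w0
    have h3 : ∀ a a', ∑ j : J, ∑ j' : J, ∑ w : J → W2, (∏ k, V.q2 w0 (w k)) *
            Φ w0 a a' (w j) (w j') ≤ Fintype.card J * ∑ b, V.q2 w0 b * Φ w0 a a' b b
          + Fintype.card J ^ 2 * ∑ b, ∑ b', V.q2 w0 b * V.q2 w0 b' * Φ w0 a a' b b' :=
      fun a a' => avg_pair (V.q2 w0) (hV.q20 w0) (hV.q21 w0) (Φ w0 a a') (hΦ0 w0 a a')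
    refine le_trans (avg_pair (V.q1 w0) (hV.q10 w0) (hV.q11 w0) (fun a a' =>
      ∑ j : J, ∑ j' : J, ∑ w : J → W2, (∏ k, V.q2 w0 (w k)) *
            Φ w0 a a' (w j) (w j')) fun a b => ?_) ?_
    · exact Finset.sum_nonneg fun _ _ => Finset.sum_nonneg fun _ _ => Finset.sum_nonneg fun _ _ =>
        mul_nonneg (Finset.prod_nonneg fun _ _ => hV.q20 ..) (hΦ0 ..)
    · gcongr with a _ a _ a' _
      · exact hV.q10 _ _
      · exact h3 a a
      · exact mul_nonneg (hV.q10 _ _) (hV.q10 _ _)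
      · exact h3 a a'
  refine le_trans (Finset.sum_le_sum fun w0 _ => mul_le_mul_of_nonneg_left
    (mul_le_mul_of_nonneg_left (e2 w0) (by positivity)) (hV.q00 w0)) (le_of_eq ?_)
  simp only [mul_add, Finset.sum_add_distrib]
  have r1 : ∀ (F : W0 → W1 → ℝ), ∑ w0, V.q0 w0 * ((1 / (Fintype.card I : ℝ) ^ 2) *
      (1 / (Fintype.card J : ℝ)) * ((Fintype.card I : ℝ) * ∑ a, V.q1 w0 a *
        ((Fintype.card J : ℝ) * F w0 a)))
      = (1 / (Fintype.card I : ℝ)) * ∑ w0, V.q0 w0 * ∑ a, V.q1 w0 a * F w0 a := by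
    intro F
    simp only [Finset.mul_sum]
    refine Finset.sum_congr rfl fun _ _ => Finset.sum_congr rfl fun _ _ => ?_
    field_simp
  have r2 : ∀ (F : W0 → W1 → ℝ), ∑ w0, V.q0 w0 * ((1 / (Fintype.card I : ℝ) ^ 2) *
      (1 / (Fintype.card J : ℝ)) * ((Fintype.card I : ℝ) * ∑ a, V.q1 w0 a *
        ((Fintype.card J : ℝ) ^ 2 * F w0 a)))
      = (Fintype.card J / Fintype.card I : ℝ) * ∑ w0, V.q0 w0 * ∑ a, V.q1 w0 a * F w0 a := by
    intro F
    simp only [Finset.mul_sum]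
    refine Finset.sum_congr rfl fun _ _ => Finset.sum_congr rfl fun _ _ => ?_
    field_simp
  have r3 : ∀ (F : W0 → W1 → W1 → ℝ), ∑ w0, V.q0 w0 * ((1 / (Fintype.card I : ℝ) ^ 2) *
      (1 / (Fintype.card J : ℝ)) * ((Fintype.card I : ℝ) ^ 2 * ∑ a, ∑ a', V.q1 w0 a *
        V.q1 w0 a' * ((Fintype.card J : ℝ) * F w0 a a')))
      = ∑ w0, V.q0 w0 * ∑ a, ∑ a', V.q1 w0 a * V.q1 w0 a' * F w0 a a' := by
    intro F
    simp only [Finset.mul_sum]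
    refine Finset.sum_congr rfl fun _ _ => Finset.sum_congr rfl fun _ _ =>
      Finset.sum_congr rfl fun _ _ => ?_
    field_simp
  have r4 : ∀ (F : W0 → W1 → W1 → ℝ), ∑ w0, V.q0 w0 * ((1 / (Fintype.card I : ℝ) ^ 2) *
      (1 / (Fintype.card J : ℝ)) * ((Fintype.card I : ℝ) ^ 2 * ∑ a, ∑ a', V.q1 w0 a *
        V.q1 w0 a' * ((Fintype.card J : ℝ) ^ 2 * F w0 a a')))
      = (Fintype.card J : ℝ) * ∑ w0, V.q0 w0 * ∑ a, ∑ a', V.q1 w0 a * V.q1 w0 a' * F w0 a a' := by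
    intro F
    simp only [Finset.mul_sum]
    refine Finset.sum_congr rfl fun _ _ => Finset.sum_congr rfl fun _ _ =>
      Finset.sum_congr rfl fun _ _ => ?_
    field_simp
  rw [r1 fun w0 a => ∑ b, V.q2 w0 b * Φ w0 a a b b,
    r2 fun w0 a => ∑ b, ∑ b', V.q2 w0 b * V.q2 w0 b' * Φ w0 a a b b',
    r3 fun w0 a a' => ∑ b, V.q2 w0 b * Φ w0 a a' b b,
    r4 fun w0 a a' => ∑ b, ∑ b', V.q2 w0 b * V.q2 w0 b' * Φ w0 a a' b b']
  ring

/-- A competitor with another common part is independent of the received word. -/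
theorem Valid.gamma_diff (s s' : S) (v : S → W0 → W1 → W2 → X → Y → ℝ) :
    ∑ γ : W0 × (I → W1) × (J → W2), ∑ γ' : W0 × (I → W1) × (J → W2), V.qC γ * V.qC γ' *
      ∑ a : I × X, ∑ a' : I × X,
      V.qA s γ a * V.qA s' γ' a' * ∑ j, ∑ y, (1 / (Fintype.card J : ℝ)) *
        V.h s γ.1 (γ.2.2 j) a.2 y * ∑ j', v s' γ'.1 (γ'.2.1 a'.1) (γ'.2.2 j') a'.2 y
    = (Fintype.card J : ℝ) * ∑ y, (∑ w0, ∑ w1, ∑ w2, ∑ x, V.joint s w0 w1 w2 x y) *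
        ∑ w0, ∑ w1, ∑ w2, ∑ x, V.q0 w0 * V.q1 w0 w1 * V.q2 w0 w2 * V.qX s' w1 w0 x *
          v s' w0 w1 w2 x y := by
  have hJ : (Fintype.card J : ℝ) ≠ 0 := by simp
  have g1 := fun y => hV.gamma_one (I := I) (J := J) s (fun w0 w1 w2 x => V.h s w0 w2 x y)
  have g2 := fun y => hV.gamma_one (I := I) (J := J) s' (fun w0 w1 w2 x => v s' w0 w1 w2 x y)

  have e : ∀ y, (∑ w0, ∑ w1, ∑ w2, ∑ x, V.joint s w0 w1 w2 x y) *
        ∑ w0, ∑ w1, ∑ w2, ∑ x, V.q0 w0 * V.q1 w0 w1 * V.q2 w0 w2 * V.qX s' w1 w0 x *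
          v s' w0 w1 w2 x y
      = (1 / (Fintype.card J : ℝ) ^ 2) * ((∑ γ : W0 × (I → W1) × (J → W2), V.qC γ *
        ∑ a : I × X, V.qA s γ a * ∑ j, V.h s γ.1 (γ.2.2 j) a.2 y) *
        (∑ γ : W0 × (I → W1) × (J → W2), V.qC γ *
        ∑ a : I × X, V.qA s' γ a * ∑ j, v s' γ.1 (γ.2.1 a.1) (γ.2.2 j) a.2 y)) := by
    intro y
    rw [g1, g2]
    simp only [joint]
    field_simp
  simp only [e]
  clear g1 g2 e
  have e0 : ∀ γ γ' : W0 × (I → W1) × (J → W2), ∑ a : I × X, ∑ a' : I × X,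
      V.qA s γ a * V.qA s' γ' a' * ∑ j, ∑ y, (1 / (Fintype.card J : ℝ)) *
        V.h s γ.1 (γ.2.2 j) a.2 y * ∑ j', v s' γ'.1 (γ'.2.1 a'.1) (γ'.2.2 j') a'.2 y
      = (1 / (Fintype.card J : ℝ)) * ∑ y, (∑ a : I × X, V.qA s γ a *
          ∑ j, V.h s γ.1 (γ.2.2 j) a.2 y) *
        ∑ a' : I × X, V.qA s' γ' a' * ∑ j', v s' γ'.1 (γ'.2.1 a'.1) (γ'.2.2 j') a'.2 y := by
    intro γ γ'
    simp only [Finset.mul_sum, Finset.sum_mul]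
    rw [Finset.sum_congr rfl fun a _ => Finset.sum_congr rfl fun a' _ => Finset.sum_comm]
    rw [Finset.sum_congr rfl fun a _ => Finset.sum_comm, Finset.sum_comm]
    refine Finset.sum_congr rfl fun y _ => ?_
    rw [Finset.sum_comm]
    refine Finset.sum_congr rfl fun a' _ => ?_
    rw [Finset.sum_congr rfl fun a _ => Finset.sum_comm, Finset.sum_comm]
    refine Finset.sum_congr rfl fun j' _ => Finset.sum_congr rfl fun a _ =>
      Finset.sum_congr rfl fun j _ => ?_
    ring
  calc _ = ∑ γ : W0 × (I → W1) × (J → W2), ∑ γ' : W0 × (I → W1) × (J → W2), V.qC γ * V.qC γ' *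
      ((1 / (Fintype.card J : ℝ)) * ∑ y, (∑ a : I × X, V.qA s γ a *
          ∑ j, V.h s γ.1 (γ.2.2 j) a.2 y) *
        ∑ a' : I × X, V.qA s' γ' a' * ∑ j', v s' γ'.1 (γ'.2.1 a'.1) (γ'.2.2 j') a'.2 y) :=
        Finset.sum_congr rfl fun γ _ => Finset.sum_congr rfl fun γ' _ => by rw [e0 γ γ']
    _ = (1 / (Fintype.card J : ℝ)) * ∑ y, ((∑ γ : W0 × (I → W1) × (J → W2), V.qC γ *
        ∑ a : I × X, V.qA s γ a * ∑ j, V.h s γ.1 (γ.2.2 j) a.2 y) *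
        (∑ γ : W0 × (I → W1) × (J → W2), V.qC γ *
        ∑ a : I × X, V.qA s' γ a * ∑ j, v s' γ.1 (γ.2.1 a.1) (γ.2.2 j) a.2 y)) :=
        sum_swap_aux _ V.qC (fun γ y => ∑ a : I × X, V.qA s γ a *
          ∑ j, V.h s γ.1 (γ.2.2 j) a.2 y) (fun γ y =>
        ∑ a : I × X, V.qA s' γ a * ∑ j, v s' γ.1 (γ.2.1 a.1) (γ.2.2 j) a.2 y)
    _ = _ := by
        rw [← Finset.mul_sum]
        field_simp

end View

namespace View

variable {S K W0 W1 W2 X Y : Type*} [Fintype S] [Fintype K] [Fintype W0] [Fintype W1] [Fintype W2]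
  [Fintype X] [Fintype Y] [DecidableEq S] [DecidableEq K] [DecidableEq W0] [DecidableEq W1]
  [DecidableEq W2] [DecidableEq X] [DecidableEq Y]
  {I J : Type*} [Fintype I] [Fintype J] [DecidableEq I] [DecidableEq J] [Nonempty I] [Nonempty J]

/-- Expectation over the random code. -/
noncomputable def avg (V : View S K W0 W1 W2 X Y)
    (G : (K → W0 × (I → W1) × (J → W2)) → (S → I × X) → ℝ) : ℝ :=
  ∑ c : K → W0 × (I → W1) × (J → W2), (∏ k, V.qC (c k)) *
    ∑ a : S → I × X, (∏ s, V.qA s (c (V.f s)) (a s)) * G c a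

theorem avg_add (V : View S K W0 W1 W2 X Y)
    (G H : (K → W0 × (I → W1) × (J → W2)) → (S → I × X) → ℝ) :
    V.avg (fun c a => G c a + H c a) = V.avg G + V.avg H := by
  simp only [avg, mul_add, Finset.sum_add_distrib]

theorem avg_sum (V : View S K W0 W1 W2 X Y) {ι : Type*} [Fintype ι]
    (G : ι → (K → W0 × (I → W1) × (J → W2)) → (S → I × X) → ℝ) :
    V.avg (fun c a => ∑ i, G i c a) = ∑ i, V.avg (G i) := by
  simp only [avg, Finset.mul_sum]
  rw [Finset.sum_congr rfl fun c _ => Finset.sum_comm, Finset.sum_comm]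

variable {V : View S K W0 W1 W2 X Y} (hV : V.Valid)
include hV

theorem Valid.avg_mono {G H : (K → W0 × (I → W1) × (J → W2)) → (S → I × X) → ℝ}
    (h : ∀ c a, G c a ≤ H c a) : V.avg G ≤ V.avg H :=
  Finset.sum_le_sum fun _ _ => mul_le_mul_of_nonneg_left
    (Finset.sum_le_sum fun _ _ => mul_le_mul_of_nonneg_left (h _ _)
      (Finset.prod_nonneg fun _ _ => hV.qA0 ..)) (Finset.prod_nonneg fun _ _ => hV.qC0 ..)

theorem Valid.avg_one (s : S) (G : W0 × (I → W1) × (J → W2) → I × X → ℝ) :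
    V.avg (fun c a => G (c (V.f s)) (a s)) = ∑ γ, V.qC γ * ∑ a, V.qA s γ a * G γ a := by
  rw [← pi_one (fun _ : K => V.qC) (fun _ => hV.qC1) (V.f s)]
  refine Finset.sum_congr rfl fun c _ => ?_
  rw [pi_one (fun s => V.qA s (c (V.f s))) (fun s => hV.qA1 s _) s]

theorem Valid.avg_same {s s' : S} (hs : s ≠ s') (hf : V.f s = V.f s')
    (G : W0 × (I → W1) × (J → W2) → I × X → I × X → ℝ) :
    V.avg (fun c a => G (c (V.f s)) (a s) (a s'))
      = ∑ γ, V.qC γ * ∑ a, ∑ a', V.qA s γ a * V.qA s' γ a' * G γ a a' := by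
  rw [← pi_one (fun _ : K => V.qC) (fun _ => hV.qC1) (V.f s)]
  refine Finset.sum_congr rfl fun c _ => ?_
  rw [pi_two (fun s => V.qA s (c (V.f s))) (fun s => hV.qA1 s _) hs (G (c (V.f s))), hf]

theorem Valid.avg_diff {s s' : S} (hf : V.f s ≠ V.f s')
    (G : W0 × (I → W1) × (J → W2) → W0 × (I → W1) × (J → W2) → I × X → I × X → ℝ) :
    V.avg (fun c a => G (c (V.f s)) (c (V.f s')) (a s) (a s'))
      = ∑ γ, ∑ γ', V.qC γ * V.qC γ' *
        ∑ a, ∑ a', V.qA s γ a * V.qA s' γ' a' * G γ γ' a a' := by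
  have hs : s ≠ s' := fun h => hf (by rw [h])
  rw [← pi_two (fun _ : K => V.qC) (fun _ => hV.qC1) hf (fun γ γ' =>
        ∑ a, ∑ a', V.qA s γ a * V.qA s' γ' a' * G γ γ' a a')]
  refine Finset.sum_congr rfl fun c _ => ?_
  rw [pi_two (fun s => V.qA s (c (V.f s))) (fun s => hV.qA1 s _) hs (G (c (V.f s)) (c (V.f s')))]

/-- Expected number of interfering cells in which the competitor `s'` of `s` passes the test `v`. -/
theorem Valid.pair_le {s s' : S} (hs : s ≠ s') (v : S → W0 → W1 → W2 → X → Y → ℝ)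
    (hv : ∀ s w0 w1 w2 x y, 0 ≤ v s w0 w1 w2 x y)
    (Φ : W0 → W1 → W1 → W2 → W2 → ℝ)
    (hΦ : ∀ w0 a a' b b', Φ w0 a a' b b' = ∑ x, ∑ x', ∑ y,
      V.qX s a w0 x * V.qX s' a' w0 x' * V.h s w0 b x y * v s' w0 a' b' x' y) :
    V.avg (fun (c : K → W0 × (I → W1) × (J → W2)) (a : S → I × X) =>
      ∑ j, ∑ y, (1 / (Fintype.card J : ℝ)) *
        V.h s (c (V.f s)).1 ((c (V.f s)).2.2 j) (a s).2 y *
        ∑ j', v s' (c (V.f s')).1 ((c (V.f s')).2.1 (a s').1) ((c (V.f s')).2.2 j') (a s').2 y)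
    ≤ (Fintype.card J : ℝ) * (∑ y, (∑ w0, ∑ w1, ∑ w2, ∑ x, V.joint s w0 w1 w2 x y) *
        ∑ w0, ∑ w1, ∑ w2, ∑ x, V.q0 w0 * V.q1 w0 w1 * V.q2 w0 w2 * V.qX s' w1 w0 x *
          v s' w0 w1 w2 x y) +
      ((1 / (Fintype.card I : ℝ)) * ((if V.f s = V.f s' then 1 else 0) *
        (∑ w0, V.q0 w0 * ∑ a, V.q1 w0 a * ∑ b, V.q2 w0 b * Φ w0 a a b b))
      + ((if V.f s = V.f s' then 1 else 0) *
        (∑ w0, V.q0 w0 * ∑ a, ∑ a', V.q1 w0 a * V.q1 w0 a' * ∑ b, V.q2 w0 b * Φ w0 a a' b b))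
      + (Fintype.card J / Fintype.card I : ℝ) * ((if V.f s = V.f s' then 1 else 0) *
        (∑ w0, V.q0 w0 * ∑ a, V.q1 w0 a * ∑ b, ∑ b', V.q2 w0 b * V.q2 w0 b' * Φ w0 a a b b'))
      + (Fintype.card J : ℝ) * ((if V.f s = V.f s' then 1 else 0) *
        (∑ w0, V.q0 w0 * ∑ a, ∑ a', V.q1 w0 a * V.q1 w0 a' *
          ∑ b, ∑ b', V.q2 w0 b * V.q2 w0 b' * Φ w0 a a' b b'))) := by
  by_cases hf : V.f s = V.f s'
  · have h := hV.gamma_two (I := I) (J := J) s s' v hv Φ hΦ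
    rw [← hV.avg_same hs hf (fun γ a a' => ∑ j, ∑ y, (1 / (Fintype.card J : ℝ)) *
        V.h s γ.1 (γ.2.2 j) a.2 y * ∑ j', v s' γ.1 (γ.2.1 a'.1) (γ.2.2 j') a'.2 y)] at h
    simp only [← hf, if_true, one_mul]
    refine h.trans (le_add_of_nonneg_left ?_)
    refine mul_nonneg (by positivity) (Finset.sum_nonneg fun y _ => mul_nonneg ?_ ?_)
    · exact Finset.sum_nonneg fun _ _ => Finset.sum_nonneg fun _ _ => Finset.sum_nonneg fun _ _ =>
        Finset.sum_nonneg fun _ _ => hV.joint0 ..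
    · exact Finset.sum_nonneg fun _ _ => Finset.sum_nonneg fun _ _ => Finset.sum_nonneg fun _ _ =>
        Finset.sum_nonneg fun _ _ => mul_nonneg (mul_nonneg (mul_nonneg (mul_nonneg (hV.q00 _)
          (hV.q10 _ _)) (hV.q20 _ _)) (hV.qX0 ..)) (hv ..)
  · have h := hV.gamma_diff (I := I) (J := J) s s' v
    rw [← hV.avg_diff hf (fun γ γ' a a' => ∑ j, ∑ y, (1 / (Fintype.card J : ℝ)) *
        V.h s γ.1 (γ.2.2 j) a.2 y * ∑ j', v s' γ'.1 (γ'.2.1 a'.1) (γ'.2.2 j') a'.2 y)] at h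
    simp only [if_neg hf, zero_mul, mul_zero, add_zero]
    exact h.le

end View

namespace View

variable {S K W0 W1 W2 X Y : Type*} [Fintype S] [Fintype K] [Fintype W0] [Fintype W1] [Fintype W2]
  [Fintype X] [Fintype Y] [DecidableEq S] [DecidableEq K] [DecidableEq W0] [DecidableEq W1]
  [DecidableEq W2] [DecidableEq X] [DecidableEq Y]
  {I J : Type*} [Fintype I] [Fintype J] [DecidableEq I] [DecidableEq J] [Nonempty I] [Nonempty J]

/-- Law of the output of one own letter, with the input averaged out. -/
def R (V : View S K W0 W1 W2 X Y) (s : S) (w0 : W0) (a : W1) (b : W2) (y : Y) : ℝ :=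
  ∑ x, V.qX s a w0 x * V.h s w0 b x y

theorem Mb_eq_R (V : View S K W0 W1 W2 X Y) (k : K) (w0 : W0) (a : W1) (b : W2) (y : Y) :
    V.Mb k w0 a b y = ∑ s, (if V.f s = k then 1 else 0) *
      (V.q0 w0 * V.q1 w0 a * V.q2 w0 b * V.R s w0 a b y) := by
  unfold Mb R joint
  refine Finset.sum_congr rfl fun s _ => ?_
  split_ifs
  · simp only [Finset.mul_sum]
    refine Finset.sum_congr rfl fun s _ => ?_
    ring
  · simp

/-- Total weight of the pairs `(s, s')` whose competitor `s'` passes `v`, for the four ways of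
sharing cells. -/
theorem sum_pairs (V : View S K W0 W1 W2 X Y) (v : S → W0 → W1 → W2 → X → Y → ℝ)
    (N : S → W0 → W1 → W2 → Y → ℝ)
    (hN : ∀ s w0 a b y, N s w0 a b y = ∑ x, V.qX s a w0 x * v s w0 a b x y)
    (Φ : S → S → W0 → W1 → W1 → W2 → W2 → ℝ)
    (hΦ : ∀ s s' w0 a a' b b', Φ s s' w0 a a' b b' = ∑ y, V.R s w0 a b y * N s' w0 a' b' y) :
    (∑ s, ∑ s', ((if V.f s = V.f s' then 1 else 0) *
        (∑ w0, V.q0 w0 * ∑ a, V.q1 w0 a * ∑ b, V.q2 w0 b * Φ s s' w0 a a b b))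
      = ∑ s, ∑ w0, ∑ w1, ∑ w2, ∑ x, ∑ y, V.Q 1 s w0 w1 w2 x y * v s w0 w1 w2 x y) ∧
    (∑ s, ∑ s', ((if V.f s = V.f s' then 1 else 0) *
        (∑ w0, V.q0 w0 * ∑ a, ∑ a', V.q1 w0 a * V.q1 w0 a' * ∑ b, V.q2 w0 b * Φ s s' w0 a a' b b))
      = ∑ s, ∑ w0, ∑ w1, ∑ w2, ∑ x, ∑ y, V.Q 2 s w0 w1 w2 x y * v s w0 w1 w2 x y) ∧
    (∑ s, ∑ s', ((if V.f s = V.f s' then 1 else 0) *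
        (∑ w0, V.q0 w0 * ∑ a, V.q1 w0 a * ∑ b, ∑ b', V.q2 w0 b * V.q2 w0 b' * Φ s s' w0 a a b b'))
      = ∑ s, ∑ w0, ∑ w1, ∑ w2, ∑ x, ∑ y, V.Q 3 s w0 w1 w2 x y * v s w0 w1 w2 x y) ∧
    (∑ s, ∑ s', ((if V.f s = V.f s' then 1 else 0) *
        (∑ w0, V.q0 w0 * ∑ a, ∑ a', V.q1 w0 a * V.q1 w0 a' *
          ∑ b, ∑ b', V.q2 w0 b * V.q2 w0 b' * Φ s s' w0 a a' b b'))
      = ∑ s, ∑ w0, ∑ w1, ∑ w2, ∑ x, ∑ y, V.Q 4 s w0 w1 w2 x y * v s w0 w1 w2 x y) := by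
  have hQ : ∀ (s : S) (w0 : W0) (a : W1) (b : W2) (m : Y → ℝ) (r : ℝ),
      ∑ x, ∑ y, r * V.qX s a w0 x * m y * v s w0 a b x y = ∑ y, r * m y * N s w0 a b y := by
    intro s w0 a b m r
    rw [Finset.sum_comm]
    refine Finset.sum_congr rfl fun y _ => ?_
    rw [hN, Finset.mul_sum]
    exact Finset.sum_congr rfl fun x _ => by ring
  have hQ1 := fun s w0 a b => hQ s w0 a b (fun y => V.Mb (V.f s) w0 a b y) 1
  have hQ2 := fun s w0 a b => hQ s w0 a b (fun y => V.Mc (V.f s) w0 b y) (V.q1 w0 a)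
  have hQ3 := fun s w0 a b => hQ s w0 a b (fun y => V.Md (V.f s) w0 a y) (V.q2 w0 b)
  have hQ4 := fun s w0 a b => hQ s w0 a b (fun y => V.Me (V.f s) w0 y) (V.q1 w0 a * V.q2 w0 b)
  simp only [one_mul] at hQ1
  have d1 : ∀ s w0 w1 w2 x y, V.Q 1 s w0 w1 w2 x y = V.qX s w1 w0 x * V.Mb (V.f s) w0 w1 w2 y :=
    fun _ _ _ _ _ _ => rfl
  have d2 : ∀ s w0 w1 w2 x y, V.Q 2 s w0 w1 w2 x y =
    V.q1 w0 w1 * V.qX s w1 w0 x * V.Mc (V.f s) w0 w2 y := fun _ _ _ _ _ _ => rfl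
  have d3 : ∀ s w0 w1 w2 x y, V.Q 3 s w0 w1 w2 x y =
    V.q2 w0 w2 * V.qX s w1 w0 x * V.Md (V.f s) w0 w1 y := fun _ _ _ _ _ _ => rfl
  have d4 : ∀ s w0 w1 w2 x y, V.Q 4 s w0 w1 w2 x y =
    V.q1 w0 w1 * V.q2 w0 w2 * V.qX s w1 w0 x * V.Me (V.f s) w0 y := fun _ _ _ _ _ _ => rfl
  simp only [d1, d2, d3, d4, hQ1, hQ2, hQ3, hQ4]
  clear d1 d2 d3 d4 hQ1 hQ2 hQ3 hQ4 hQ hN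
  refine ⟨?_, ?_, ?_, ?_⟩
  all_goals
    rw [Finset.sum_comm]
    refine Finset.sum_congr rfl fun s' _ => ?_
    simp only [hΦ, Mc, Md, Me, Mb_eq_R]
    simp only [Finset.mul_sum, Finset.sum_mul, ← Fintype.sum_prod_type']
  -- `(s, w0, a, b, y)` against `(w0, a, b, y, s)`
  · refine Fintype.sum_equiv
      ⟨fun p => (p.2.1, p.2.2.1, p.2.2.2.1, p.2.2.2.2, p.1),
        fun p => (p.2.2.2.2, p.1, p.2.1, p.2.2.1, p.2.2.2.1),
        fun _ => rfl, fun _ => rfl⟩ _ _ fun p => ?_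
    simp only [Equiv.coe_fn_mk]
    ring
  -- `(s, w0, a, a', b, y)` against `(w0, a', b, y, a, s)`
  · refine Fintype.sum_equiv
      ⟨fun p => (p.2.1, p.2.2.2.1, p.2.2.2.2.1, p.2.2.2.2.2, p.2.2.1, p.1),
        fun p => (p.2.2.2.2.2, p.1, p.2.2.2.2.1, p.2.1, p.2.2.1, p.2.2.2.1),
        fun _ => rfl, fun _ => rfl⟩ _ _ fun p => ?_
    simp only [Equiv.coe_fn_mk]
    ring
  -- `(s, w0, a, b, b', y)` against `(w0, a, b', y, b, s)`
  · refine Fintype.sum_equiv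
      ⟨fun p => (p.2.1, p.2.2.1, p.2.2.2.2.1, p.2.2.2.2.2, p.2.2.2.1, p.1),
        fun p => (p.2.2.2.2.2, p.1, p.2.1, p.2.2.2.2.1, p.2.2.1, p.2.2.2.1),
        fun _ => rfl, fun _ => rfl⟩ _ _ fun p => ?_
    simp only [Equiv.coe_fn_mk]
    ring
  -- `(s, w0, a, a', b, b', y)` against `(w0, a', b', y, a, b, s)`
  · refine Fintype.sum_equiv
      ⟨fun p => (p.2.1, p.2.2.2.1, p.2.2.2.2.2.1, p.2.2.2.2.2.2, p.2.2.1, p.2.2.2.2.1, p.1),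
        fun p => (p.2.2.2.2.2.2, p.1, p.2.2.2.2.1, p.2.1, p.2.2.2.2.2.1, p.2.2.1, p.2.2.2.1),
        fun _ => rfl, fun _ => rfl⟩ _ _ fun p => ?_
    simp only [Equiv.coe_fn_mk]
    ring

/-- Total weight of the pairs `(s, s')` with unrelated common parts. -/
theorem sum_pairs_diff (V : View S K W0 W1 W2 X Y) (v : S → W0 → W1 → W2 → X → Y → ℝ) :
    ∑ s, ∑ s', (∑ y, (∑ w0, ∑ w1, ∑ w2, ∑ x, V.joint s w0 w1 w2 x y) *
        ∑ w0, ∑ w1, ∑ w2, ∑ x, V.q0 w0 * V.q1 w0 w1 * V.q2 w0 w2 * V.qX s' w1 w0 x *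
          v s' w0 w1 w2 x y)
      = ∑ s, ∑ w0, ∑ w1, ∑ w2, ∑ x, ∑ y, V.Q 0 s w0 w1 w2 x y * v s w0 w1 w2 x y := by
  have d0 : ∀ s w0 w1 w2 x y, V.Q 0 s w0 w1 w2 x y =
    V.q0 w0 * V.q1 w0 w1 * V.q2 w0 w2 * V.qX s w1 w0 x * V.Ma y := fun _ _ _ _ _ _ => rfl
  have e : ∀ y, V.Ma y = ∑ s, ∑ w0, ∑ w1, ∑ w2, ∑ x, V.joint s w0 w1 w2 x y := fun _ => rfl
  rw [Finset.sum_comm]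
  refine Finset.sum_congr rfl fun s' _ => ?_
  rw [Finset.sum_comm]
  simp only [← Finset.sum_mul, ← e, d0]
  simp only [Finset.mul_sum, ← Fintype.sum_prod_type']
  -- `(y, w0, w1, w2, x)` against `(w0, w1, w2, x, y)`
  refine Fintype.sum_equiv
    ⟨fun p => (p.2.1, p.2.2.1, p.2.2.2.1, p.2.2.2.2, p.1),
      fun p => (p.2.2.2.2, p.1, p.2.1, p.2.2.1, p.2.2.2.1),
      fun _ => rfl, fun _ => rfl⟩ _ _ fun p => ?_
  simp only [Equiv.coe_fn_mk]
  ring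

end View

namespace View

variable {S K W0 W1 W2 X Y : Type*} [Fintype S] [Fintype K] [Fintype W0] [Fintype W1] [Fintype W2]
  [Fintype X] [Fintype Y] [DecidableEq S] [DecidableEq K] [DecidableEq W0] [DecidableEq W1]
  [DecidableEq W2] [DecidableEq X] [DecidableEq Y]

open Classical in
/-- One-shot bound for the decoder that looks for the unique source letter passing the test `A`
with some interfering cell. -/
theorem Valid.one_shot (I J : Type*) [Fintype I] [Fintype J] [DecidableEq I] [DecidableEq J]
    [Nonempty I] [Nonempty J] [Nonempty S]
    {V : View S K W0 W1 W2 X Y} (hV : V.Valid)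
    (A : S → W0 → W1 → W2 → X → Y → Prop) :
    ∃ φ : (K → W0 × (I → W1) × (J → W2)) → (S → I × X) → Y → S, V.err φ ≤
      (∑ s, ∑ w0, ∑ w1, ∑ w2, ∑ x, ∑ y, V.joint s w0 w1 w2 x y *
        if A s w0 w1 w2 x y then 0 else 1) +
      ∑ c : Fin 5, ![(Fintype.card J : ℝ), 1 / Fintype.card I, 1,
          Fintype.card J / Fintype.card I, Fintype.card J] c *
        ∑ s, ∑ w0, ∑ w1, ∑ w2, ∑ x, ∑ y, V.Q c s w0 w1 w2 x y *
          if A s w0 w1 w2 x y then 1 else 0 := by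
  have hJ : (Fintype.card J : ℝ) ≠ 0 := by simp
  let G (c : K → W0 × (I → W1) × (J → W2)) (a : S → I × X) (y : Y) (s : S) : Prop :=
    ∃ j, A s (c (V.f s)).1 ((c (V.f s)).2.1 (a s).1) ((c (V.f s)).2.2 j) (a s).2 y
  refine ⟨fun c a y => Classical.epsilon (G c a y), ?_⟩
  set v : S → W0 → W1 → W2 → X → Y → ℝ := fun s w0 w1 w2 x y =>
    if A s w0 w1 w2 x y then 1 else 0 with hvdef
  have hv : ∀ s w0 w1 w2 x y, 0 ≤ v s w0 w1 w2 x y := by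
    intros; simp only [hvdef]; split_ifs <;> norm_num
  -- an error forces the true letter to fail the test or a competitor to pass it
  have key : ∀ (c : K → W0 × (I → W1) × (J → W2)) (a : S → I × X) (y : Y) (s : S) (j : J),
      (if Classical.epsilon (G c a y) = s then (0 : ℝ) else 1) ≤
      (if A s (c (V.f s)).1 ((c (V.f s)).2.1 (a s).1) ((c (V.f s)).2.2 j) (a s).2 y then 0 else 1)
      + ∑ s', if s = s' then 0 else ∑ j', v s' (c (V.f s')).1 ((c (V.f s')).2.1 (a s').1)
          ((c (V.f s')).2.2 j') (a s').2 y := by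
    intro c a y s j
    have hn : ∀ s', 0 ≤ (if s = s' then 0 else ∑ j', v s' (c (V.f s')).1
        ((c (V.f s')).2.1 (a s').1) ((c (V.f s')).2.2 j') (a s').2 y) := by
      intro s'
      split_ifs
      · exact le_rfl
      · exact Finset.sum_nonneg fun _ _ => hv ..
    have hn' := Finset.sum_nonneg fun s' (_ : s' ∈ Finset.univ) => hn s'
    by_cases h1 : Classical.epsilon (G c a y) = s
    · rw [if_pos h1]
      refine add_nonneg ?_ hn'
      split_ifs <;> norm_num
    · rw [if_neg h1]
      by_cases h2 : A s (c (V.f s)).1 ((c (V.f s)).2.1 (a s).1) ((c (V.f s)).2.2 j) (a s).2 y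
      · rw [if_pos h2, zero_add]
        obtain ⟨j', hj'⟩ : G c a y (Classical.epsilon (G c a y)) :=
          Classical.epsilon_spec (p := G c a y) ⟨s, j, h2⟩
        refine le_trans ?_ (Finset.single_le_sum (fun s' _ => hn s')
          (Finset.mem_univ (Classical.epsilon (G c a y))))
        rw [if_neg (Ne.symm h1)]
        refine le_trans ?_ (Finset.single_le_sum (fun j' _ => hv ..) (Finset.mem_univ j'))
        simp only [hvdef]
        rw [if_pos hj']
      · rw [if_neg h2]
        linarith
  -- the two contributions
  let T1 (s : S) (γ : W0 × (I → W1) × (J → W2)) (a : I × X) : ℝ :=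
    ∑ j, ∑ y, (1 / (Fintype.card J : ℝ)) * V.h s γ.1 (γ.2.2 j) a.2 y *
      if A s γ.1 (γ.2.1 a.1) (γ.2.2 j) a.2 y then 0 else 1
  let T2 (s s' : S) (c : K → W0 × (I → W1) × (J → W2)) (a : S → I × X) : ℝ :=
    ∑ j, ∑ y, (1 / (Fintype.card J : ℝ)) *
        V.h s (c (V.f s)).1 ((c (V.f s)).2.2 j) (a s).2 y *
        ∑ j', v s' (c (V.f s')).1 ((c (V.f s')).2.1 (a s').1) ((c (V.f s')).2.2 j') (a s').2 y
  have step : V.err (fun c a y => Classical.epsilon (G c a y)) ≤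
      ∑ s, V.avg (fun c a => T1 s (c (V.f s)) (a s)) +
        ∑ s, ∑ s', if s = s' then 0 else V.avg (T2 s s') := by
    calc V.err (fun c a y => Classical.epsilon (G c a y))
        ≤ V.avg (fun c a => ∑ s, (T1 s (c (V.f s)) (a s) +
            ∑ s', if s = s' then 0 else T2 s s' c a)) := by
          refine hV.avg_mono fun c a => Finset.sum_le_sum fun s _ => ?_
          have e : ∀ s', (if s = s' then 0 else T2 s s' c a) = ∑ j, ∑ y,
              (1 / (Fintype.card J : ℝ)) * V.h s (c (V.f s)).1 ((c (V.f s)).2.2 j) (a s).2 y *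
              if s = s' then 0 else ∑ j', v s' (c (V.f s')).1 ((c (V.f s')).2.1 (a s').1)
                ((c (V.f s')).2.2 j') (a s').2 y := by
            intro s'
            split_ifs
            · simp
            · rfl
          simp only [e, T1]
          rw [Finset.sum_comm (s := (Finset.univ : Finset S)), ← Finset.sum_add_distrib]
          refine Finset.sum_le_sum fun j _ => ?_
          rw [Finset.sum_comm (s := (Finset.univ : Finset S)), ← Finset.sum_add_distrib]
          refine Finset.sum_le_sum fun y _ => ?_
          rw [← Finset.mul_sum, ← mul_add]
          exact mul_le_mul_of_nonneg_left (key c a y s j)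
            (mul_nonneg (by positivity) (hV.h0 ..))
      _ = _ := by
          rw [V.avg_sum, ← Finset.sum_add_distrib]
          refine Finset.sum_congr rfl fun s _ => ?_
          rw [V.avg_add]
          congr 1
          rw [V.avg_sum (fun s' c a => if s = s' then 0 else T2 s s' c a)]
          refine Finset.sum_congr rfl fun s' _ => ?_
          split_ifs
          · simp [avg]
          · rfl
  refine step.trans (add_le_add (le_of_eq ?_) ?_)
  · refine Finset.sum_congr rfl fun s _ => ?_
    rw [hV.avg_one s (T1 s)]
    have := hV.gamma_one (I := I) (J := J) s (fun w0 w1 w2 x => ∑ y,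
      (1 / (Fintype.card J : ℝ)) * V.h s w0 w2 x y * if A s w0 w1 w2 x y then 0 else 1)
    refine this.trans ?_
    simp only [Finset.mul_sum, joint]
    refine Finset.sum_congr rfl fun _ _ => Finset.sum_congr rfl fun _ _ =>
      Finset.sum_congr rfl fun _ _ => Finset.sum_congr rfl fun _ _ =>
      Finset.sum_congr rfl fun _ _ => ?_
    field_simp
  · let N (s : S) (w0 : W0) (a : W1) (b : W2) (y : Y) : ℝ :=
      ∑ x, V.qX s a w0 x * v s w0 a b x y
    let Φ (s s' : S) (w0 : W0) (a a' : W1) (b b' : W2) : ℝ :=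
      ∑ y, V.R s w0 a b y * N s' w0 a' b' y
    have hΦ : ∀ s s' w0 a a' b b', Φ s s' w0 a a' b b' = ∑ x, ∑ x', ∑ y,
        V.qX s a w0 x * V.qX s' a' w0 x' * V.h s w0 b x y * v s' w0 a' b' x' y := by
      intro s s' w0 a a' b b'
      simp only [Φ, N, R, Finset.sum_mul_sum]
      rw [Finset.sum_comm]
      refine Finset.sum_congr rfl fun x _ => ?_
      rw [Finset.sum_comm]
      refine Finset.sum_congr rfl fun x' _ => Finset.sum_congr rfl fun y _ => ?_
      ring
    have hN0 : ∀ s w0 a b y, 0 ≤ N s w0 a b y := fun s w0 a b y =>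
      Finset.sum_nonneg fun _ _ => mul_nonneg (hV.qX0 ..) (hv ..)
    have hΦ0 : ∀ s s' w0 a a' b b', 0 ≤ Φ s s' w0 a a' b b' := fun s s' w0 a a' b b' =>
      Finset.sum_nonneg fun _ _ => mul_nonneg (Finset.sum_nonneg fun _ _ =>
        mul_nonneg (hV.qX0 ..) (hV.h0 ..)) (hN0 ..)
    obtain ⟨k1, k2, k3, k4⟩ := V.sum_pairs v N (fun _ _ _ _ _ => rfl) Φ
      (fun _ _ _ _ _ _ _ => rfl)
    have k0 := V.sum_pairs_diff v
    simp only [Fin.sum_univ_five]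
    have hm : ∀ a b c d e : ℝ, (![a, b, c, d, e] 0 = a ∧ ![a, b, c, d, e] 1 = b ∧
        ![a, b, c, d, e] 2 = c ∧ ![a, b, c, d, e] 3 = d ∧ ![a, b, c, d, e] 4 = e) :=
      fun _ _ _ _ _ => ⟨rfl, rfl, rfl, rfl, rfl⟩
    simp only [hm]
    rw [← k0, ← k1, ← k2, ← k3, ← k4, one_mul]
    simp only [Finset.mul_sum (Finset.univ : Finset S), ← Finset.sum_add_distrib]
    refine Finset.sum_le_sum fun s _ => Finset.sum_le_sum fun s' _ => ?_
    by_cases hs : s = s'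
    · rw [if_pos hs]
      have q0 := hV.q00
      have q1 := hV.q10
      have q2 := hV.q20
      have hi : (0 : ℝ) ≤ if V.f s = V.f s' then 1 else 0 := by split_ifs <;> norm_num
      have n0 : 0 ≤ ∑ y, (∑ w0, ∑ w1, ∑ w2, ∑ x, V.joint s w0 w1 w2 x y) *
          ∑ w0, ∑ w1, ∑ w2, ∑ x, V.q0 w0 * V.q1 w0 w1 * V.q2 w0 w2 * V.qX s' w1 w0 x *
          v s' w0 w1 w2 x y := by
        refine Finset.sum_nonneg fun y _ => mul_nonneg ?_ ?_
        · exact Finset.sum_nonneg fun _ _ => Finset.sum_nonneg fun _ _ =>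
            Finset.sum_nonneg fun _ _ => Finset.sum_nonneg fun _ _ => hV.joint0 ..
        · exact Finset.sum_nonneg fun _ _ => Finset.sum_nonneg fun _ _ =>
            Finset.sum_nonneg fun _ _ =>
            Finset.sum_nonneg fun _ _ => mul_nonneg (mul_nonneg (mul_nonneg (mul_nonneg (hV.q00 _)
            (hV.q10 _ _)) (hV.q20 _ _)) (hV.qX0 ..)) (hv ..)
      have n1 : ∀ F : W0 → W1 → W1 → W2 → W2 → ℝ, (∀ w a a' b b', 0 ≤ F w a a' b b') →
          0 ≤ ∑ w0, V.q0 w0 * ∑ a, V.q1 w0 a * ∑ b, V.q2 w0 b * F w0 a a b b :=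
        fun F hF => Finset.sum_nonneg fun w _ => mul_nonneg (q0 _) <|
          Finset.sum_nonneg fun a _ => mul_nonneg (q1 _ _) <|
          Finset.sum_nonneg fun b _ => mul_nonneg (q2 _ _) (hF ..)
      have n2 : ∀ F : W0 → W1 → W1 → W2 → W2 → ℝ, (∀ w a a' b b', 0 ≤ F w a a' b b') →
          0 ≤ ∑ w0, V.q0 w0 * ∑ a, ∑ a', V.q1 w0 a * V.q1 w0 a' * ∑ b, V.q2 w0 b * F w0 a a' b b :=
        fun F hF => Finset.sum_nonneg fun w _ => mul_nonneg (q0 _) <|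
          Finset.sum_nonneg fun a _ => Finset.sum_nonneg fun a' _ =>
          mul_nonneg (mul_nonneg (q1 _ _) (q1 _ _)) <|
          Finset.sum_nonneg fun b _ => mul_nonneg (q2 _ _) (hF ..)
      have n3 : ∀ F : W0 → W1 → W1 → W2 → W2 → ℝ, (∀ w a a' b b', 0 ≤ F w a a' b b') →
          0 ≤ ∑ w0, V.q0 w0 * ∑ a, V.q1 w0 a * ∑ b, ∑ b', V.q2 w0 b * V.q2 w0 b' * F w0 a a b b' :=
        fun F hF => Finset.sum_nonneg fun w _ => mul_nonneg (q0 _) <|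
          Finset.sum_nonneg fun a _ => mul_nonneg (q1 _ _) <|
          Finset.sum_nonneg fun b _ => Finset.sum_nonneg fun b' _ =>
          mul_nonneg (mul_nonneg (q2 _ _) (q2 _ _)) (hF ..)
      have n4 : ∀ F : W0 → W1 → W1 → W2 → W2 → ℝ, (∀ w a a' b b', 0 ≤ F w a a' b b') →
          0 ≤ ∑ w0, V.q0 w0 * ∑ a, ∑ a', V.q1 w0 a * V.q1 w0 a' *
            ∑ b, ∑ b', V.q2 w0 b * V.q2 w0 b' * F w0 a a' b b' :=
        fun F hF => Finset.sum_nonneg fun w _ => mul_nonneg (q0 _) <|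
          Finset.sum_nonneg fun a _ => Finset.sum_nonneg fun a' _ =>
          mul_nonneg (mul_nonneg (q1 _ _) (q1 _ _)) <|
          Finset.sum_nonneg fun b _ => Finset.sum_nonneg fun b' _ =>
          mul_nonneg (mul_nonneg (q2 _ _) (q2 _ _)) (hF ..)
      have m1 := n1 (Φ s s') (hΦ0 s s')
      have m2 := n2 (Φ s s') (hΦ0 s s')
      have m3 := n3 (Φ s s') (hΦ0 s s')
      have m4 := n4 (Φ s s') (hΦ0 s s')
      exact add_nonneg (add_nonneg (add_nonneg (add_nonneg (mul_nonneg (by positivity) n0)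
        (mul_nonneg (by positivity) (mul_nonneg hi m1))) (mul_nonneg hi m2))
        (mul_nonneg (by positivity) (mul_nonneg hi m3)))
        (mul_nonneg (by positivity) (mul_nonneg hi m4))
    · rw [if_neg hs]
      refine (hV.pair_le (I := I) (J := J) hs v hv (Φ s s') (hΦ s s')).trans (le_of_eq ?_)
      ring

end View

/-! ### Long blocks -/

/-- Sums over six words against sums over words of six-tuples. -/
theorem sum_unzip {A B C D E F : Type*} [Fintype A] [Fintype B] [Fintype C] [Fintype D] [Fintype E]
    [Fintype F] {n : ℕ} (G : (Fin n → A) → (Fin n → B) → (Fin n → C) → (Fin n → D) →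
      (Fin n → E) → (Fin n → F) → ℝ) :
    ∑ a, ∑ b, ∑ c, ∑ d, ∑ e, ∑ f, G a b c d e f
      = ∑ u : Fin n → A × B × C × D × E × F, G (fun i => (u i).1) (fun i => (u i).2.1)
        (fun i => (u i).2.2.1) (fun i => (u i).2.2.2.1) (fun i => (u i).2.2.2.2.1)
        (fun i => (u i).2.2.2.2.2) := by
  simp only [← Fintype.sum_prod_type']
  exact Fintype.sum_equiv
    ⟨fun p i => (p.1 i, p.2.1 i, p.2.2.1 i, p.2.2.2.1 i, p.2.2.2.2.1 i, p.2.2.2.2.2 i),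
      fun u => (fun i => (u i).1, fun i => (u i).2.1, fun i => (u i).2.2.1,
        fun i => (u i).2.2.2.1, fun i => (u i).2.2.2.2.1, fun i => (u i).2.2.2.2.2),
      fun _ => rfl, fun _ => rfl⟩ _ _ fun p => rfl

namespace View

variable {S K W0 W1 W2 X Y : Type*} [Fintype S] [Fintype K] [Fintype W0] [Fintype W1] [Fintype W2]
  [Fintype X] [Fintype Y] [DecidableEq S] [DecidableEq K] [DecidableEq W0] [DecidableEq W1]
  [DecidableEq W2] [DecidableEq X] [DecidableEq Y]

theorem Valid.joint_total {V : View S K W0 W1 W2 X Y} (hV : V.Valid) :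
    ∑ s, ∑ w0, ∑ w1, ∑ w2, ∑ x, ∑ y, V.joint s w0 w1 w2 x y = 1 := by
  simp only [joint, ← Finset.mul_sum, hV.h1]
  simp only [← Finset.sum_mul, ← Finset.mul_sum, hV.qX1, mul_one, hV.q21, hV.q11, hV.q01,
    one_mul, hV.pS1]

/-- The joint law as a function on tuples. -/
def P (V : View S K W0 W1 W2 X Y) (u : S × W0 × W1 × W2 × X × Y) : ℝ :=
  V.joint u.1 u.2.1 u.2.2.1 u.2.2.2.1 u.2.2.2.2.1 u.2.2.2.2.2

/-- The competitor weights as functions on tuples. -/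
def QU (V : View S K W0 W1 W2 X Y) (c : Fin 5) (u : S × W0 × W1 × W2 × X × Y) : ℝ :=
  V.Q c u.1 u.2.1 u.2.2.1 u.2.2.2.1 u.2.2.2.2.1 u.2.2.2.2.2

/-- Minus the divergence of the competitor weight from the joint law. -/
noncomputable def ell (V : View S K W0 W1 W2 X Y) (c : Fin 5) : ℝ :=
  ∑ u, V.P u * Real.logb 2 (V.QU c u / V.P u)

/-- If every exponent `r c` of the number of competitors of kind `c` is below the corresponding
divergence, then the random code has vanishing error probability. -/
theorem Valid.block [Nonempty S] {V : View S K W0 W1 W2 X Y} (hV : V.Valid) (r : Fin 5 → ℝ)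
    (hr : ∀ c, r c + V.ell c < 0) (ε : ℝ) (hε : 0 < ε) :
    ∃ n₀ : ℕ, ∀ n ≥ n₀, ∀ (I J : Type) [Fintype I] [Fintype J] [DecidableEq I]
      [DecidableEq J] [Nonempty I] [Nonempty J],
      (∀ c, ![(Fintype.card J : ℝ), 1 / Fintype.card I, 1,
          Fintype.card J / Fintype.card I, Fintype.card J] c ≤ 2 * 2 ^ (n * r c : ℝ)) →
      ∃ φ : ((Fin n → K) → (Fin n → W0) × (I → Fin n → W1) × (J → Fin n → W2)) →
        ((Fin n → S) → I × (Fin n → X)) → (Fin n → Y) → (Fin n → S), (V.pow n).err φ ≤ ε := by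
  classical
  obtain ⟨τ, hτ, hrτ⟩ : ∃ τ > 0, ∀ c, (r c + τ) + V.ell c < 0 := by
    obtain ⟨c₀, hc₀⟩ := Finite.exists_max fun c => r c + V.ell c
    refine ⟨-(r c₀ + V.ell c₀) / 2, by linarith [hr c₀], fun c => ?_⟩
    linarith [hr c₀, hc₀ c]
  have hch := fun c => chernoff V.P (V.QU c) (fun u => hV.joint0 ..) (fun u => hV.Q0 ..)
    (by simpa [P, Fintype.sum_prod_type] using hV.joint_total) (r c + τ) (hrτ c)
  choose ρ hρ0 hρ1 hρ using hch
  have hlim : Filter.Tendsto (fun n : ℕ => (∑ c, ρ c ^ n) + 10 * ((2 : ℝ) ^ (-τ)) ^ n)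
      Filter.atTop (nhds 0) := by
    have h2 : (2 : ℝ) ^ (-τ) < 1 := Real.rpow_lt_one_of_one_lt_of_neg (by norm_num) (by linarith)
    have := (tendsto_finsetSum Finset.univ fun c _ =>
      tendsto_pow_atTop_nhds_zero_of_lt_one (hρ0 c) (hρ1 c)).add
      ((tendsto_pow_atTop_nhds_zero_of_lt_one (by positivity : (0 : ℝ) ≤ 2 ^ (-τ)) h2).const_mul 10)
    simpa using this
  obtain ⟨n₀, hn₀⟩ := Filter.eventually_atTop.1 (hlim.eventually (ge_mem_nhds hε))
  refine ⟨n₀, fun n hn I J _ _ _ _ _ _ hm => ?_⟩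
  obtain ⟨A, hA⟩ : ∃ A : (Fin n → S) → (Fin n → W0) → (Fin n → W1) → (Fin n → W2) → (Fin n → X) →
      (Fin n → Y) → Prop, ∀ s w0 w1 w2 x y, A s w0 w1 w2 x y ↔ ∀ c,
      (2 : ℝ) ^ (n * (r c + τ) : ℝ) * (V.pow n).Q c s w0 w1 w2 x y ≤
        (V.pow n).joint s w0 w1 w2 x y := ⟨_, fun _ _ _ _ _ _ => Iff.rfl⟩
  obtain ⟨φ, hφ⟩ := (hV.pow n).one_shot I J A
  refine ⟨φ, hφ.trans (le_trans ?_ (hn₀ n hn))⟩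
  refine add_le_add ?_ ?_
  · -- the transmitted tuple fails one of the five tests
    simp only [joint_pow, Q_pow] at hA ⊢
    rw [sum_unzip]
    calc _ ≤ ∑ u : Fin n → S × W0 × W1 × W2 × X × Y, (∏ i, V.P (u i)) * ∑ c : Fin 5,
          (if (2 : ℝ) ^ (n * (r c + τ) : ℝ) * ∏ i, V.QU c (u i) ≤ ∏ i, V.P (u i) then 0 else 1) := by
          refine Finset.sum_le_sum fun u _ => mul_le_mul_of_nonneg_left ?_
            (Finset.prod_nonneg fun i _ => hV.joint0 ..)
          split_ifs with h
          · exact Finset.sum_nonneg fun c _ => by split_ifs <;> norm_num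
          · rw [hA] at h
            push Not at h
            obtain ⟨c, hc⟩ := h
            have h1 : (1 : ℝ) = if (2 : ℝ) ^ (n * (r c + τ) : ℝ) * ∏ i, V.QU c (u i) ≤
              ∏ i, V.P (u i) then 0 else 1 := (if_neg (not_le.2 hc)).symm
            refine h1.le.trans ?_
            exact Finset.single_le_sum (f := fun c => if (2 : ℝ) ^ (n * (r c + τ) : ℝ) *
              ∏ i, V.QU c (u i) ≤ ∏ i, V.P (u i) then (0 : ℝ) else 1)
              (fun c _ => by split_ifs <;> norm_num) (Finset.mem_univ c)
      _ = ∑ c : Fin 5, ∑ u : Fin n → S × W0 × W1 × W2 × X × Y, (∏ i, V.P (u i)) *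
          (if (2 : ℝ) ^ (n * (r c + τ) : ℝ) * ∏ i, V.QU c (u i) ≤ ∏ i, V.P (u i) then 0 else 1) := by
          simp only [Finset.mul_sum]
          rw [Finset.sum_comm]
      _ ≤ _ := Finset.sum_le_sum fun c _ => hρ c n
  · -- competitors
    have hc : ∀ c : Fin 5, ![(Fintype.card J : ℝ), 1 / Fintype.card I, 1,
          Fintype.card J / Fintype.card I, Fintype.card J] c *
        ∑ s, ∑ w0, ∑ w1, ∑ w2, ∑ x, ∑ y, (V.pow n).Q c s w0 w1 w2 x y *
          (if A s w0 w1 w2 x y then 1 else 0) ≤ 2 * ((2 : ℝ) ^ (-τ)) ^ n := by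
      intro c
      have h2 : ∑ s, ∑ w0, ∑ w1, ∑ w2, ∑ x, ∑ y, (V.pow n).Q c s w0 w1 w2 x y *
          (if A s w0 w1 w2 x y then (1 : ℝ) else 0)
          ≤ ((2 : ℝ) ^ (n * (r c + τ) : ℝ))⁻¹ *
            ∑ s, ∑ w0, ∑ w1, ∑ w2, ∑ x, ∑ y, (V.pow n).joint s w0 w1 w2 x y := by
        simp only [Finset.mul_sum]
        refine Finset.sum_le_sum fun s _ => Finset.sum_le_sum fun w0 _ =>
          Finset.sum_le_sum fun w1 _ => Finset.sum_le_sum fun w2 _ =>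
          Finset.sum_le_sum fun x _ => Finset.sum_le_sum fun y _ => ?_
        split_ifs with h
        · rw [mul_one, inv_mul_eq_div, le_div_iff₀' (by positivity)]
          exact (hA ..).1 h c
        · rw [mul_zero]
          exact mul_nonneg (by positivity) ((hV.pow n).joint0 ..)
      rw [(hV.pow n).joint_total, mul_one] at h2
      have h3 : 0 ≤ ((2 : ℝ) ^ (n * (r c + τ) : ℝ))⁻¹ := by positivity
      have h4 : 0 ≤ ![(Fintype.card J : ℝ), 1 / Fintype.card I, 1,
          Fintype.card J / Fintype.card I, Fintype.card J] c := by
        fin_cases c <;> simp <;> positivity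
      refine (mul_le_mul_of_nonneg_left h2 h4).trans
        ((mul_le_mul_of_nonneg_right (hm c) h3).trans (le_of_eq ?_))
      rw [mul_assoc, ← Real.rpow_neg (by norm_num), ← Real.rpow_add (by norm_num),
        ← Real.rpow_natCast, ← Real.rpow_mul (by norm_num)]
      congr 2
      ring
    refine (Finset.sum_le_sum fun c _ => hc c).trans (le_of_eq ?_)
    simp
    ring

end View

/-! ### Both decoders together -/

/-- Source, common part, auxiliary laws and channel. -/
structure Net (S T K W0 W1 W2 X1 X2 Y1 Y2 : Type*) where
  pST : S → T → ℝ
  f : S → K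
  g : T → K
  pW0 : W0 → ℝ
  pW1 : W0 → W1 → ℝ
  pW2 : W0 → W2 → ℝ
  pX1 : S → W1 → W0 → X1 → ℝ
  pX2 : T → W2 → W0 → X2 → ℝ
  chan : X1 → X2 → Y1 → Y2 → ℝ

namespace Net

variable {S T K W0 W1 W2 X1 X2 Y1 Y2 : Type*}
    [Fintype S] [Fintype T] [Fintype K] [Fintype W0] [Fintype W1] [Fintype W2]
    [Fintype X1] [Fintype X2] [Fintype Y1] [Fintype Y2]
    [DecidableEq S] [DecidableEq T] [DecidableEq K] [DecidableEq W0] [DecidableEq W1]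
    [DecidableEq W2] [DecidableEq X1] [DecidableEq X2] [DecidableEq Y1] [DecidableEq Y2]

/-- All weights are (conditional) probability distributions, and `K` is a common part. -/
structure Valid (N : Net S T K W0 W1 W2 X1 X2 Y1 Y2) : Prop where
  pST0 : ∀ s t, 0 ≤ N.pST s t
  pST1 : ∑ s, ∑ t, N.pST s t = 1
  common : ∀ s t, N.pST s t ≠ 0 → N.f s = N.g t
  pW00 : ∀ a, 0 ≤ N.pW0 a
  pW01 : ∑ a, N.pW0 a = 1
  pW10 : ∀ a b, 0 ≤ N.pW1 a b
  pW11 : ∀ a, ∑ b, N.pW1 a b = 1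
  pW20 : ∀ a b, 0 ≤ N.pW2 a b
  pW21 : ∀ a, ∑ b, N.pW2 a b = 1
  pX10 : ∀ s b a x, 0 ≤ N.pX1 s b a x
  pX11 : ∀ s b a, ∑ x, N.pX1 s b a x = 1
  pX20 : ∀ s b a x, 0 ≤ N.pX2 s b a x
  pX21 : ∀ s b a, ∑ x, N.pX2 s b a x = 1
  chan0 : ∀ x x' y y', 0 ≤ N.chan x x' y y'
  chan1 : ∀ x x', ∑ y, ∑ y', N.chan x x' y y' = 1

/-- The two users exchanged. -/
def swap (N : Net S T K W0 W1 W2 X1 X2 Y1 Y2) : Net T S K W0 W2 W1 X2 X1 Y2 Y1 where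
  pST t s := N.pST s t
  f := N.g
  g := N.f
  pW0 := N.pW0
  pW1 := N.pW2
  pW2 := N.pW1
  pX1 := N.pX2
  pX2 := N.pX1
  chan x2 x1 y2 y1 := N.chan x1 x2 y1 y2

theorem Valid.swap {N : Net S T K W0 W1 W2 X1 X2 Y1 Y2} (h : N.Valid) : N.swap.Valid where
  pST0 t s := h.pST0 s t
  pST1 := by rw [Finset.sum_comm]; exact h.pST1
  common t s hts := (h.common s t hts).symm
  pW00 := h.pW00
  pW01 := h.pW01
  pW10 := h.pW20
  pW11 := h.pW21
  pW20 := h.pW10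
  pW21 := h.pW11
  pX10 := h.pX20
  pX11 := h.pX21
  pX20 := h.pX10
  pX21 := h.pX11
  chan0 _ _ _ _ := h.chan0 _ _ _ _
  chan1 x2 x1 := by rw [Finset.sum_comm]; exact h.chan1 x1 x2

/-- The memoryless `n`-th extension. -/
def pow (N : Net S T K W0 W1 W2 X1 X2 Y1 Y2) (n : ℕ) :
    Net (Fin n → S) (Fin n → T) (Fin n → K) (Fin n → W0) (Fin n → W1) (Fin n → W2) (Fin n → X1)
      (Fin n → X2) (Fin n → Y1) (Fin n → Y2) where
  pST s t := ∏ i, N.pST (s i) (t i)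
  f s i := N.f (s i)
  g t i := N.g (t i)
  pW0 a := ∏ i, N.pW0 (a i)
  pW1 a b := ∏ i, N.pW1 (a i) (b i)
  pW2 a b := ∏ i, N.pW2 (a i) (b i)
  pX1 s b a x := ∏ i, N.pX1 (s i) (b i) (a i) (x i)
  pX2 t b a x := ∏ i, N.pX2 (t i) (b i) (a i) (x i)
  chan x x' y y' := ∏ i, N.chan (x i) (x' i) (y i) (y' i)

theorem Valid.pow {N : Net S T K W0 W1 W2 X1 X2 Y1 Y2} (h : N.Valid) (n : ℕ) :
    (N.pow n).Valid where
  pST0 s t := by simp only [Net.pow]; exact Finset.prod_nonneg fun i _ => h.pST0 _ _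
  pST1 := by
    simp only [Net.pow, ← prod_sum_fun (fun _ s => ∑ t, N.pST s t), ← prod_sum_fun, h.pST1,
      Finset.prod_const_one]
  common s t hst := by
    refine funext fun i => h.common _ _ fun h0 => hst (Finset.prod_eq_zero (Finset.mem_univ i) h0)
  pW00 _ := by simp only [Net.pow]; exact Finset.prod_nonneg fun i _ => h.pW00 _
  pW01 := by simp only [Net.pow, ← prod_sum_fun (fun _ => N.pW0), h.pW01, Finset.prod_const_one]
  pW10 _ _ := by simp only [Net.pow]; exact Finset.prod_nonneg fun i _ => h.pW10 _ _
  pW11 a := by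
    simp only [Net.pow, ← prod_sum_fun (fun i => N.pW1 (a i)), h.pW11, Finset.prod_const_one]
  pW20 _ _ := by simp only [Net.pow]; exact Finset.prod_nonneg fun i _ => h.pW20 _ _
  pW21 a := by
    simp only [Net.pow, ← prod_sum_fun (fun i => N.pW2 (a i)), h.pW21, Finset.prod_const_one]
  pX10 _ _ _ _ := by simp only [Net.pow]; exact Finset.prod_nonneg fun i _ => h.pX10 _ _ _ _
  pX11 s b a := by
    simp only [Net.pow, ← prod_sum_fun (fun i => N.pX1 (s i) (b i) (a i)), h.pX11,
      Finset.prod_const_one]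
  pX20 _ _ _ _ := by simp only [Net.pow]; exact Finset.prod_nonneg fun i _ => h.pX20 _ _ _ _
  pX21 s b a := by
    simp only [Net.pow, ← prod_sum_fun (fun i => N.pX2 (s i) (b i) (a i)), h.pX21,
      Finset.prod_const_one]
  chan0 _ _ _ _ := by simp only [Net.pow]; exact Finset.prod_nonneg fun i _ => h.chan0 _ _ _ _
  chan1 x x' := by
    simp only [Net.pow, ← prod_sum_fun (fun i y => ∑ y', N.chan (x i) (x' i) y y'),
      ← prod_sum_fun, h.chan1, Finset.prod_const_one]

/-- The system as decoder 1 sees it. -/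
def view (N : Net S T K W0 W1 W2 X1 X2 Y1 Y2) : View S K W0 W1 W2 X1 Y1 where
  f := N.f
  pS s := ∑ t, N.pST s t
  q0 := N.pW0
  q1 := N.pW1
  q2 := N.pW2
  qX := N.pX1
  h s w0 w2 x1 y1 := ∑ t, ∑ x2, N.pST s t * N.pX2 t w2 w0 x2 * ∑ y2, N.chan x1 x2 y1 y2

theorem Valid.view {N : Net S T K W0 W1 W2 X1 X2 Y1 Y2} (h : N.Valid) : N.view.Valid where
  pS0 s := Finset.sum_nonneg fun _ _ => h.pST0 _ _
  pS1 := h.pST1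
  q00 := h.pW00
  q01 := h.pW01
  q10 := h.pW10
  q11 := h.pW11
  q20 := h.pW20
  q21 := h.pW21
  qX0 := h.pX10
  qX1 := h.pX11
  h0 _ _ _ _ _ := Finset.sum_nonneg fun _ _ => Finset.sum_nonneg fun _ _ =>
    mul_nonneg (mul_nonneg (h.pST0 _ _) (h.pX20 _ _ _ _)) (Finset.sum_nonneg fun _ _ =>
      h.chan0 _ _ _ _)
  h1 s w0 w2 x1 := by
    simp only [Net.view]
    rw [Finset.sum_comm]
    refine Finset.sum_congr rfl fun t _ => ?_
    rw [Finset.sum_comm]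
    simp only [← Finset.mul_sum, h.chan1, h.pX21, mul_one]

theorem view_pow (N : Net S T K W0 W1 W2 X1 X2 Y1 Y2) (n : ℕ) :
    (N.pow n).view = N.view.pow n := by
  simp only [view, pow, View.pow, prod_sum_fun, Finset.prod_mul_distrib]

variable {I J : Type*} [Fintype I] [Fintype J] [DecidableEq I] [DecidableEq J] [Nonempty I]
  [Nonempty J]

/-- Error probability of the first decoder for given encoders, in one channel use. -/
def pe (N : Net S T K W0 W1 W2 X1 X2 Y1 Y2) (a : S → X1) (b : T → X2) (φ : Y1 → S) : ℝ :=
  ∑ s, ∑ t, ∑ y1, ∑ y2,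
    if φ y1 ≠ s then N.pST s t * N.chan (a s) (b t) y1 y2 else 0

/-- The same cloud from the point of view of the other user. -/
def flip (γ : W0 × (I → W1) × (J → W2)) : W0 × (J → W2) × (I → W1) := (γ.1, γ.2.2, γ.2.1)

/-- Expectation over the clouds and over the codewords of both users. -/
noncomputable def avg (N : Net S T K W0 W1 W2 X1 X2 Y1 Y2)
    (F : (K → W0 × (I → W1) × (J → W2)) → (S → I × X1) → (T → J × X2) → ℝ) : ℝ :=
  ∑ c : K → W0 × (I → W1) × (J → W2), (∏ k, N.view.qC (c k)) *
    ∑ a : S → I × X1, (∏ s, N.view.qA s (c (N.f s)) (a s)) *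
      ∑ b : T → J × X2, (∏ t, N.swap.view.qA t (flip (c (N.g t))) (b t)) * F c a b

theorem avg_add (N : Net S T K W0 W1 W2 X1 X2 Y1 Y2)
    (F G : (K → W0 × (I → W1) × (J → W2)) → (S → I × X1) → (T → J × X2) → ℝ) :
    N.avg (fun c a b => F c a b + G c a b) = N.avg F + N.avg G := by
  simp only [avg, mul_add, Finset.sum_add_distrib]

theorem avg_swap (N : Net S T K W0 W1 W2 X1 X2 Y1 Y2)
    (F : (K → W0 × (J → W2) × (I → W1)) → (T → J × X2) → (S → I × X1) → ℝ) :
    N.swap.avg F = N.avg (fun c a b => F (fun k => flip (c k)) b a) := by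
  unfold avg
  let ef : (W0 × (J → W2) × (I → W1)) ≃ (W0 × (I → W1) × (J → W2)) :=
    ⟨flip, flip, fun _ => rfl, fun _ => rfl⟩
  refine Fintype.sum_equiv (Equiv.arrowCongr (Equiv.refl K) ef) _ _ fun c => ?_
  have e : ∀ γ : W0 × (J → W2) × (I → W1), N.swap.view.qC γ = N.view.qC (flip γ) := by
    intro γ
    simp only [View.qC, view, swap, flip]
    ring
  simp only [e]
  refine congrArg₂ (· * ·) rfl ?_
  simp only [Finset.mul_sum]
  rw [Finset.sum_comm]
  refine Finset.sum_congr rfl fun a _ => Finset.sum_congr rfl fun b _ => ?_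
  exact mul_left_comm _ _ _

theorem exists_le_of_avg {Ω : Type*} [Fintype Ω] (W F : Ω → ℝ) (h0 : ∀ ω, 0 ≤ W ω)
    (h1 : ∑ ω, W ω = 1) {ε : ℝ} (h : ∑ ω, W ω * F ω ≤ ε) : ∃ ω, F ω ≤ ε := by
  by_contra! hc
  have h2 : ∑ ω, W ω * (F ω - ε) ≤ 0 := by
    simp only [mul_sub, Finset.sum_sub_distrib, ← Finset.sum_mul, h1]
    linarith
  have h3 : ∀ ω ∈ Finset.univ, 0 ≤ W ω * (F ω - ε) := fun ω _ =>
    mul_nonneg (h0 ω) (by linarith [hc ω])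
  have h4 := (Finset.sum_eq_zero_iff_of_nonneg h3).1 (le_antisymm h2 (Finset.sum_nonneg h3))
  have h5 : ∀ ω, W ω = 0 := fun ω => by
    rcases mul_eq_zero.1 (h4 ω (Finset.mem_univ _)) with h | h
    · exact h
    · linarith [hc ω]
  simp [h5] at h1

theorem Valid.exists_code {N : Net S T K W0 W1 W2 X1 X2 Y1 Y2} (hN : N.Valid)
    (F : (K → W0 × (I → W1) × (J → W2)) → (S → I × X1) → (T → J × X2) → ℝ) {ε : ℝ}
    (h : N.avg F ≤ ε) : ∃ c a b, F c a b ≤ ε := by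
  obtain ⟨c, hc⟩ := exists_le_of_avg _ _
    (fun c => Finset.prod_nonneg fun k _ => hN.view.qC0 (c k))
    (pi_total (fun _ : K => N.view.qC) (fun _ => hN.view.qC1)) h
  obtain ⟨a, ha⟩ := exists_le_of_avg _ _
    (fun a => Finset.prod_nonneg fun s _ => hN.view.qA0 s (c (N.f s)) (a s))
    (pi_total (fun s => N.view.qA s (c (N.f s))) (fun s => hN.view.qA1 s _)) hc
  obtain ⟨b, hb⟩ := exists_le_of_avg _ _
    (fun b => Finset.prod_nonneg fun t _ => hN.swap.view.qA0 t (flip (c (N.g t))) (b t))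
    (pi_total (fun t => N.swap.view.qA t (flip (c (N.g t)))) (fun s => hN.swap.view.qA1 s _)) ha
  exact ⟨c, a, b, hb⟩

/-- Averaging out the other user's codewords turns the error probability of decoder 1 into that of
its view. The common part enters here: it makes both users use the same cloud. -/
theorem Valid.avg_pe {N : Net S T K W0 W1 W2 X1 X2 Y1 Y2} (hN : N.Valid)
    (φ : (K → W0 × (I → W1) × (J → W2)) → (S → I × X1) → Y1 → S) :
    N.avg (fun c a b => N.pe (fun s => (a s).2) (fun t => (b t).2) (φ c a)) = N.view.err φ := by
  refine Finset.sum_congr rfl fun c _ => congrArg₂ (· * ·) rfl <|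
    Finset.sum_congr rfl fun a _ => congrArg₂ (· * ·) rfl ?_
  have e1 : ∀ s t y1, ∑ b : T → J × X2, (∏ t, N.swap.view.qA t (flip (c (N.g t))) (b t)) *
      ∑ y2, N.chan (a s).2 (b t).2 y1 y2
      = ∑ j : J, ∑ x2, 1 / (Fintype.card J : ℝ) *
        N.pX2 t ((c (N.g t)).2.2 j) (c (N.g t)).1 x2 * ∑ y2, N.chan (a s).2 x2 y1 y2 := by
    intro s t y1
    rw [pi_one (fun t => N.swap.view.qA t (flip (c (N.g t)))) (fun t => hN.swap.view.qA1 t _) t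
      (fun b => ∑ y2, N.chan (a s).2 b.2 y1 y2), Fintype.sum_prod_type]
    rfl
  have e2 : ∀ b : T → J × X2, N.pe (fun s => (a s).2) (fun t => (b t).2) (φ c a)
      = ∑ s, ∑ t, ∑ y1, (N.pST s t * if φ c a y1 = s then 0 else 1) *
        ∑ y2, N.chan (a s).2 (b t).2 y1 y2 := by
    intro b
    refine Finset.sum_congr rfl fun s _ => Finset.sum_congr rfl fun t _ =>
      Finset.sum_congr rfl fun y1 _ => ?_
    by_cases h : φ c a y1 = s
    · simp [h]
    · simp [h, Finset.mul_sum]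
  calc ∑ b : T → J × X2, (∏ t, N.swap.view.qA t (flip (c (N.g t))) (b t)) *
        N.pe (fun s => (a s).2) (fun t => (b t).2) (φ c a)
      = ∑ s, ∑ t, ∑ y1, (N.pST s t * if φ c a y1 = s then 0 else 1) *
        ∑ b : T → J × X2, (∏ t, N.swap.view.qA t (flip (c (N.g t))) (b t)) *
          ∑ y2, N.chan (a s).2 (b t).2 y1 y2 := by
        simp only [e2, Finset.mul_sum (Finset.univ : Finset S),
          Finset.mul_sum (Finset.univ : Finset T), Finset.mul_sum (Finset.univ : Finset Y1),
          Finset.mul_sum (Finset.univ : Finset (T → J × X2))]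
        rw [Finset.sum_comm]
        refine Finset.sum_congr rfl fun s _ => ?_
        rw [Finset.sum_comm]
        refine Finset.sum_congr rfl fun t _ => ?_
        rw [Finset.sum_comm]
        refine Finset.sum_congr rfl fun y _ => Finset.sum_congr rfl fun b _ => ?_
        exact mul_left_comm _ _ _
    _ = ∑ s, ∑ t, ∑ y1, ∑ j : J, (1 / (Fintype.card J : ℝ)) * (∑ x2, N.pST s t *
        N.pX2 t ((c (N.f s)).2.2 j) (c (N.f s)).1 x2 * ∑ y2, N.chan (a s).2 x2 y1 y2) *
          if φ c a y1 = s then 0 else 1 := by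
        refine Finset.sum_congr rfl fun s _ => Finset.sum_congr rfl fun t _ =>
          Finset.sum_congr rfl fun y _ => ?_
        rw [e1]
        by_cases h : N.pST s t = 0
        · simp [h]
        · rw [hN.common s t h]
          simp only [Finset.mul_sum (Finset.univ : Finset J),
            Finset.mul_sum (Finset.univ : Finset X2), Finset.sum_mul]
          refine Finset.sum_congr rfl fun j _ => Finset.sum_congr rfl fun x _ => ?_
          ring
    _ = _ := by
        refine Finset.sum_congr rfl fun s _ => ?_
        rw [Finset.sum_congr rfl fun t _ => Finset.sum_comm, Finset.sum_comm]
        refine Finset.sum_congr rfl fun j _ => ?_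
        rw [Finset.sum_comm]
        refine Finset.sum_congr rfl fun y _ => ?_
        simp only [Net.view]
        rw [Finset.mul_sum, Finset.sum_mul]

end Net

namespace Net

variable {S T K W0 W1 W2 X1 X2 Y1 Y2 : Type*}
    [Fintype S] [Fintype T] [Fintype K] [Fintype W0] [Fintype W1] [Fintype W2]
    [Fintype X1] [Fintype X2] [Fintype Y1] [Fintype Y2]
    [DecidableEq S] [DecidableEq T] [DecidableEq K] [DecidableEq W0] [DecidableEq W1]
    [DecidableEq W2] [DecidableEq X1] [DecidableEq X2] [DecidableEq Y1] [DecidableEq Y2]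

theorem Valid.pe0 {N : Net S T K W0 W1 W2 X1 X2 Y1 Y2} (hN : N.Valid) (a : S → X1) (b : T → X2)
    (φ : Y1 → S) : 0 ≤ N.pe a b φ :=
  Finset.sum_nonneg fun _ _ => Finset.sum_nonneg fun _ _ => Finset.sum_nonneg fun _ _ =>
    Finset.sum_nonneg fun _ _ => by
      split_ifs
      · exact mul_nonneg (hN.pST0 _ _) (hN.chan0 _ _ _ _)
      · exact le_rfl

theorem icPe1_eq (N : Net S T K W0 W1 W2 X1 X2 Y1 Y2) (n : ℕ) (a : (Fin n → S) → Fin n → X1)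
    (b : (Fin n → T) → Fin n → X2) (φ : (Fin n → Y1) → Fin n → S) :
    icPe1 N.pST N.chan n a b φ = (N.pow n).pe a b φ := rfl

theorem icPe2_eq (N : Net S T K W0 W1 W2 X1 X2 Y1 Y2) (n : ℕ) (a : (Fin n → S) → Fin n → X1)
    (b : (Fin n → T) → Fin n → X2) (φ : (Fin n → Y2) → Fin n → T) :
    icPe2 N.pST N.chan n a b φ = (N.pow n).swap.pe b a φ := by
  unfold icPe2 pe
  rw [Finset.sum_comm]
  refine Finset.sum_congr rfl fun t _ => Finset.sum_congr rfl fun s _ => ?_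
  rw [Finset.sum_comm]
  rfl

/-- The integer `⌈2^{nR}⌉` is a number of cells of exponential rate `R`. -/
theorem card_bounds (R : ℝ) (hR : 0 ≤ R) (n : ℕ) :
    (2 : ℝ) ^ (n * R : ℝ) ≤ ⌈(2 : ℝ) ^ (n * R : ℝ)⌉₊ ∧
      (⌈(2 : ℝ) ^ (n * R : ℝ)⌉₊ : ℝ) ≤ 2 * (2 : ℝ) ^ (n * R : ℝ) := by
  have h1 : 1 ≤ (2 : ℝ) ^ (n * R : ℝ) := Real.one_le_rpow (by norm_num) (by positivity)
  have h2 := Nat.ceil_lt_add_one (by positivity : (0 : ℝ) ≤ (2 : ℝ) ^ (n * R : ℝ))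
  exact ⟨Nat.le_ceil _, by linarith⟩

/-- The numbers of competitors of the five kinds when the clouds have rates `R1` and `R2`. -/
theorem count_bounds (R1 R2 : ℝ) (n : ℕ) (x1 x2 : ℝ)
    (hx1 : (2 : ℝ) ^ (n * R1 : ℝ) ≤ x1)
    (hx2' : x2 ≤ 2 * (2 : ℝ) ^ (n * R2 : ℝ)) (c : Fin 5) :
    ![x2, 1 / x1, 1, x2 / x1, x2] c ≤ 2 * (2 : ℝ) ^ (n * (![R2, -R1, 0, R2 - R1, R2] c) : ℝ) := by
  have p1 : (0 : ℝ) < (2 : ℝ) ^ (n * R1 : ℝ) := by positivity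
  have p2 : (0 : ℝ) < (2 : ℝ) ^ (n * R2 : ℝ) := by positivity
  have px1 : 0 < x1 := lt_of_lt_of_le p1 hx1
  have e1 : (2 : ℝ) ^ (n * -R1 : ℝ) = 1 / (2 : ℝ) ^ (n * R1 : ℝ) := by
    rw [mul_neg, Real.rpow_neg (by norm_num), one_div]
  have e3 : (2 : ℝ) ^ (n * (R2 - R1) : ℝ) = (2 : ℝ) ^ (n * R2 : ℝ) / (2 : ℝ) ^ (n * R1 : ℝ) := by
    rw [mul_sub, Real.rpow_sub (by norm_num)]
  have i1 : 1 / x1 ≤ 1 / (2 : ℝ) ^ (n * R1 : ℝ) := one_div_le_one_div_of_le p1 hx1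
  fin_cases c
  · exact hx2'
  · show 1 / x1 ≤ 2 * (2 : ℝ) ^ (n * -R1 : ℝ)
    rw [e1]
    have : 0 < 1 / (2 : ℝ) ^ (n * R1 : ℝ) := by positivity
    linarith
  · show (1 : ℝ) ≤ 2 * (2 : ℝ) ^ (n * (0 : ℝ) : ℝ)
    norm_num
  · show x2 / x1 ≤ 2 * (2 : ℝ) ^ (n * (R2 - R1) : ℝ)
    rw [e3, ← mul_div_assoc]
    exact div_le_div₀ (by positivity) hx2' p1 hx1
  · exact hx2'

/-- Rates `R1`, `R2` of the two clouds satisfying the constraints of both decoders yield codes. -/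
theorem Valid.admissible {N : Net S T K W0 W1 W2 X1 X2 Y1 Y2} (hN : N.Valid) (R1 R2 : ℝ)
    (hR1 : 0 ≤ R1) (hR2 : 0 ≤ R2)
    (h1 : ∀ c, ![R2, -R1, 0, R2 - R1, R2] c + N.view.ell c < 0)
    (h2 : ∀ c, ![R1, -R2, 0, R1 - R2, R1] c + N.swap.view.ell c < 0) :
    ICAdmissible N.pST N.chan := by
  intro ε hε _
  have hS : Nonempty S := by
    by_contra h
    rw [not_nonempty_iff] at h
    simpa using hN.pST1
  have hT : Nonempty T := by
    by_contra h
    rw [not_nonempty_iff] at h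
    simpa using hN.pST1
  obtain ⟨n1, hn1⟩ := hN.view.block _ h1 (ε / 2) (by linarith)
  obtain ⟨n2, hn2⟩ := hN.swap.view.block _ h2 (ε / 2) (by linarith)
  refine ⟨max n1 n2, fun n hn => ?_⟩
  obtain ⟨l1, u1⟩ := card_bounds R1 hR1 n
  obtain ⟨l2, u2⟩ := card_bounds R2 hR2 n
  have p1 : 0 < ⌈(2 : ℝ) ^ (n * R1 : ℝ)⌉₊ := Nat.ceil_pos.2 (by positivity)
  have p2 : 0 < ⌈(2 : ℝ) ^ (n * R2 : ℝ)⌉₊ := Nat.ceil_pos.2 (by positivity)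
  have : Nonempty (Fin ⌈(2 : ℝ) ^ (n * R1 : ℝ)⌉₊) := ⟨⟨0, p1⟩⟩
  have : Nonempty (Fin ⌈(2 : ℝ) ^ (n * R2 : ℝ)⌉₊) := ⟨⟨0, p2⟩⟩
  obtain ⟨φ1, hφ1⟩ := hn1 n ((le_max_left _ _).trans hn) (Fin ⌈(2 : ℝ) ^ (n * R1 : ℝ)⌉₊)
    (Fin ⌈(2 : ℝ) ^ (n * R2 : ℝ)⌉₊) fun c => by
      simpa only [Fintype.card_fin] using count_bounds R1 R2 n _ _ l1 u2 c
  obtain ⟨φ2, hφ2⟩ := hn2 n ((le_max_right _ _).trans hn) (Fin ⌈(2 : ℝ) ^ (n * R2 : ℝ)⌉₊)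
    (Fin ⌈(2 : ℝ) ^ (n * R1 : ℝ)⌉₊) fun c => by
      simpa only [Fintype.card_fin] using count_bounds R2 R1 n _ _ l2 u1 c
  have e1 := (hN.pow n).avg_pe φ1
  have e2 := (hN.pow n).swap.avg_pe φ2
  rw [avg_swap] at e2
  have e3 : (N.pow n).swap.view = N.swap.view.pow n := N.swap.view_pow n
  rw [view_pow] at e1
  rw [e3] at e2
  obtain ⟨c, a, b, h⟩ := (hN.pow n).exists_code _
    (((N.pow n).avg_add _ _).le.trans (add_le_add (e1.le.trans hφ1) (e2.le.trans hφ2)))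
  refine ⟨fun s => (a s).2, fun t => (b t).2, φ1 c a, φ2 (fun k => flip (c k)) b, ?_⟩
  rw [icPe1_eq, icPe2_eq]
  have q1 := (hN.pow n).pe0 (fun s => (a s).2) (fun t => (b t).2) (φ1 c a)
  have q2 := (hN.pow n).swap.pe0 (fun t => (b t).2) (fun s => (a s).2)
    (φ2 (fun k => flip (c k)) b)
  refine max_le ?_ ?_ <;> linarith

end Net

set_option synthInstance.maxSize 1000
set_option synthInstance.maxHeartbeats 200000

/-! ### Divergences and mutual informations -/

section proj
variable {S W0 W1 W2 X Y : Type*}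
/-- The `S`-coordinate of a tuple `(S, W0, W1, W2, X, Y)`. -/
abbrev uS (u : S × W0 × W1 × W2 × X × Y) : S := u.1
/-- The `W0`-coordinate of a tuple `(S, W0, W1, W2, X, Y)`. -/
abbrev u0 (u : S × W0 × W1 × W2 × X × Y) : W0 := u.2.1
/-- The `W1`-coordinate of a tuple `(S, W0, W1, W2, X, Y)`. -/
abbrev u1 (u : S × W0 × W1 × W2 × X × Y) : W1 := u.2.2.1
/-- The `W2`-coordinate of a tuple `(S, W0, W1, W2, X, Y)`. -/
abbrev u2 (u : S × W0 × W1 × W2 × X × Y) : W2 := u.2.2.2.1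
/-- The `X`-coordinate of a tuple `(S, W0, W1, W2, X, Y)`. -/
abbrev uX (u : S × W0 × W1 × W2 × X × Y) : X := u.2.2.2.2.1
/-- The `Y`-coordinate of a tuple `(S, W0, W1, W2, X, Y)`. -/
abbrev uY (u : S × W0 × W1 × W2 × X × Y) : Y := u.2.2.2.2.2
end proj

namespace View

variable {S K W0 W1 W2 X Y : Type*} [Fintype S] [Fintype K] [Fintype W0] [Fintype W1] [Fintype W2]
  [Fintype X] [Fintype Y] [DecidableEq S] [DecidableEq K] [DecidableEq W0] [DecidableEq W1]
  [DecidableEq W2] [DecidableEq X] [DecidableEq Y]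

/-- The common part as a function of the tuple. -/
def uK (V : View S K W0 W1 W2 X Y) (u : S × W0 × W1 × W2 × X × Y) : K := V.f u.1

/-- Law of the common part `K`. -/
def pK (V : View S K W0 W1 W2 X Y) (k : K) : ℝ := ∑ s, if V.f s = k then V.pS s else 0

/-- Law of the input given `S` and `W0`. -/
def rX (V : View S K W0 W1 W2 X Y) (s : S) (w0 : W0) (x : X) : ℝ :=
  ∑ w1, V.q1 w0 w1 * V.qX s w1 w0 x

section marginals
variable {V : View S K W0 W1 W2 X Y} (hV : V.Valid)
include hV

theorem Valid.marg_S (u : S × W0 × W1 × W2 × X × Y) :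
    (∑ u', if uS u' = uS u then V.P u' else 0)
      = V.pS (uS u) := by
  simp only [Fintype.sum_prod_type, Prod.mk.injEq, ite_and, Finset.sum_ite_irrel,
    Finset.sum_const_zero, Finset.sum_ite_eq', Finset.mem_univ, if_true, P, joint,
    ← Finset.mul_sum, hV.h1, uS, u0, u1, u2, uX, uY, uK]
  simp only [← Finset.sum_mul, ← Finset.mul_sum, hV.qX1, hV.q11, hV.q21, hV.q01, mul_one, one_mul]

theorem Valid.marg_K (u : S × W0 × W1 × W2 × X × Y) :
    (∑ u', if V.uK u' = V.uK u then V.P u' else 0)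
      = V.pK (V.uK u) := by
  simp only [Fintype.sum_prod_type]
  show (∑ s, ∑ w0, ∑ w1, ∑ w2, ∑ x, ∑ y, if V.f s = V.f u.1 then
    V.P (s, w0, w1, w2, x, y) else 0) = _
  simp only [Fintype.sum_prod_type, Prod.mk.injEq, ite_and, Finset.sum_ite_irrel,
    Finset.sum_const_zero, Finset.sum_ite_eq', Finset.mem_univ, if_true, P, joint,
    ← Finset.mul_sum, hV.h1, uS, u0, u1, u2, uX, uY, uK]
  simp only [← Finset.mul_sum, ← Finset.sum_mul, hV.qX1, hV.q11, hV.q21, hV.q01, mul_one, one_mul]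
  simp only [pK, Finset.mul_sum, mul_ite, mul_zero]

theorem Valid.marg_SX012 (u : S × W0 × W1 × W2 × X × Y) :
    (∑ u', if (uS u', uX u', u0 u', u1 u', u2 u') = (uS u, uX u, u0 u, u1 u, u2 u) then V.P u' else 0)
      = V.pS (uS u) * V.q0 (u0 u) * V.q1 (u0 u) (u1 u) * V.q2 (u0 u) (u2 u) * V.qX (uS u) (u1 u) (u0 u) (uX u) := by
  simp only [Fintype.sum_prod_type, Prod.mk.injEq, ite_and, Finset.sum_ite_irrel,
    Finset.sum_const_zero, Finset.sum_ite_eq', Finset.mem_univ, if_true, P, joint,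
    ← Finset.mul_sum, hV.h1, uS, u0, u1, u2, uX, uY, uK]
  ring

theorem Valid.marg_012K (u : S × W0 × W1 × W2 × X × Y) :
    (∑ u', if (u0 u', u1 u', u2 u', V.uK u') = (u0 u, u1 u, u2 u, V.uK u) then V.P u' else 0)
      = V.q0 (u0 u) * V.q1 (u0 u) (u1 u) * V.q2 (u0 u) (u2 u) * V.pK (V.uK u) := by
  simp only [Fintype.sum_prod_type, Prod.mk.injEq, ite_and, Finset.sum_ite_irrel,
    Finset.sum_const_zero, Finset.sum_ite_eq', Finset.mem_univ, if_true, P, joint,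
    ← Finset.mul_sum, hV.h1, uS, u0, u1, u2, uX, uY, uK]
  simp only [← Finset.mul_sum, ← Finset.sum_mul, hV.qX1, hV.q11, hV.q21, hV.q01, mul_one, one_mul]
  simp only [pK, Finset.mul_sum, mul_ite, mul_zero]

theorem Valid.marg_Y012K (u : S × W0 × W1 × W2 × X × Y) :
    (∑ u', if (uY u', u0 u', u1 u', u2 u', V.uK u') = (uY u, u0 u, u1 u, u2 u, V.uK u) then V.P u' else 0)
      = V.Mb (V.uK u) (u0 u) (u1 u) (u2 u) (uY u) := by
  simp only [Fintype.sum_prod_type, Prod.mk.injEq, ite_and, Finset.sum_ite_irrel,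
    Finset.sum_const_zero, Finset.sum_ite_eq', Finset.mem_univ, if_true, P, joint,
    ← Finset.mul_sum, hV.h1, uS, u0, u1, u2, uX, uY, uK]
  simp only [Mb, joint, Finset.sum_ite_irrel, Finset.sum_const_zero]

theorem Valid.marg_SX02 (u : S × W0 × W1 × W2 × X × Y) :
    (∑ u', if (uS u', uX u', u0 u', u2 u') = (uS u, uX u, u0 u, u2 u) then V.P u' else 0)
      = V.pS (uS u) * V.q0 (u0 u) * V.q2 (u0 u) (u2 u) * V.rX (uS u) (u0 u) (uX u) := by
  simp only [Fintype.sum_prod_type, Prod.mk.injEq, ite_and, Finset.sum_ite_irrel,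
    Finset.sum_const_zero, Finset.sum_ite_eq', Finset.mem_univ, if_true, P, joint,
    ← Finset.mul_sum, hV.h1, uS, u0, u1, u2, uX, uY, uK]
  simp only [rX, Finset.mul_sum]
  exact Finset.sum_congr rfl fun w1 _ => by ring

theorem Valid.marg_SXY02 (u : S × W0 × W1 × W2 × X × Y) :
    (∑ u', if (uS u', uX u', uY u', u0 u', u2 u') = (uS u, uX u, uY u, u0 u, u2 u) then V.P u' else 0)
      = V.q0 (u0 u) * V.q2 (u0 u) (u2 u) * V.rX (uS u) (u0 u) (uX u) * V.h (uS u) (u0 u) (u2 u) (uX u) (uY u) := by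
  simp only [Fintype.sum_prod_type, Prod.mk.injEq, ite_and, Finset.sum_ite_irrel,
    Finset.sum_const_zero, Finset.sum_ite_eq', Finset.mem_univ, if_true, P, joint,
    ← Finset.mul_sum, hV.h1, uS, u0, u1, u2, uX, uY, uK]
  simp only [rX, Finset.mul_sum, Finset.sum_mul]
  exact Finset.sum_congr rfl fun w1 _ => by ring

theorem Valid.marg_02K (u : S × W0 × W1 × W2 × X × Y) :
    (∑ u', if (u0 u', u2 u', V.uK u') = (u0 u, u2 u, V.uK u) then V.P u' else 0)
      = V.q0 (u0 u) * V.q2 (u0 u) (u2 u) * V.pK (V.uK u) := by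
  simp only [Fintype.sum_prod_type, Prod.mk.injEq, ite_and, Finset.sum_ite_irrel,
    Finset.sum_const_zero, Finset.sum_ite_eq', Finset.mem_univ, if_true, P, joint,
    ← Finset.mul_sum, hV.h1, uS, u0, u1, u2, uX, uY, uK]
  simp only [← Finset.mul_sum, ← Finset.sum_mul, hV.qX1, hV.q11, hV.q21, hV.q01, mul_one, one_mul]
  simp only [pK, Finset.mul_sum, mul_ite, mul_zero]

theorem Valid.marg_Y02K (u : S × W0 × W1 × W2 × X × Y) :
    (∑ u', if (uY u', u0 u', u2 u', V.uK u') = (uY u, u0 u, u2 u, V.uK u) then V.P u' else 0)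
      = V.Mc (V.uK u) (u0 u) (u2 u) (uY u) := by
  simp only [Fintype.sum_prod_type, Prod.mk.injEq, ite_and, Finset.sum_ite_irrel,
    Finset.sum_const_zero, Finset.sum_ite_eq', Finset.mem_univ, if_true, P, joint,
    ← Finset.mul_sum, hV.h1, uS, u0, u1, u2, uX, uY, uK]
  simp only [Mc, Mb, joint, Finset.sum_ite_irrel, Finset.sum_const_zero]
  rw [Finset.sum_comm]
  simp only [Finset.sum_ite_irrel, Finset.sum_const_zero]

theorem Valid.marg_01K (u : S × W0 × W1 × W2 × X × Y) :
    (∑ u', if (u0 u', u1 u', V.uK u') = (u0 u, u1 u, V.uK u) then V.P u' else 0)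
      = V.q0 (u0 u) * V.q1 (u0 u) (u1 u) * V.pK (V.uK u) := by
  simp only [Fintype.sum_prod_type, Prod.mk.injEq, ite_and, Finset.sum_ite_irrel,
    Finset.sum_const_zero, Finset.sum_ite_eq', Finset.mem_univ, if_true, P, joint,
    ← Finset.mul_sum, hV.h1, uS, u0, u1, u2, uX, uY, uK]
  simp only [← Finset.mul_sum, ← Finset.sum_mul, hV.qX1, hV.q11, hV.q21, hV.q01, mul_one, one_mul]
  simp only [pK, Finset.mul_sum, mul_ite, mul_zero]

theorem Valid.marg_Y01K (u : S × W0 × W1 × W2 × X × Y) :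
    (∑ u', if (uY u', u0 u', u1 u', V.uK u') = (uY u, u0 u, u1 u, V.uK u) then V.P u' else 0)
      = V.Md (V.uK u) (u0 u) (u1 u) (uY u) := by
  simp only [Fintype.sum_prod_type, Prod.mk.injEq, ite_and, Finset.sum_ite_irrel,
    Finset.sum_const_zero, Finset.sum_ite_eq', Finset.mem_univ, if_true, P, joint,
    ← Finset.mul_sum, hV.h1, uS, u0, u1, u2, uX, uY, uK]
  simp only [Md, Mb, joint, Finset.sum_ite_irrel, Finset.sum_const_zero]
  rw [Finset.sum_comm]
  simp only [Finset.sum_ite_irrel, Finset.sum_const_zero]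

theorem Valid.marg_0K (u : S × W0 × W1 × W2 × X × Y) :
    (∑ u', if (u0 u', V.uK u') = (u0 u, V.uK u) then V.P u' else 0)
      = V.q0 (u0 u) * V.pK (V.uK u) := by
  simp only [Fintype.sum_prod_type, Prod.mk.injEq, ite_and, Finset.sum_ite_irrel,
    Finset.sum_const_zero, Finset.sum_ite_eq', Finset.mem_univ, if_true, P, joint,
    ← Finset.mul_sum, hV.h1, uS, u0, u1, u2, uX, uY, uK]
  simp only [← Finset.mul_sum, ← Finset.sum_mul, hV.qX1, hV.q11, hV.q21, hV.q01, mul_one, one_mul]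
  simp only [pK, Finset.mul_sum, mul_ite, mul_zero]

theorem Valid.marg_Y0K (u : S × W0 × W1 × W2 × X × Y) :
    (∑ u', if (uY u', u0 u', V.uK u') = (uY u, u0 u, V.uK u) then V.P u' else 0)
      = V.Me (V.uK u) (u0 u) (uY u) := by
  simp only [Fintype.sum_prod_type, Prod.mk.injEq, ite_and, Finset.sum_ite_irrel,
    Finset.sum_const_zero, Finset.sum_ite_eq', Finset.mem_univ, if_true, P, joint,
    ← Finset.mul_sum, hV.h1, uS, u0, u1, u2, uX, uY, uK]
  simp only [Me, Mb, joint, Finset.sum_ite_irrel, Finset.sum_const_zero]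
  symm
  trans ∑ w1, ∑ s, ∑ w2, if V.f s = V.f u.1 then ∑ x, V.q0 u.2.1 * V.q1 u.2.1 w1 * V.q2 u.2.1 w2 *
      V.qX s w1 u.2.1 x * V.h s u.2.1 w2 x u.2.2.2.2.2 else 0
  · exact Finset.sum_congr rfl fun w1 _ => Finset.sum_comm
  rw [Finset.sum_comm]
  simp only [Finset.sum_ite_irrel, Finset.sum_const_zero]

theorem Valid.marg_Y (u : S × W0 × W1 × W2 × X × Y) :
    (∑ u', if uY u' = uY u then V.P u' else 0)
      = V.Ma (uY u) := by
  simp only [Fintype.sum_prod_type, Prod.mk.injEq, ite_and, Finset.sum_ite_irrel,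
    Finset.sum_const_zero, Finset.sum_ite_eq', Finset.mem_univ, if_true, P, joint,
    ← Finset.mul_sum, hV.h1, uS, u0, u1, u2, uX, uY, uK]
  rfl

end marginals

theorem marg_all (V : View S K W0 W1 W2 X Y) (u : S × W0 × W1 × W2 × X × Y) :
    (∑ u', if u' = u then V.P u' else 0) = V.P u := by
  simp

/-- A marginal does not vanish on the support of the law. -/
theorem marg_ne {Ω α : Type*} [Fintype Ω] [DecidableEq α] {p : Ω → ℝ} (hp : ∀ ω, 0 ≤ p ω)
    {f : Ω → α} {G : ℝ} {u : Ω} (h : (∑ u', if f u' = f u then p u' else 0) = G)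
    (hu : p u ≠ 0) : G ≠ 0 := by
  have h1 : p u ≤ G := by
    rw [← h]
    refine le_trans (by simp) (Finset.single_le_sum (fun ω _ => ?_) (Finset.mem_univ u))
    split_ifs
    · exact hp ω
    · exact le_rfl
  have h2 := lt_of_le_of_ne (hp u) (Ne.symm hu)
  exact (h2.trans_le h1).ne'

section identities
variable {V : View S K W0 W1 W2 X Y} (hV : V.Valid)
include hV

theorem Valid.P0 (u : S × W0 × W1 × W2 × X × Y) : 0 ≤ V.P u := hV.joint0 ..

theorem Valid.logP {u : S × W0 × W1 × W2 × X × Y} (hu : V.P u ≠ 0) :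
    Real.logb 2 (V.P u) = Real.logb 2 (V.q0 (u0 u)) + Real.logb 2 (V.q1 (u0 u) (u1 u))
      + Real.logb 2 (V.q2 (u0 u) (u2 u)) + Real.logb 2 (V.qX (uS u) (u1 u) (u0 u) (uX u))
      + Real.logb 2 (V.h (uS u) (u0 u) (u2 u) (uX u) (uY u)) := by
  have e : V.P u = V.q0 (u0 u) * V.q1 (u0 u) (u1 u) * V.q2 (u0 u) (u2 u) *
    V.qX (uS u) (u1 u) (u0 u) (uX u) * V.h (uS u) (u0 u) (u2 u) (uX u) (uY u) := rfl
  rw [e] at hu ⊢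
  simp only [ne_eq, mul_eq_zero, not_or] at hu
  obtain ⟨⟨⟨⟨n0, n1⟩, n2⟩, nX⟩, nh⟩ := hu
  rw [Real.logb_mul (by simp [*]) nh, Real.logb_mul (by simp [*]) nX,
    Real.logb_mul (by simp [*]) n2, Real.logb_mul n0 n1]

/-- The weight `Q c` has no factor `pS`; its absence, together with the normalisation by the common
part, contributes the conditional entropy of the source given its common part. What remains of the
exponent is the mutual information between the output and the letters that the competitor has
wrong. -/
theorem Valid.ell_1 : V.ell 1 = condEnt V.P (fun u => uS u) (fun u => V.uK u)
    - cmi V.P (fun u => (uS u, uX u)) (fun u => uY u) (fun u => (u0 u, u1 u, u2 u, V.uK u)) := by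
  have E0 : margEnt V.P (fun u => (uS u, V.uK u)) = -∑ u, V.P u * Real.logb 2 (V.pS (uS u)) :=
    (margEnt_congr V.P _ (fun u => uS u) fun ω ω' _ _ => by
      simp only [uK, Prod.ext_iff]; try grind).trans
      (margEnt_of_marg V.P _ _ hV.marg_S)
  have E1 : margEnt V.P (fun u => V.uK u) = -∑ u, V.P u * Real.logb 2 (V.pK (V.uK u)) :=
    (margEnt_congr V.P _ (fun u => V.uK u) fun ω ω' _ _ => by
      simp only [uK, Prod.ext_iff]; try grind).trans
      (margEnt_of_marg V.P _ _ hV.marg_K)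
  have E2 : margEnt V.P (fun u => ((uS u, uX u), (u0 u, u1 u, u2 u, V.uK u))) = -∑ u, V.P u * Real.logb 2 (V.pS (uS u) * V.q0 (u0 u) * V.q1 (u0 u) (u1 u) * V.q2 (u0 u) (u2 u) * V.qX (uS u) (u1 u) (u0 u) (uX u)) :=
    (margEnt_congr V.P _ (fun u => (uS u, uX u, u0 u, u1 u, u2 u)) fun ω ω' _ _ => by
      simp only [uK, Prod.ext_iff]; try grind).trans
      (margEnt_of_marg V.P _ _ hV.marg_SX012)
  have E3 : margEnt V.P (fun u => (uY u, (u0 u, u1 u, u2 u, V.uK u))) = -∑ u, V.P u * Real.logb 2 (V.Mb (V.uK u) (u0 u) (u1 u) (u2 u) (uY u)) :=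
    (margEnt_congr V.P _ (fun u => (uY u, u0 u, u1 u, u2 u, V.uK u)) fun ω ω' _ _ => by
      simp only [uK, Prod.ext_iff]; try grind).trans
      (margEnt_of_marg V.P _ _ hV.marg_Y012K)
  have E4 : margEnt V.P (fun u => ((uS u, uX u), uY u, (u0 u, u1 u, u2 u, V.uK u))) = -∑ u, V.P u * Real.logb 2 (V.P u) :=
    (margEnt_congr V.P _ (fun u => u) fun ω ω' _ _ => by
      simp only [uK, Prod.ext_iff]; try grind).trans
      (margEnt_of_marg V.P _ _ V.marg_all)
  have E5 : margEnt V.P (fun u => (u0 u, u1 u, u2 u, V.uK u)) = -∑ u, V.P u * Real.logb 2 (V.q0 (u0 u) * V.q1 (u0 u) (u1 u) * V.q2 (u0 u) (u2 u) * V.pK (V.uK u)) :=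
    (margEnt_congr V.P _ (fun u => (u0 u, u1 u, u2 u, V.uK u)) fun ω ω' _ _ => by
      simp only [uK, Prod.ext_iff]; try grind).trans
      (margEnt_of_marg V.P _ _ hV.marg_012K)
  simp only [condEnt, cmi, mi]
  rw [E0, E1, E2, E3, E4, E5]
  simp only [ell, ← Finset.sum_neg_distrib, ← Finset.sum_sub_distrib, ← Finset.sum_add_distrib]
  refine Finset.sum_congr rfl fun u _ => ?_
  by_cases hu : V.P u = 0
  · simp [hu]
  have hu' := hu
  have e : V.P u = V.q0 (u0 u) * V.q1 (u0 u) (u1 u) * V.q2 (u0 u) (u2 u) *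
    V.qX (uS u) (u1 u) (u0 u) (uX u) * V.h (uS u) (u0 u) (u2 u) (uX u) (uY u) := rfl
  rw [e] at hu'
  simp only [mul_eq_zero, not_or] at hu'
  obtain ⟨⟨⟨⟨n0, n1⟩, n2⟩, nX⟩, nh⟩ := hu'
  have hlog := hV.logP hu
  have mS := marg_ne hV.P0 (hV.marg_S u) hu
  have mK := marg_ne hV.P0 (hV.marg_K u) hu
  have mSX012 := marg_ne hV.P0 (hV.marg_SX012 u) hu
  have mY012K := marg_ne hV.P0 (hV.marg_Y012K u) hu
  have m012K := marg_ne hV.P0 (hV.marg_012K u) hu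
  have eQ : V.QU 1 u = V.qX (uS u) (u1 u) (u0 u) (uX u) * V.Mb (V.uK u) (u0 u) (u1 u) (u2 u) (uY u) := rfl
  simp only [ne_eq, mul_eq_zero, not_or] at mS mK mSX012 mY012K m012K
  rw [eQ, Real.logb_div (by simp [*]) hu]
  simp only [Real.logb_mul, hlog, ne_eq, mul_eq_zero, or_self, not_false_eq_true, *]
  ring

theorem Valid.ell_2 : V.ell 2 = condEnt V.P (fun u => uS u) (fun u => V.uK u)
    - cmi V.P (fun u => (uS u, uX u)) (fun u => uY u) (fun u => (u0 u, u2 u, V.uK u)) := by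
  have E0 : margEnt V.P (fun u => (uS u, V.uK u)) = -∑ u, V.P u * Real.logb 2 (V.pS (uS u)) :=
    (margEnt_congr V.P _ (fun u => uS u) fun ω ω' _ _ => by
      simp only [uK, Prod.ext_iff]; try grind).trans
      (margEnt_of_marg V.P _ _ hV.marg_S)
  have E1 : margEnt V.P (fun u => V.uK u) = -∑ u, V.P u * Real.logb 2 (V.pK (V.uK u)) :=
    (margEnt_congr V.P _ (fun u => V.uK u) fun ω ω' _ _ => by
      simp only [uK, Prod.ext_iff]; try grind).trans
      (margEnt_of_marg V.P _ _ hV.marg_K)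
  have E2 : margEnt V.P (fun u => ((uS u, uX u), (u0 u, u2 u, V.uK u))) = -∑ u, V.P u * Real.logb 2 (V.pS (uS u) * V.q0 (u0 u) * V.q2 (u0 u) (u2 u) * V.rX (uS u) (u0 u) (uX u)) :=
    (margEnt_congr V.P _ (fun u => (uS u, uX u, u0 u, u2 u)) fun ω ω' _ _ => by
      simp only [uK, Prod.ext_iff]; try grind).trans
      (margEnt_of_marg V.P _ _ hV.marg_SX02)
  have E3 : margEnt V.P (fun u => (uY u, (u0 u, u2 u, V.uK u))) = -∑ u, V.P u * Real.logb 2 (V.Mc (V.uK u) (u0 u) (u2 u) (uY u)) :=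
    (margEnt_congr V.P _ (fun u => (uY u, u0 u, u2 u, V.uK u)) fun ω ω' _ _ => by
      simp only [uK, Prod.ext_iff]; try grind).trans
      (margEnt_of_marg V.P _ _ hV.marg_Y02K)
  have E4 : margEnt V.P (fun u => ((uS u, uX u), uY u, (u0 u, u2 u, V.uK u))) = -∑ u, V.P u * Real.logb 2 (V.q0 (u0 u) * V.q2 (u0 u) (u2 u) * V.rX (uS u) (u0 u) (uX u) * V.h (uS u) (u0 u) (u2 u) (uX u) (uY u)) :=
    (margEnt_congr V.P _ (fun u => (uS u, uX u, uY u, u0 u, u2 u)) fun ω ω' _ _ => by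
      simp only [uK, Prod.ext_iff]; try grind).trans
      (margEnt_of_marg V.P _ _ hV.marg_SXY02)
  have E5 : margEnt V.P (fun u => (u0 u, u2 u, V.uK u)) = -∑ u, V.P u * Real.logb 2 (V.q0 (u0 u) * V.q2 (u0 u) (u2 u) * V.pK (V.uK u)) :=
    (margEnt_congr V.P _ (fun u => (u0 u, u2 u, V.uK u)) fun ω ω' _ _ => by
      simp only [uK, Prod.ext_iff]; try grind).trans
      (margEnt_of_marg V.P _ _ hV.marg_02K)
  simp only [condEnt, cmi, mi]
  rw [E0, E1, E2, E3, E4, E5]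
  simp only [ell, ← Finset.sum_neg_distrib, ← Finset.sum_sub_distrib, ← Finset.sum_add_distrib]
  refine Finset.sum_congr rfl fun u _ => ?_
  by_cases hu : V.P u = 0
  · simp [hu]
  have hu' := hu
  have e : V.P u = V.q0 (u0 u) * V.q1 (u0 u) (u1 u) * V.q2 (u0 u) (u2 u) *
    V.qX (uS u) (u1 u) (u0 u) (uX u) * V.h (uS u) (u0 u) (u2 u) (uX u) (uY u) := rfl
  rw [e] at hu'
  simp only [mul_eq_zero, not_or] at hu'
  obtain ⟨⟨⟨⟨n0, n1⟩, n2⟩, nX⟩, nh⟩ := hu'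
  have hlog := hV.logP hu
  have mS := marg_ne hV.P0 (hV.marg_S u) hu
  have mK := marg_ne hV.P0 (hV.marg_K u) hu
  have mSX02 := marg_ne hV.P0 (hV.marg_SX02 u) hu
  have mY02K := marg_ne hV.P0 (hV.marg_Y02K u) hu
  have mSXY02 := marg_ne hV.P0 (hV.marg_SXY02 u) hu
  have m02K := marg_ne hV.P0 (hV.marg_02K u) hu
  have eQ : V.QU 2 u = V.q1 (u0 u) (u1 u) * V.qX (uS u) (u1 u) (u0 u) (uX u) * V.Mc (V.uK u) (u0 u) (u2 u) (uY u) := rfl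
  simp only [ne_eq, mul_eq_zero, not_or] at mS mK mSX02 mY02K mSXY02 m02K
  rw [eQ, Real.logb_div (by simp [*]) hu]
  simp only [Real.logb_mul, hlog, ne_eq, mul_eq_zero, or_self, not_false_eq_true, *]
  ring

theorem Valid.ell_3 : V.ell 3 = condEnt V.P (fun u => uS u) (fun u => V.uK u)
    - cmi V.P (fun u => (uS u, u2 u, uX u)) (fun u => uY u) (fun u => (u0 u, u1 u, V.uK u)) := by
  have E0 : margEnt V.P (fun u => (uS u, V.uK u)) = -∑ u, V.P u * Real.logb 2 (V.pS (uS u)) :=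
    (margEnt_congr V.P _ (fun u => uS u) fun ω ω' _ _ => by
      simp only [uK, Prod.ext_iff]; try grind).trans
      (margEnt_of_marg V.P _ _ hV.marg_S)
  have E1 : margEnt V.P (fun u => V.uK u) = -∑ u, V.P u * Real.logb 2 (V.pK (V.uK u)) :=
    (margEnt_congr V.P _ (fun u => V.uK u) fun ω ω' _ _ => by
      simp only [uK, Prod.ext_iff]; try grind).trans
      (margEnt_of_marg V.P _ _ hV.marg_K)
  have E2 : margEnt V.P (fun u => ((uS u, u2 u, uX u), (u0 u, u1 u, V.uK u))) = -∑ u, V.P u * Real.logb 2 (V.pS (uS u) * V.q0 (u0 u) * V.q1 (u0 u) (u1 u) * V.q2 (u0 u) (u2 u) * V.qX (uS u) (u1 u) (u0 u) (uX u)) :=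
    (margEnt_congr V.P _ (fun u => (uS u, uX u, u0 u, u1 u, u2 u)) fun ω ω' _ _ => by
      simp only [uK, Prod.ext_iff]; try grind).trans
      (margEnt_of_marg V.P _ _ hV.marg_SX012)
  have E3 : margEnt V.P (fun u => (uY u, (u0 u, u1 u, V.uK u))) = -∑ u, V.P u * Real.logb 2 (V.Md (V.uK u) (u0 u) (u1 u) (uY u)) :=
    (margEnt_congr V.P _ (fun u => (uY u, u0 u, u1 u, V.uK u)) fun ω ω' _ _ => by
      simp only [uK, Prod.ext_iff]; try grind).trans
      (margEnt_of_marg V.P _ _ hV.marg_Y01K)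
  have E4 : margEnt V.P (fun u => ((uS u, u2 u, uX u), uY u, (u0 u, u1 u, V.uK u))) = -∑ u, V.P u * Real.logb 2 (V.P u) :=
    (margEnt_congr V.P _ (fun u => u) fun ω ω' _ _ => by
      simp only [uK, Prod.ext_iff]; try grind).trans
      (margEnt_of_marg V.P _ _ V.marg_all)
  have E5 : margEnt V.P (fun u => (u0 u, u1 u, V.uK u)) = -∑ u, V.P u * Real.logb 2 (V.q0 (u0 u) * V.q1 (u0 u) (u1 u) * V.pK (V.uK u)) :=
    (margEnt_congr V.P _ (fun u => (u0 u, u1 u, V.uK u)) fun ω ω' _ _ => by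
      simp only [uK, Prod.ext_iff]; try grind).trans
      (margEnt_of_marg V.P _ _ hV.marg_01K)
  simp only [condEnt, cmi, mi]
  rw [E0, E1, E2, E3, E4, E5]
  simp only [ell, ← Finset.sum_neg_distrib, ← Finset.sum_sub_distrib, ← Finset.sum_add_distrib]
  refine Finset.sum_congr rfl fun u _ => ?_
  by_cases hu : V.P u = 0
  · simp [hu]
  have hu' := hu
  have e : V.P u = V.q0 (u0 u) * V.q1 (u0 u) (u1 u) * V.q2 (u0 u) (u2 u) *
    V.qX (uS u) (u1 u) (u0 u) (uX u) * V.h (uS u) (u0 u) (u2 u) (uX u) (uY u) := rfl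
  rw [e] at hu'
  simp only [mul_eq_zero, not_or] at hu'
  obtain ⟨⟨⟨⟨n0, n1⟩, n2⟩, nX⟩, nh⟩ := hu'
  have hlog := hV.logP hu
  have mS := marg_ne hV.P0 (hV.marg_S u) hu
  have mK := marg_ne hV.P0 (hV.marg_K u) hu
  have mSX012 := marg_ne hV.P0 (hV.marg_SX012 u) hu
  have mY01K := marg_ne hV.P0 (hV.marg_Y01K u) hu
  have m01K := marg_ne hV.P0 (hV.marg_01K u) hu
  have eQ : V.QU 3 u = V.q2 (u0 u) (u2 u) * V.qX (uS u) (u1 u) (u0 u) (uX u) * V.Md (V.uK u) (u0 u) (u1 u) (uY u) := rfl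
  simp only [ne_eq, mul_eq_zero, not_or] at mS mK mSX012 mY01K m01K
  rw [eQ, Real.logb_div (by simp [*]) hu]
  simp only [Real.logb_mul, hlog, ne_eq, mul_eq_zero, or_self, not_false_eq_true, *]
  ring

theorem Valid.ell_4 : V.ell 4 = condEnt V.P (fun u => uS u) (fun u => V.uK u)
    - cmi V.P (fun u => (uS u, u2 u, uX u)) (fun u => uY u) (fun u => (u0 u, V.uK u)) := by
  have E0 : margEnt V.P (fun u => (uS u, V.uK u)) = -∑ u, V.P u * Real.logb 2 (V.pS (uS u)) :=
    (margEnt_congr V.P _ (fun u => uS u) fun ω ω' _ _ => by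
      simp only [uK, Prod.ext_iff]; try grind).trans
      (margEnt_of_marg V.P _ _ hV.marg_S)
  have E1 : margEnt V.P (fun u => V.uK u) = -∑ u, V.P u * Real.logb 2 (V.pK (V.uK u)) :=
    (margEnt_congr V.P _ (fun u => V.uK u) fun ω ω' _ _ => by
      simp only [uK, Prod.ext_iff]; try grind).trans
      (margEnt_of_marg V.P _ _ hV.marg_K)
  have E2 : margEnt V.P (fun u => ((uS u, u2 u, uX u), (u0 u, V.uK u))) = -∑ u, V.P u * Real.logb 2 (V.pS (uS u) * V.q0 (u0 u) * V.q2 (u0 u) (u2 u) * V.rX (uS u) (u0 u) (uX u)) :=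
    (margEnt_congr V.P _ (fun u => (uS u, uX u, u0 u, u2 u)) fun ω ω' _ _ => by
      simp only [uK, Prod.ext_iff]; try grind).trans
      (margEnt_of_marg V.P _ _ hV.marg_SX02)
  have E3 : margEnt V.P (fun u => (uY u, (u0 u, V.uK u))) = -∑ u, V.P u * Real.logb 2 (V.Me (V.uK u) (u0 u) (uY u)) :=
    (margEnt_congr V.P _ (fun u => (uY u, u0 u, V.uK u)) fun ω ω' _ _ => by
      simp only [uK, Prod.ext_iff]; try grind).trans
      (margEnt_of_marg V.P _ _ hV.marg_Y0K)
  have E4 : margEnt V.P (fun u => ((uS u, u2 u, uX u), uY u, (u0 u, V.uK u))) = -∑ u, V.P u * Real.logb 2 (V.q0 (u0 u) * V.q2 (u0 u) (u2 u) * V.rX (uS u) (u0 u) (uX u) * V.h (uS u) (u0 u) (u2 u) (uX u) (uY u)) :=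
    (margEnt_congr V.P _ (fun u => (uS u, uX u, uY u, u0 u, u2 u)) fun ω ω' _ _ => by
      simp only [uK, Prod.ext_iff]; try grind).trans
      (margEnt_of_marg V.P _ _ hV.marg_SXY02)
  have E5 : margEnt V.P (fun u => (u0 u, V.uK u)) = -∑ u, V.P u * Real.logb 2 (V.q0 (u0 u) * V.pK (V.uK u)) :=
    (margEnt_congr V.P _ (fun u => (u0 u, V.uK u)) fun ω ω' _ _ => by
      simp only [uK, Prod.ext_iff]; try grind).trans
      (margEnt_of_marg V.P _ _ hV.marg_0K)
  simp only [condEnt, cmi, mi]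
  rw [E0, E1, E2, E3, E4, E5]
  simp only [ell, ← Finset.sum_neg_distrib, ← Finset.sum_sub_distrib, ← Finset.sum_add_distrib]
  refine Finset.sum_congr rfl fun u _ => ?_
  by_cases hu : V.P u = 0
  · simp [hu]
  have hu' := hu
  have e : V.P u = V.q0 (u0 u) * V.q1 (u0 u) (u1 u) * V.q2 (u0 u) (u2 u) *
    V.qX (uS u) (u1 u) (u0 u) (uX u) * V.h (uS u) (u0 u) (u2 u) (uX u) (uY u) := rfl
  rw [e] at hu'
  simp only [mul_eq_zero, not_or] at hu'
  obtain ⟨⟨⟨⟨n0, n1⟩, n2⟩, nX⟩, nh⟩ := hu'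
  have hlog := hV.logP hu
  have mS := marg_ne hV.P0 (hV.marg_S u) hu
  have mK := marg_ne hV.P0 (hV.marg_K u) hu
  have mSX02 := marg_ne hV.P0 (hV.marg_SX02 u) hu
  have mY0K := marg_ne hV.P0 (hV.marg_Y0K u) hu
  have mSXY02 := marg_ne hV.P0 (hV.marg_SXY02 u) hu
  have m0K := marg_ne hV.P0 (hV.marg_0K u) hu
  have eQ : V.QU 4 u = V.q1 (u0 u) (u1 u) * V.q2 (u0 u) (u2 u) * V.qX (uS u) (u1 u) (u0 u) (uX u) * V.Me (V.uK u) (u0 u) (uY u) := rfl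
  simp only [ne_eq, mul_eq_zero, not_or] at mS mK mSX02 mY0K mSXY02 m0K
  rw [eQ, Real.logb_div (by simp [*]) hu]
  simp only [Real.logb_mul, hlog, ne_eq, mul_eq_zero, or_self, not_false_eq_true, *]
  ring

theorem Valid.ell_0 : V.ell 0 = margEnt V.P (fun u => uS u)
    - mi V.P (fun u => (u0 u, u2 u, uS u, uX u)) (fun u => uY u) := by
  have E0 : margEnt V.P (fun u => uS u) = -∑ u, V.P u * Real.logb 2 (V.pS (uS u)) :=
    (margEnt_congr V.P _ (fun u => uS u) fun ω ω' _ _ => by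
      simp only [uK, Prod.ext_iff]; try grind).trans
      (margEnt_of_marg V.P _ _ hV.marg_S)
  have E1 : margEnt V.P (fun u => (u0 u, u2 u, uS u, uX u)) = -∑ u, V.P u * Real.logb 2 (V.pS (uS u) * V.q0 (u0 u) * V.q2 (u0 u) (u2 u) * V.rX (uS u) (u0 u) (uX u)) :=
    (margEnt_congr V.P _ (fun u => (uS u, uX u, u0 u, u2 u)) fun ω ω' _ _ => by
      simp only [uK, Prod.ext_iff]; try grind).trans
      (margEnt_of_marg V.P _ _ hV.marg_SX02)
  have E2 : margEnt V.P (fun u => uY u) = -∑ u, V.P u * Real.logb 2 (V.Ma (uY u)) :=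
    (margEnt_congr V.P _ (fun u => uY u) fun ω ω' _ _ => by
      simp only [uK, Prod.ext_iff]; try grind).trans
      (margEnt_of_marg V.P _ _ hV.marg_Y)
  have E3 : margEnt V.P (fun u => ((u0 u, u2 u, uS u, uX u), uY u)) = -∑ u, V.P u * Real.logb 2 (V.q0 (u0 u) * V.q2 (u0 u) (u2 u) * V.rX (uS u) (u0 u) (uX u) * V.h (uS u) (u0 u) (u2 u) (uX u) (uY u)) :=
    (margEnt_congr V.P _ (fun u => (uS u, uX u, uY u, u0 u, u2 u)) fun ω ω' _ _ => by
      simp only [uK, Prod.ext_iff]; try grind).trans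
      (margEnt_of_marg V.P _ _ hV.marg_SXY02)
  simp only [condEnt, cmi, mi]
  rw [E0, E1, E2, E3]
  simp only [ell, ← Finset.sum_neg_distrib, ← Finset.sum_sub_distrib, ← Finset.sum_add_distrib]
  refine Finset.sum_congr rfl fun u _ => ?_
  by_cases hu : V.P u = 0
  · simp [hu]
  have hu' := hu
  have e : V.P u = V.q0 (u0 u) * V.q1 (u0 u) (u1 u) * V.q2 (u0 u) (u2 u) *
    V.qX (uS u) (u1 u) (u0 u) (uX u) * V.h (uS u) (u0 u) (u2 u) (uX u) (uY u) := rfl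
  rw [e] at hu'
  simp only [mul_eq_zero, not_or] at hu'
  obtain ⟨⟨⟨⟨n0, n1⟩, n2⟩, nX⟩, nh⟩ := hu'
  have hlog := hV.logP hu
  have mS := marg_ne hV.P0 (hV.marg_S u) hu
  have mSX02 := marg_ne hV.P0 (hV.marg_SX02 u) hu
  have mY := marg_ne hV.P0 (hV.marg_Y u) hu
  have mSXY02 := marg_ne hV.P0 (hV.marg_SXY02 u) hu
  have eQ : V.QU 0 u = V.q0 (u0 u) * V.q1 (u0 u) (u1 u) * V.q2 (u0 u) (u2 u) * V.qX (uS u) (u1 u) (u0 u) (uX u) * V.Ma (uY u) := rfl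
  simp only [ne_eq, mul_eq_zero, not_or] at mS mSX02 mY mSXY02
  rw [eQ, Real.logb_div (by simp [*]) hu]
  simp only [Real.logb_mul, hlog, ne_eq, mul_eq_zero, or_self, not_false_eq_true, *]
  ring

end identities

end View

/-! ### Choice of the rates -/

/-- A form of the chain rule for mutual information. -/
theorem cmi_le_cmi_pair {Ω α β γ δ : Type*} [Fintype Ω] [Fintype α] [Fintype β] [Fintype γ]
    [Fintype δ] [DecidableEq α] [DecidableEq β] [DecidableEq γ] [DecidableEq δ]
    (p : Ω → ℝ) (hp : ∀ ω, 0 ≤ p ω) (hp1 : ∑ ω, p ω = 1) (f : Ω → α) (z : Ω → δ) (g : Ω → β)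
    (h : Ω → γ) :
    cmi p f g (fun ω => (z ω, h ω)) ≤ cmi p (fun ω => (f ω, z ω)) g h := by
  have key := cmi_nonneg p hp hp1 z g h
  have e1 : margEnt p (fun ω => (f ω, (z ω, h ω))) = margEnt p (fun ω => ((f ω, z ω), h ω)) :=
    margEnt_congr p _ _ fun ω ω' _ _ => by simp only [Prod.mk.injEq]; tauto
  have e2 : margEnt p (fun ω => (g ω, (z ω, h ω))) = margEnt p (fun ω => (z ω, g ω, h ω)) :=
    margEnt_congr p _ _ fun ω ω' _ _ => by simp only [Prod.mk.injEq]; tauto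
  have e3 : margEnt p (fun ω => (f ω, g ω, (z ω, h ω)))
      = margEnt p (fun ω => ((f ω, z ω), g ω, h ω)) :=
    margEnt_congr p _ _ fun ω ω' _ _ => by simp only [Prod.mk.injEq]; tauto
  unfold cmi at key ⊢
  rw [e1, e2, e3]
  linarith

/-- Fourier-Motzkin elimination of the two rates. The primed letters belong to decoder 2; the
letters `α, γ, δ, η` bound the events with the same common part, and `I` the one with a different
common part. -/
theorem exists_rates (A a B b I α γ δ η I' α' γ' δ' η' : ℝ)
    (hαδ : α ≤ δ) (hγη : γ ≤ η) (hαδ' : α' ≤ δ') (hγη' : γ' ≤ η')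
    (h1 : a < γ) (h2 : b < γ') (h3 : A < I) (h4 : B < I') (h5 : a + b < α + η')
    (h6 : a + b < α' + η) (h7 : a + b < δ + δ') (h8 : a + B < I' + α) (h9 : A + b < I + α')
    (h10 : 2 * a + b < α + η + δ') (h11 : a + 2 * b < α' + η' + δ)
    (h12 : A + a + b < α + I + δ') (h13 : B + a + b < α' + I' + δ) :
    ∃ R1 R2 : ℝ, 0 ≤ R1 ∧ 0 ≤ R2 ∧ R2 + A < I ∧ a - R1 < α ∧ a + R2 - R1 < δ ∧ a + R2 < η ∧
      R1 + B < I' ∧ b - R2 < α' ∧ b + R1 - R2 < δ' ∧ b + R1 < η' := by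
  obtain ⟨R2, hl, hu⟩ := exists_between (a₁ := max (max 0 (b - α')) (max (a + b - α - δ') (b - δ')))
    (a₂ := min (min (I - A) (η - a)) (min (I' + δ - a - B) (η' + δ - a - b))) (by
      simp only [max_lt_iff, lt_min_iff]
      refine ⟨⟨⟨⟨?_, ?_⟩, ?_, ?_⟩, ⟨?_, ?_⟩, ?_, ?_⟩, ⟨⟨?_, ?_⟩, ?_, ?_⟩, ⟨?_, ?_⟩, ?_, ?_⟩ <;>
        linarith)
  simp only [max_lt_iff, lt_min_iff] at hl hu
  obtain ⟨⟨l1, l2⟩, l3, l4⟩ := hl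
  obtain ⟨⟨u1, u2⟩, u3, u4⟩ := hu
  obtain ⟨R1, hl, hu⟩ := exists_between (a₁ := max (max 0 (a - α)) (a + R2 - δ))
    (a₂ := min (min (I' - B) (R2 + δ' - b)) (η' - b)) (by
      simp only [max_lt_iff, lt_min_iff]
      refine ⟨⟨⟨⟨?_, ?_⟩, ?_⟩, ⟨?_, ?_⟩, ?_⟩, ⟨?_, ?_⟩, ?_⟩ <;> linarith)
  simp only [max_lt_iff, lt_min_iff] at hl hu
  obtain ⟨⟨k1, k2⟩, k3⟩ := hl
  obtain ⟨⟨v1, v2⟩, v3⟩ := hu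
  refine ⟨R1, R2, k1.le, l1.le, ?_, ?_, ?_, ?_, ?_, ?_, ?_, ?_⟩ <;> linarith

namespace View

variable {S K W0 W1 W2 X Y : Type*} [Fintype S] [Fintype K] [Fintype W0] [Fintype W1] [Fintype W2]
  [Fintype X] [Fintype Y] [DecidableEq S] [DecidableEq K] [DecidableEq W0] [DecidableEq W1]
  [DecidableEq W2] [DecidableEq X] [DecidableEq Y] {V : View S K W0 W1 W2 X Y} (hV : V.Valid)
include hV

theorem Valid.P1 : ∑ u, V.P u = 1 := by
  simpa [P, Fintype.sum_prod_type] using hV.joint_total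

/-- With `gamma_le_eta`, the relations between the mutual informations on which the elimination of
the rates relies. -/
theorem Valid.alpha_le_delta :
    cmi V.P (fun u => (uS u, uX u)) (fun u => uY u) (fun u => (u0 u, u1 u, u2 u, V.uK u))
      ≤ cmi V.P (fun u => (uS u, u2 u, uX u)) (fun u => uY u) (fun u => (u0 u, u1 u, V.uK u)) := by
  refine le_trans (le_of_eq ?_) ((cmi_le_cmi_pair V.P hV.P0 hV.P1 (fun u => (uS u, uX u))
    (fun u => u2 u) (fun u => uY u) (fun u => (u0 u, u1 u, V.uK u))).trans (le_of_eq ?_)) <;>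
  refine cmi_congr V.P _ _ _ _ _ _ (fun ω ω' _ _ => ?_) (fun ω ω' _ _ => ?_)
    (fun ω ω' _ _ => ?_) <;> simp only [Prod.mk.injEq] <;> tauto

theorem Valid.gamma_le_eta :
    cmi V.P (fun u => (uS u, uX u)) (fun u => uY u) (fun u => (u0 u, u2 u, V.uK u))
      ≤ cmi V.P (fun u => (uS u, u2 u, uX u)) (fun u => uY u) (fun u => (u0 u, V.uK u)) := by
  refine le_trans (le_of_eq ?_) ((cmi_le_cmi_pair V.P hV.P0 hV.P1 (fun u => (uS u, uX u))
    (fun u => u2 u) (fun u => uY u) (fun u => (u0 u, V.uK u))).trans (le_of_eq ?_)) <;>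
  refine cmi_congr V.P _ _ _ _ _ _ (fun ω ω' _ _ => ?_) (fun ω ω' _ _ => ?_)
    (fun ω ω' _ _ => ?_) <;> simp only [Prod.mk.injEq] <;> tauto

end View

namespace Net

variable {S T K W0 W1 W2 X1 X2 Y1 Y2 : Type*}
    [Fintype S] [Fintype T] [Fintype K] [Fintype W0] [Fintype W1] [Fintype W2]
    [Fintype X1] [Fintype X2] [Fintype Y1] [Fintype Y2]
    [DecidableEq S] [DecidableEq T] [DecidableEq K] [DecidableEq W0] [DecidableEq W1]
    [DecidableEq W2] [DecidableEq X1] [DecidableEq X2] [DecidableEq Y1] [DecidableEq Y2]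

/-- The joint law of all variables. -/
def law (N : Net S T K W0 W1 W2 X1 X2 Y1 Y2) (ω : Omega9 S T W0 W1 W2 X1 X2 Y1 Y2) : ℝ :=
  N.pST (zS ω) (zT ω) * N.pW0 (zW0 ω) * N.pW1 (zW0 ω) (zW1 ω) * N.pW2 (zW0 ω) (zW2 ω) *
    N.pX1 (zS ω) (zW1 ω) (zW0 ω) (zX1 ω) * N.pX2 (zT ω) (zW2 ω) (zW0 ω) (zX2 ω) *
      N.chan (zX1 ω) (zX2 ω) (zY1 ω) (zY2 ω)

/-- The variables seen by decoder 1. -/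
def proj1 (ω : Omega9 S T W0 W1 W2 X1 X2 Y1 Y2) : S × W0 × W1 × W2 × X1 × Y1 :=
  (zS ω, zW0 ω, zW1 ω, zW2 ω, zX1 ω, zY1 ω)

/-- The variables seen by decoder 2. -/
def proj2 (ω : Omega9 S T W0 W1 W2 X1 X2 Y1 Y2) : T × W0 × W2 × W1 × X2 × Y2 :=
  (zT ω, zW0 ω, zW2 ω, zW1 ω, zX2 ω, zY2 ω)

theorem view_P (N : Net S T K W0 W1 W2 X1 X2 Y1 Y2) (u : S × W0 × W1 × W2 × X1 × Y1) :
    N.view.P u = ∑ ω, if proj1 ω = u then N.law ω else 0 := by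
  obtain ⟨s, w0, w1, w2, x, y⟩ := u
  simp only [proj1, law, zS, zT, zW0, zW1, zW2, zX1, zX2, zY1, zY2, Fintype.sum_prod_type,
    Prod.mk.injEq, ite_and, Finset.sum_ite_irrel, Finset.sum_const_zero, Finset.sum_ite_eq',
    Finset.mem_univ, if_true, View.P, View.joint, view, Finset.mul_sum]
  refine Finset.sum_congr rfl fun t _ => Finset.sum_congr rfl fun x2 _ =>
    Finset.sum_congr rfl fun y2 _ => ?_
  ring

theorem swap_view_P (N : Net S T K W0 W1 W2 X1 X2 Y1 Y2) (u : T × W0 × W2 × W1 × X2 × Y2) :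
    N.swap.view.P u = ∑ ω, if proj2 ω = u then N.law ω else 0 := by
  obtain ⟨t, w0, w2, w1, x, y⟩ := u
  simp only [proj2, law, zS, zT, zW0, zW1, zW2, zX1, zX2, zY1, zY2, Fintype.sum_prod_type,
    Prod.mk.injEq, ite_and, Finset.sum_ite_irrel, Finset.sum_const_zero, Finset.sum_ite_eq',
    Finset.mem_univ, if_true, View.P, View.joint, view, swap, Finset.mul_sum]
  refine Finset.sum_congr rfl fun s _ => Finset.sum_congr rfl fun x1 _ =>
    Finset.sum_congr rfl fun y1 _ => ?_
  ring

end Net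

namespace Net

variable {S T K W0 W1 W2 X1 X2 Y1 Y2 : Type*}
    [Fintype S] [Fintype T] [Fintype K] [Fintype W0] [Fintype W1] [Fintype W2]
    [Fintype X1] [Fintype X2] [Fintype Y1] [Fintype Y2]
    [DecidableEq S] [DecidableEq T] [DecidableEq K] [DecidableEq W0] [DecidableEq W1]
    [DecidableEq W2] [DecidableEq X1] [DecidableEq X2] [DecidableEq Y1] [DecidableEq Y2]

theorem Valid.law_common {N : Net S T K W0 W1 W2 X1 X2 Y1 Y2} (hN : N.Valid)
    (ω : Omega9 S T W0 W1 W2 X1 X2 Y1 Y2) (h : N.law ω ≠ 0) : N.f (zS ω) = N.g (zT ω) := by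
  refine hN.common _ _ fun h0 => h ?_
  simp [law, h0]

end Net

/-- **Theorem 1.**  If there exist auxiliary random variables `W0, W1, W2` and channel
inputs `X1, X2` whose joint distribution with the source `(S,T)` factors as
`p(s,t)·p(w0)·p(w1|w0)·p(w2|w0)·p(x1|s,w1,w0)·p(x2|t,w2,w0)`, with outputs `Y1, Y2`
produced by the channel `p(y1,y2|x1,x2)`, and the thirteen information inequalities below
hold (where `K = f(S) = g(T)` is a common part of `(S,T)`), then the source `(S,T)` is
admissible for the discrete memoryless interference channel. -/
theorem interference_channel_correlated_sources_theorem1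
    {S T K W0 W1 W2 X1 X2 Y1 Y2 : Type*}
    [Fintype S] [Fintype T] [Fintype K] [Fintype W0] [Fintype W1] [Fintype W2]
    [Fintype X1] [Fintype X2] [Fintype Y1] [Fintype Y2]
    [DecidableEq S] [DecidableEq T] [DecidableEq K] [DecidableEq W0] [DecidableEq W1]
    [DecidableEq W2] [DecidableEq X1] [DecidableEq X2] [DecidableEq Y1] [DecidableEq Y2]
    -- the source
    (pST : S → T → ℝ) (hpSTnn : ∀ s t, 0 ≤ pST s t) (hpSTsum : ∑ s : S, ∑ t : T, pST s t = 1)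
    -- the common part K = f(S) = g(T)
    (f : S → K) (g : T → K) (hcommon : ∀ s t, pST s t ≠ 0 → f s = g t)
    -- the channel
    (chan : X1 → X2 → Y1 → Y2 → ℝ) (hchannn : ∀ x1 x2 y1 y2, 0 ≤ chan x1 x2 y1 y2)
    (hchansum : ∀ x1 x2, ∑ y1 : Y1, ∑ y2 : Y2, chan x1 x2 y1 y2 = 1)
    -- the auxiliary conditional distributions
    (pW0 : W0 → ℝ) (hpW0nn : ∀ w0, 0 ≤ pW0 w0) (hpW0sum : ∑ w0 : W0, pW0 w0 = 1)
    (pW1 : W0 → W1 → ℝ) (hpW1nn : ∀ w0 w1, 0 ≤ pW1 w0 w1)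
    (hpW1sum : ∀ w0, ∑ w1 : W1, pW1 w0 w1 = 1)
    (pW2 : W0 → W2 → ℝ) (hpW2nn : ∀ w0 w2, 0 ≤ pW2 w0 w2)
    (hpW2sum : ∀ w0, ∑ w2 : W2, pW2 w0 w2 = 1)
    (pX1 : S → W1 → W0 → X1 → ℝ) (hpX1nn : ∀ s w1 w0 x1, 0 ≤ pX1 s w1 w0 x1)
    (hpX1sum : ∀ s w1 w0, ∑ x1 : X1, pX1 s w1 w0 x1 = 1)
    (pX2 : T → W2 → W0 → X2 → ℝ) (hpX2nn : ∀ t w2 w0 x2, 0 ≤ pX2 t w2 w0 x2)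
    (hpX2sum : ∀ t w2 w0, ∑ x2 : X2, pX2 t w2 w0 x2 = 1)
    -- the joint distribution of all the variables
    (p : Omega9 S T W0 W1 W2 X1 X2 Y1 Y2 → ℝ)
    (hp : ∀ s t w0 w1 w2 x1 x2 y1 y2,
      p (s, t, w0, w1, w2, x1, x2, y1, y2) =
        pST s t * pW0 w0 * pW1 w0 w1 * pW2 w0 w2 * pX1 s w1 w0 x1 * pX2 t w2 w0 x2 *
          chan x1 x2 y1 y2)
    -- the common-part random variable
    (vK : Omega9 S T W0 W1 W2 X1 X2 Y1 Y2 → K) (hvK : vK = fun ω => f (zS ω))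
    -- the thirteen inequalities
    (h1 : condEnt p zS vK <
      cmi p (fun ω => (zS ω, zX1 ω)) zY1 (fun ω => (zW0 ω, zW2 ω, vK ω)))
    (h2 : condEnt p zT vK <
      cmi p (fun ω => (zT ω, zX2 ω)) zY2 (fun ω => (zW0 ω, zW1 ω, vK ω)))
    (h3 : margEnt p zS < mi p (fun ω => (zW0 ω, zW2 ω, zS ω, zX1 ω)) zY1)
    (h4 : margEnt p zT < mi p (fun ω => (zW0 ω, zW1 ω, zT ω, zX2 ω)) zY2)
    (h5 : condEnt p zS vK + condEnt p zT vK <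
      cmi p (fun ω => (zS ω, zX1 ω)) zY1 (fun ω => (zW0 ω, zW1 ω, zW2 ω, vK ω))
        + cmi p (fun ω => (zW1 ω, zT ω, zX2 ω)) zY2 (fun ω => (zW0 ω, vK ω)))
    (h6 : condEnt p zS vK + condEnt p zT vK <
      cmi p (fun ω => (zT ω, zX2 ω)) zY2 (fun ω => (zW0 ω, zW1 ω, zW2 ω, vK ω))
        + cmi p (fun ω => (zW2 ω, zS ω, zX1 ω)) zY1 (fun ω => (zW0 ω, vK ω)))
    (h7 : condEnt p zS vK + condEnt p zT vK <
      cmi p (fun ω => (zS ω, zW2 ω, zX1 ω)) zY1 (fun ω => (zW0 ω, zW1 ω, vK ω))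
        + cmi p (fun ω => (zT ω, zW1 ω, zX2 ω)) zY2 (fun ω => (zW0 ω, zW2 ω, vK ω)))
    (h8 : condEnt p zS vK + margEnt p zT <
      mi p (fun ω => (zW0 ω, zW1 ω, zT ω, zX2 ω)) zY2
        + cmi p (fun ω => (zS ω, zX1 ω)) zY1 (fun ω => (zW0 ω, zW1 ω, zW2 ω, vK ω)))
    (h9 : margEnt p zS + condEnt p zT vK <
      mi p (fun ω => (zW0 ω, zW2 ω, zS ω, zX1 ω)) zY1
        + cmi p (fun ω => (zT ω, zX2 ω)) zY2 (fun ω => (zW0 ω, zW1 ω, zW2 ω, vK ω)))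
    (h10 : 2 * condEnt p zS vK + condEnt p zT vK <
      cmi p (fun ω => (zS ω, zX1 ω)) zY1 (fun ω => (zW0 ω, zW1 ω, zW2 ω, vK ω))
        + cmi p (fun ω => (zS ω, zW2 ω, zX1 ω)) zY1 (fun ω => (zW0 ω, vK ω))
        + cmi p (fun ω => (zT ω, zW1 ω, zX2 ω)) zY2 (fun ω => (zW0 ω, zW2 ω, vK ω)))
    (h11 : condEnt p zS vK + 2 * condEnt p zT vK <
      cmi p (fun ω => (zT ω, zX2 ω)) zY2 (fun ω => (zW0 ω, zW1 ω, zW2 ω, vK ω))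
        + cmi p (fun ω => (zT ω, zW1 ω, zX2 ω)) zY2 (fun ω => (zW0 ω, vK ω))
        + cmi p (fun ω => (zS ω, zW2 ω, zX1 ω)) zY1 (fun ω => (zW0 ω, zW1 ω, vK ω)))
    (h12 : margEnt p zS + condEnt p zS vK + condEnt p zT vK <
      cmi p (fun ω => (zS ω, zX1 ω)) zY1 (fun ω => (zW0 ω, zW1 ω, zW2 ω, vK ω))
        + mi p (fun ω => (zW0 ω, zW2 ω, zS ω, zX1 ω)) zY1
        + cmi p (fun ω => (zT ω, zW1 ω, zX2 ω)) zY2 (fun ω => (zW0 ω, zW2 ω, vK ω)))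
    (h13 : margEnt p zT + condEnt p zS vK + condEnt p zT vK <
      cmi p (fun ω => (zT ω, zX2 ω)) zY2 (fun ω => (zW0 ω, zW1 ω, zW2 ω, vK ω))
        + mi p (fun ω => (zW0 ω, zW1 ω, zT ω, zX2 ω)) zY2
        + cmi p (fun ω => (zS ω, zW2 ω, zX1 ω)) zY1 (fun ω => (zW0 ω, zW1 ω, vK ω))) :
    ICAdmissible pST chan := by
  subst hvK
  let N : Net S T K W0 W1 W2 X1 X2 Y1 Y2 := ⟨pST, f, g, pW0, pW1, pW2, pX1, pX2, chan⟩
  have hN : N.Valid := ⟨hpSTnn, hpSTsum, hcommon, hpW0nn, hpW0sum, hpW1nn, hpW1sum, hpW2nn,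
    hpW2sum, hpX1nn, hpX1sum, hpX2nn, hpX2sum, hchannn, hchansum⟩
  have hpN : p = N.law := by
    funext ω
    obtain ⟨s, t, w0, w1, w2, x1, x2, y1, y2⟩ := ω
    exact hp s t w0 w1 w2 x1 x2 y1 y2
  subst hpN
  have hV := hN.view
  have hV' := hN.swap.view
  have hK : ∀ ω, N.law ω ≠ 0 → f (zS ω) = g (zT ω) := hN.law_common
  -- the quantities of decoder 1
  have eA : margEnt N.law zS = margEnt N.view.P (fun u => uS u) :=
    margEnt_push N.law Net.proj1 _ N.view_P (fun u => uS u)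
  have ea : condEnt N.law zS (fun ω => f (zS ω))
      = condEnt N.view.P (fun u => uS u) (fun u => N.view.uK u) :=
    condEnt_push N.law Net.proj1 _ N.view_P (fun u => uS u) (fun u => N.view.uK u)
  have eI : mi N.law (fun ω => (zW0 ω, zW2 ω, zS ω, zX1 ω)) zY1
      = mi N.view.P (fun u => (u0 u, u2 u, uS u, uX u)) (fun u => uY u) :=
    mi_push N.law Net.proj1 _ N.view_P (fun u => (u0 u, u2 u, uS u, uX u)) (fun u => uY u)
  have eα : cmi N.law (fun ω => (zS ω, zX1 ω)) zY1 (fun ω => (zW0 ω, zW1 ω, zW2 ω, f (zS ω)))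
      = cmi N.view.P (fun u => (uS u, uX u)) (fun u => uY u)
        (fun u => (u0 u, u1 u, u2 u, N.view.uK u)) :=
    cmi_push N.law Net.proj1 _ N.view_P (fun u => (uS u, uX u)) (fun u => uY u)
      (fun u => (u0 u, u1 u, u2 u, N.view.uK u))
  have eγ : cmi N.law (fun ω => (zS ω, zX1 ω)) zY1 (fun ω => (zW0 ω, zW2 ω, f (zS ω)))
      = cmi N.view.P (fun u => (uS u, uX u)) (fun u => uY u)
        (fun u => (u0 u, u2 u, N.view.uK u)) :=
    cmi_push N.law Net.proj1 _ N.view_P (fun u => (uS u, uX u)) (fun u => uY u)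
      (fun u => (u0 u, u2 u, N.view.uK u))
  have eδ : cmi N.law (fun ω => (zS ω, zW2 ω, zX1 ω)) zY1 (fun ω => (zW0 ω, zW1 ω, f (zS ω)))
      = cmi N.view.P (fun u => (uS u, u2 u, uX u)) (fun u => uY u)
        (fun u => (u0 u, u1 u, N.view.uK u)) :=
    cmi_push N.law Net.proj1 _ N.view_P (fun u => (uS u, u2 u, uX u)) (fun u => uY u)
      (fun u => (u0 u, u1 u, N.view.uK u))
  have eη : cmi N.law (fun ω => (zS ω, zW2 ω, zX1 ω)) zY1 (fun ω => (zW0 ω, f (zS ω)))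
      = cmi N.view.P (fun u => (uS u, u2 u, uX u)) (fun u => uY u)
        (fun u => (u0 u, N.view.uK u)) :=
    cmi_push N.law Net.proj1 _ N.view_P (fun u => (uS u, u2 u, uX u)) (fun u => uY u)
      (fun u => (u0 u, N.view.uK u))
  have eη2 : cmi N.law (fun ω => (zW2 ω, zS ω, zX1 ω)) zY1 (fun ω => (zW0 ω, f (zS ω)))
      = cmi N.law (fun ω => (zS ω, zW2 ω, zX1 ω)) zY1 (fun ω => (zW0 ω, f (zS ω))) := by
    refine cmi_congr N.law _ _ _ _ _ _ (fun ω ω' _ _ => ?_) (fun ω ω' _ _ => Iff.rfl)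
      (fun ω ω' _ _ => Iff.rfl)
    simp only [Prod.mk.injEq]
    tauto
  -- The quantities of decoder 2. On the support of the law the common part may be read off
  -- from the second source.
  have eB : margEnt N.law zT = margEnt N.swap.view.P (fun u => uS u) :=
    margEnt_push N.law Net.proj2 _ N.swap_view_P (fun u => uS u)
  have eb : condEnt N.law zT (fun ω => f (zS ω))
      = condEnt N.swap.view.P (fun u => uS u) (fun u => N.swap.view.uK u) := by
    refine (condEnt_congr N.law _ _ _ _ (fun ω ω' _ _ => Iff.rfl) (fun ω ω' h h' => ?_)).trans
      (condEnt_push N.law Net.proj2 _ N.swap_view_P (fun u => uS u) (fun u => N.swap.view.uK u))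
    rw [hK ω h, hK ω' h']
    exact Iff.rfl
  have eI' : mi N.law (fun ω => (zW0 ω, zW1 ω, zT ω, zX2 ω)) zY2
      = mi N.swap.view.P (fun u => (u0 u, u2 u, uS u, uX u)) (fun u => uY u) :=
    mi_push N.law Net.proj2 _ N.swap_view_P (fun u => (u0 u, u2 u, uS u, uX u)) (fun u => uY u)
  have eα' : cmi N.law (fun ω => (zT ω, zX2 ω)) zY2
        (fun ω => (zW0 ω, zW1 ω, zW2 ω, f (zS ω)))
      = cmi N.swap.view.P (fun u => (uS u, uX u)) (fun u => uY u)
        (fun u => (u0 u, u1 u, u2 u, N.swap.view.uK u)) := by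
    refine (cmi_congr N.law _ _ _ _ _ (fun ω => (zW0 ω, zW2 ω, zW1 ω, g (zT ω)))
      (fun ω ω' _ _ => Iff.rfl) (fun ω ω' _ _ => Iff.rfl) (fun ω ω' h h' => ?_)).trans
      (cmi_push N.law Net.proj2 _ N.swap_view_P (fun u => (uS u, uX u)) (fun u => uY u)
        (fun u => (u0 u, u1 u, u2 u, N.swap.view.uK u)))
    simp only [Prod.mk.injEq, hK ω h, hK ω' h']
    tauto
  have eγ' : cmi N.law (fun ω => (zT ω, zX2 ω)) zY2 (fun ω => (zW0 ω, zW1 ω, f (zS ω)))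
      = cmi N.swap.view.P (fun u => (uS u, uX u)) (fun u => uY u)
        (fun u => (u0 u, u2 u, N.swap.view.uK u)) := by
    refine (cmi_congr N.law _ _ _ _ _ (fun ω => (zW0 ω, zW1 ω, g (zT ω)))
      (fun ω ω' _ _ => Iff.rfl) (fun ω ω' _ _ => Iff.rfl) (fun ω ω' h h' => ?_)).trans
      (cmi_push N.law Net.proj2 _ N.swap_view_P (fun u => (uS u, uX u)) (fun u => uY u)
        (fun u => (u0 u, u2 u, N.swap.view.uK u)))
    simp only [Prod.mk.injEq, hK ω h, hK ω' h']
  have eδ' : cmi N.law (fun ω => (zT ω, zW1 ω, zX2 ω)) zY2 (fun ω => (zW0 ω, zW2 ω, f (zS ω)))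
      = cmi N.swap.view.P (fun u => (uS u, u2 u, uX u)) (fun u => uY u)
        (fun u => (u0 u, u1 u, N.swap.view.uK u)) := by
    refine (cmi_congr N.law _ _ _ _ _ (fun ω => (zW0 ω, zW2 ω, g (zT ω)))
      (fun ω ω' _ _ => Iff.rfl) (fun ω ω' _ _ => Iff.rfl) (fun ω ω' h h' => ?_)).trans
      (cmi_push N.law Net.proj2 _ N.swap_view_P (fun u => (uS u, u2 u, uX u)) (fun u => uY u)
        (fun u => (u0 u, u1 u, N.swap.view.uK u)))
    simp only [Prod.mk.injEq, hK ω h, hK ω' h']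
  have eη' : cmi N.law (fun ω => (zT ω, zW1 ω, zX2 ω)) zY2 (fun ω => (zW0 ω, f (zS ω)))
      = cmi N.swap.view.P (fun u => (uS u, u2 u, uX u)) (fun u => uY u)
        (fun u => (u0 u, N.swap.view.uK u)) := by
    refine (cmi_congr N.law _ _ _ _ _ (fun ω => (zW0 ω, g (zT ω)))
      (fun ω ω' _ _ => Iff.rfl) (fun ω ω' _ _ => Iff.rfl) (fun ω ω' h h' => ?_)).trans
      (cmi_push N.law Net.proj2 _ N.swap_view_P (fun u => (uS u, u2 u, uX u)) (fun u => uY u)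
        (fun u => (u0 u, N.swap.view.uK u)))
    simp only [Prod.mk.injEq, hK ω h, hK ω' h']
  have eη2' : cmi N.law (fun ω => (zW1 ω, zT ω, zX2 ω)) zY2 (fun ω => (zW0 ω, f (zS ω)))
      = cmi N.law (fun ω => (zT ω, zW1 ω, zX2 ω)) zY2 (fun ω => (zW0 ω, f (zS ω))) := by
    refine cmi_congr N.law _ _ _ _ _ _ (fun ω ω' _ _ => ?_) (fun ω ω' _ _ => Iff.rfl)
      (fun ω ω' _ _ => Iff.rfl)
    simp only [Prod.mk.injEq]
    tauto
  have hαδ := hV.alpha_le_delta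
  have hγη := hV.gamma_le_eta
  have hαδ' := hV'.alpha_le_delta
  have hγη' := hV'.gamma_le_eta
  rw [← eα, ← eδ] at hαδ
  rw [← eγ, ← eη] at hγη
  rw [← eα', ← eδ'] at hαδ'
  rw [← eγ', ← eη'] at hγη'
  rw [eη2'] at h5
  rw [eη2] at h6
  obtain ⟨R1, R2, hR1, hR2, k0, k1, k3, k4, l0, l1, l3, l4⟩ :=
    exists_rates _ _ _ _ _ _ _ _ _ _ _ _ _ _ hαδ hγη hαδ' hγη'
      h1 h2 h3 h4 h5 h6 h7 h8 h9 h10 h11 h12 h13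
  have m0 := hV.ell_0
  have m1 := hV.ell_1
  have m2 := hV.ell_2
  have m3 := hV.ell_3
  have m4 := hV.ell_4
  have n0 := hV'.ell_0
  have n1 := hV'.ell_1
  have n2 := hV'.ell_2
  have n3 := hV'.ell_3
  have n4 := hV'.ell_4
  rw [← eA, ← eI] at m0
  rw [← ea, ← eα] at m1
  rw [← ea, ← eγ] at m2
  rw [← ea, ← eδ] at m3
  rw [← ea, ← eη] at m4
  rw [← eB, ← eI'] at n0
  rw [← eb, ← eα'] at n1
  rw [← eb, ← eγ'] at n2
  rw [← eb, ← eδ'] at n3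
  rw [← eb, ← eη'] at n4
  refine hN.admissible R1 R2 hR1 hR2 (fun c => ?_) (fun c => ?_)
  · fin_cases c
    · change R2 + N.view.ell 0 < 0
      linarith
    · change -R1 + N.view.ell 1 < 0
      linarith
    · change 0 + N.view.ell 2 < 0
      linarith
    · change R2 - R1 + N.view.ell 3 < 0
      linarith
    · change R2 + N.view.ell 4 < 0
      linarith
  · fin_cases c
    · change R1 + N.swap.view.ell 0 < 0
      linarith
    · change -R2 + N.swap.view.ell 1 < 0
      linarith
    · change 0 + N.swap.view.ell 2 < 0
      linarith
    · change R1 - R2 + N.swap.view.ell 3 < 0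
      linarith
    · change R1 + N.swap.view.ell 4 < 0
      linarith
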